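/- arXiv:1503.04954 — 2 statements merged into one kernel-verified Lean document; each statement's English description precedes it below -/
import Mathlib

section
/- Let T > 0 and let a ∈ L¹([0,T]). Assume there exists a closed interval J ⊆ [0,T] such that a(x) ≥ 0 for a.e. x ∈ J and ∫₀ᵀ a(x) dx < 0 < ∫_J a(x) dx. Let g : [0,∞) → [0,∞) be continuously differentiable with g(0) = 0 and g(s) > 0 for s > 0, satisfying g'(0) = 0 and 0 < liminf_{s→+∞} g'(s) ≤ limsup_{s→+∞} g'(s) < +∞. Then there exists ν* > 0 such that for every ν > ν* the equation u'' + ν a(x) g(u) = 0 has at least one positive solution satisfying the Neumann boundary conditions and at least one positive solution satisfying the periodic boundary conditions. -/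
open MeasureTheory Set Filter

/-- `u` (with derivative `u'`) is a C¹ solution of `u'' + f(x) = 0` on `[0,T]`:
`u'` is absolutely continuous and the equation holds a.e., expressed via the
integral equation `u'(x) = u'(0) − ∫₀ˣ f(t) dt`. -/
def IsSolOn (T : ℝ) (f : ℝ → ℝ) (u u' : ℝ → ℝ) : Prop :=
  (∀ x ∈ Icc (0:ℝ) T, HasDerivWithinAt u (u' x) (Icc (0:ℝ) T) x) ∧
  ContinuousOn u' (Icc (0:ℝ) T) ∧
  ∀ x ∈ Icc (0:ℝ) T, u' x = u' 0 - ∫ t in (0:ℝ)..x, f t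

/-- The equation `u'' + a(x) g(u) = 0` on `[0,T]` has a positive solution
satisfying the Neumann boundary conditions. -/
def PosSolNeumann (T : ℝ) (a g : ℝ → ℝ) : Prop :=
  ∃ u u' : ℝ → ℝ, IsSolOn T (fun t => a t * g (u t)) u u' ∧
    (∀ x ∈ Icc (0:ℝ) T, 0 < u x) ∧ u' 0 = 0 ∧ u' T = 0

/-- The equation `u'' + a(x) g(u) = 0` on `[0,T]` has a positive solution
satisfying the periodic boundary conditions. -/
def PosSolPeriodic (T : ℝ) (a g : ℝ → ℝ) : Prop :=
  ∃ u u' : ℝ → ℝ, IsSolOn T (fun t => a t * g (u t)) u u' ∧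
    (∀ x ∈ Icc (0:ℝ) T, 0 < u x) ∧ u 0 = u T ∧ u' 0 = u' T

/-! Extend `g` by `0` to `s ≤ 0`; the resulting `G` is Lipschitz and the extended equation has a
global flow. Where `u ≤ 0` its solutions are affine, so a solution starting from `u(0) > 0` that
reaches `0` ends with `u(T) ≤ 0` and `u'(T) < 0`. Hence a solution of either boundary value
problem for `G` with `u(0) > 0` is positive, and solves the original equation.

On `J` a positive solution is concave, so it drops its slope by a bounded multiple of its own
size, whereas `g` grows linearly; for `ν` large this bounds all positive solutions a priori, and
initial data outside a large ball lead to `u(T) ≤ 0`. At the other end, since `g'(0) = 0` there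
are arbitrarily small `ε` with `G = G(ε) + o(G(ε))` at distance `O(G(ε))` from `ε`; started at `ε`
with slope `O(G(ε))`, a solution behaves like one of `u'' = -ν a(t) G(ε)`, and its slope increases
over `[0,T]` because `∫ a < 0`.

For the Neumann problem the slope at time `T` of the solution starting from `(c, 0)` therefore
changes sign between `c = ε` and `c` large. For the periodic problem the displacement
`x - Z(x, T)` along the flow `Z` winds around `0` on the boundary of a large rectangle with left
side `u(0) = ε`, hence vanishes inside.
-/

section PlanarZero

theorem exists_continuous_arg {X : Type*} [TopologicalSpace X] [SimplyConnectedSpace X]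
    [LocallyPathConnectedSpace X] {F : X → ℂ} (hF : Continuous F) (hF0 : ∀ x, F x ≠ 0) (x₀ : X) :
    ∃ θ : X → ℝ, Continuous θ ∧ θ x₀ = (F x₀).arg ∧
      ∀ x, F x = ‖F x‖ * Complex.exp (θ x * Complex.I) := by
  obtain ⟨L, ⟨hL₀, hL⟩, -⟩ := Complex.isCoveringMapOn_exp.existsUnique_continuousMap_lifts
    (⟨F, hF⟩ : C(X, ℂ)) (Complex.exp_log (hF0 x₀)) (by simpa using hF0)
  have hexp : ∀ x, Complex.exp (L x) = F x := fun x => congrFun hL x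
  refine ⟨fun x => (L x).im, by fun_prop, by simp [hL₀, Complex.log_im], fun x => ?_⟩
  rw [← hexp, Complex.norm_exp, Complex.ofReal_exp, ← Complex.exp_add, Complex.re_add_im]

theorem lt_of_isPreconnected_of_forall_ne {X : Type*} [TopologicalSpace X] {s : Set X}
    (hs : IsPreconnected s) {f : X → ℝ} (hf : ContinuousOn f s) {d : ℝ} (hd : ∀ x ∈ s, f x ≠ d)
    {x y : X} (hx : x ∈ s) (hy : y ∈ s) (hfx : f x < d) : f y < d := by
  by_contra! h
  obtain ⟨z, hz, rfl⟩ := hs.intermediate_value hx hy hf ⟨hfx.le, h⟩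
  exact hd z hz rfl

theorem exists_continuous_arg_on_Icc {F : ℝ × ℝ → ℂ} (hF : Continuous F) {lo hi : ℝ × ℝ}
    (hlohi : lo ≤ hi) (hF0 : ∀ z ∈ Icc lo hi, F z ≠ 0) :
    ∃ θ : ℝ × ℝ → ℝ, Continuous θ ∧ θ lo = (F lo).arg ∧
      ∀ z ∈ Icc lo hi, F z = ‖F z‖ * Complex.exp (θ z * Complex.I) := by
  let clamp : ℝ × ℝ → ℝ × ℝ := fun z => lo ⊔ hi ⊓ z
  have hclamp : ∀ z ∈ Icc lo hi, clamp z = z := fun z hz => by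
    simp only [clamp, inf_eq_right.2 hz.2, sup_eq_right.2 hz.1]
  have hclamp_cont : Continuous clamp :=
    (by fun_prop : Continuous fun z : ℝ × ℝ => (lo.1 ⊔ hi.1 ⊓ z.1, lo.2 ⊔ hi.2 ⊓ z.2))
  obtain ⟨θ, hθ, hθ₀, hexp⟩ := exists_continuous_arg (hF.comp hclamp_cont)
    (fun z => hF0 _ ⟨le_sup_left, sup_le hlohi inf_le_left⟩) lo
  refine ⟨θ, hθ, ?_, fun z hz => ?_⟩
  · rw [hθ₀, Function.comp_apply, hclamp lo (left_mem_Icc.2 hlohi)]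
  · simpa [hclamp z hz] using hexp z

-- Along the left side the angle drops below `-π/2`, and the other three sides never cross `-π/2`.
theorem false_of_rectangle_angle {θ : ℝ × ℝ → ℝ} (hθ : Continuous θ) {c₀ c₁ p₀ m p₁ : ℝ}
    (hc : c₀ ≤ c₁) (hm₀ : p₀ ≤ m) (hm₁ : m ≤ p₁) (hstart : |θ (c₀, p₀)| < Real.pi / 2)
    (hU : ∀ z ∈ Icc (c₀, p₀) (c₁, p₁), z.1 = c₁ ∨ z.2 = p₀ ∨ z.2 = p₁ → θ z ≠ -(Real.pi / 2))
    (hlow : ∀ p ∈ Icc p₀ m, θ (c₀, p) ≠ Real.pi / 2) (hmid : Real.cos (θ (c₀, m)) < 0)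
    (hup : ∀ p ∈ Icc m p₁, θ (c₀, p) ≠ -(Real.pi / 2)) : False := by
  have hp : p₀ ≤ p₁ := hm₀.trans hm₁
  have hmid_lt : θ (c₀, m) < Real.pi / 2 :=
    lt_of_isPreconnected_of_forall_ne (f := fun p => θ (c₀, p)) isPreconnected_Icc (by fun_prop)
      hlow (left_mem_Icc.2 hm₀) (right_mem_Icc.2 hm₀) (abs_lt.1 hstart).2
  have hmid_lt_neg : θ (c₀, m) < -(Real.pi / 2) := by
    by_contra! h
    exact hmid.not_ge (Real.cos_nonneg_of_neg_pi_div_two_le_of_le h hmid_lt.le)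
  have htop : θ (c₀, p₁) < -(Real.pi / 2) :=
    lt_of_isPreconnected_of_forall_ne (f := fun p => θ (c₀, p)) isPreconnected_Icc (by fun_prop)
      hup (left_mem_Icc.2 hm₁) (right_mem_Icc.2 hm₁) hmid_lt_neg
  have htop_right : θ (c₁, p₁) < -(Real.pi / 2) :=
    lt_of_isPreconnected_of_forall_ne (f := fun c => θ (c, p₁)) isPreconnected_Icc (by fun_prop)
      (fun c h => hU _ ⟨⟨h.1, hp⟩, h.2, le_rfl⟩ (by simp)) (left_mem_Icc.2 hc) (right_mem_Icc.2 hc)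
      htop
  have hbot_right : θ (c₁, p₀) < -(Real.pi / 2) :=
    lt_of_isPreconnected_of_forall_ne (f := fun p => θ (c₁, p)) isPreconnected_Icc (by fun_prop)
      (fun p h => hU _ ⟨⟨hc, h.1⟩, le_rfl, h.2⟩ (by simp)) (right_mem_Icc.2 hp) (left_mem_Icc.2 hp)
      htop_right
  have hbot : θ (c₀, p₀) < -(Real.pi / 2) :=
    lt_of_isPreconnected_of_forall_ne (f := fun c => θ (c, p₀)) isPreconnected_Icc (by fun_prop)
      (fun c h => hU _ ⟨⟨h.1, le_rfl⟩, h.2, hp⟩ (by simp)) (right_mem_Icc.2 hc) (left_mem_Icc.2 hc)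
      hbot_right
  exact hbot.not_gt (abs_lt.1 hstart).1

theorem exists_eq_zero_of_rectangle {f₁ f₂ : ℝ × ℝ → ℝ} (hf₁ : Continuous f₁) (hf₂ : Continuous f₂)
    {c₀ c₁ p₀ m p₁ : ℝ} (hc : c₀ ≤ c₁) (hm₀ : p₀ ≤ m) (hm₁ : m ≤ p₁)
    (hU : ∀ z ∈ Icc (c₀, p₀) (c₁, p₁), z.1 = c₁ ∨ z.2 = p₀ ∨ z.2 = p₁ → 0 < f₁ z)
    (hlow : ∀ p ∈ Icc p₀ m, f₁ (c₀, p) = 0 → f₂ (c₀, p) < 0)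
    (hmid : f₁ (c₀, m) < 0)
    (hup : ∀ p ∈ Icc m p₁, f₁ (c₀, p) = 0 → 0 < f₂ (c₀, p)) :
    ∃ z ∈ Icc (c₀, p₀) (c₁, p₁), f₁ z = 0 ∧ f₂ z = 0 := by
  have hlohi : (c₀, p₀) ≤ (c₁, p₁) := ⟨hc, hm₀.trans hm₁⟩
  by_contra! hne
  obtain ⟨θ, hθ, hθ₀, hexp⟩ := exists_continuous_arg_on_Icc
    (F := fun z => (f₁ z : ℂ) + f₂ z * Complex.I) (by fun_prop) hlohi
    (fun z hz h => hne z hz (by simpa using congrArg Complex.re h)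
      (by simpa using congrArg Complex.im h))
  have hpolar : ∀ z ∈ Icc (c₀, p₀) (c₁, p₁), ∃ r : ℝ, 0 ≤ r ∧
      f₁ z = r * Real.cos (θ z) ∧ f₂ z = r * Real.sin (θ z) := fun z hz =>
    ⟨_, norm_nonneg _,
      by simpa [Complex.exp_ofReal_mul_I_re] using congrArg Complex.re (hexp z hz),
      by simpa [Complex.exp_ofReal_mul_I_im] using congrArg Complex.im (hexp z hz)⟩
  have hleft : ∀ p ∈ Icc p₀ p₁, (c₀, p) ∈ Icc (c₀, p₀) (c₁, p₁) := fun p hp =>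
    ⟨⟨le_rfl, hp.1⟩, hc, hp.2⟩
  refine false_of_rectangle_angle hθ hc hm₀ hm₁ ?_ (fun z hz h hθz => ?_) (fun p hp hθp => ?_) ?_
    (fun p hp hθp => ?_)
  · rw [hθ₀, Complex.abs_arg_lt_pi_div_two_iff]
    exact Or.inl (by simpa using hU _ (left_mem_Icc.2 hlohi) (by simp))
  · obtain ⟨r, -, h₁, -⟩ := hpolar z hz
    exact (hU z hz h).ne' (by simp [h₁, hθz])
  · obtain ⟨r, hr, h₁, h₂⟩ := hpolar _ (hleft p ⟨hp.1, hp.2.trans hm₁⟩)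
    exact (hlow p hp (by simp [h₁, hθp])).not_ge (by simpa [h₂, hθp] using hr)
  · obtain ⟨r, hr, h₁, -⟩ := hpolar _ (hleft m ⟨hm₀, hm₁⟩)
    exact (pos_iff_neg_of_mul_neg (h₁ ▸ hmid)).1 (hr.lt_of_ne' fun h => by simp_all)
  · obtain ⟨r, hr, h₁, h₂⟩ := hpolar _ (hleft p ⟨hm₀.trans hp.1, hp.2⟩)
    exact (hup p hp (by simp [h₁, hθp])).not_ge (by simpa [h₂, hθp] using hr)

end PlanarZero

section Gronwall

variable {κ : ℝ → ℝ}

theorem integral_mul_exp_integral_le (hκ : ∀ s t, IntervalIntegrable κ volume s t)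
    (hκ0 : ∀ t, 0 ≤ κ t) {c : ℝ} (hc : c ≠ 0) (t₀ : ℝ) {s t : ℝ} (hst : s ≤ t) :
    ∫ r in s..t, κ r * Real.exp (c * ∫ x in t₀..r, κ x) ≤
      (Real.exp (c * ∫ x in t₀..t, κ x) - Real.exp (c * ∫ x in t₀..s, κ x)) / c := by
  set E : ℝ → ℝ := fun r => Real.exp (c * ∫ x in t₀..r, κ x) / c with hE
  have hint : Monotone fun r => ∫ x in t₀..r, κ x := fun x y hxy => by
    rw [← sub_nonneg, intervalIntegral.integral_interval_sub_left (hκ _ _) (hκ _ _)]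
    exact intervalIntegral.integral_nonneg hxy fun r _ => hκ0 r
  have hmono : Monotone E := fun x y hxy => by
    rcases hc.lt_or_gt with hc | hc
    · refine div_le_div_of_nonpos_of_le hc.le (Real.exp_le_exp.2 ?_)
      exact mul_le_mul_of_nonpos_left (hint hxy) hc.le
    · have := hint hxy
      simp only [hE]
      gcongr
  have hderiv : ∫ r in s..t, deriv E r = ∫ r in s..t, κ r * Real.exp (c * ∫ x in t₀..r, κ x) := by
    refine intervalIntegral.integral_congr_ae ?_
    have hκ' : IntervalIntegrable κ volume (min t₀ s) (max t₀ t) := hκ _ _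
    filter_upwards [hκ'.ae_hasDerivAt_integral] with r hr hmem
    rw [uIoc_of_le hst] at hmem
    rw [uIcc_of_le (le_max_of_le_left (min_le_left _ _))] at hr
    have hd := hr ⟨min_le_of_right_le hmem.1.le, le_max_of_le_right hmem.2⟩ t₀
      ⟨min_le_left _ _, le_max_left _ _⟩
    have := ((hd.const_mul c).exp).div_const c
    rw [this.deriv]
    field_simp
  have hle := (hmono.monotoneOn (uIcc s t)).intervalIntegral_deriv_mem_uIcc
  rw [uIcc_of_le (sub_nonneg.2 (hmono hst)), hderiv] at hle
  exact hle.2.trans_eq (sub_div _ _ _).symm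

theorem abs_integral_mul_exp_abs_integral_le (hκ : ∀ s t, IntervalIntegrable κ volume s t)
    (hκ0 : ∀ t, 0 ≤ κ t) (t₀ t : ℝ) :
    |∫ r in t₀..t, κ r * Real.exp (2 * |∫ x in t₀..r, κ x|)| ≤
      Real.exp (2 * |∫ x in t₀..t, κ x|) / 2 := by
  have key : ∀ {u v : ℝ}, u ≤ v → 0 ≤ ∫ x in u..v, κ x := fun huv =>
    intervalIntegral.integral_nonneg huv fun r _ => hκ0 r
  rcases le_total t₀ t with h | h
  · have heq : ∫ r in t₀..t, κ r * Real.exp (2 * |∫ x in t₀..r, κ x|) =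
        ∫ r in t₀..t, κ r * Real.exp (2 * ∫ x in t₀..r, κ x) :=
      intervalIntegral.integral_congr fun r hr => by
        rw [uIcc_of_le h] at hr
        simp only [abs_of_nonneg (key hr.1)]
    have hle := integral_mul_exp_integral_le hκ hκ0 two_ne_zero t₀ h
    rw [intervalIntegral.integral_same, mul_zero, Real.exp_zero] at hle
    rw [abs_of_nonneg (intervalIntegral.integral_nonneg h fun r _ => by have := hκ0 r; positivity),
      heq, abs_of_nonneg (key h)]
    linarith
  · have hneg : ∀ {r}, r ≤ t₀ → |∫ x in t₀..r, κ x| = -∫ x in t₀..r, κ x := fun hr => by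
      rw [intervalIntegral.integral_symm, abs_neg, abs_of_nonneg (key hr), neg_neg]
    have heq : ∫ r in t..t₀, κ r * Real.exp (2 * |∫ x in t₀..r, κ x|) =
        ∫ r in t..t₀, κ r * Real.exp (-2 * ∫ x in t₀..r, κ x) :=
      intervalIntegral.integral_congr fun r hr => by
        rw [uIcc_of_le h] at hr
        simp only [hneg hr.2, mul_neg, neg_mul]
    have hle := integral_mul_exp_integral_le hκ hκ0 (neg_ne_zero.2 two_ne_zero) t₀ h
    rw [intervalIntegral.integral_same, mul_zero, Real.exp_zero] at hle
    rw [intervalIntegral.integral_symm, abs_neg, abs_of_nonneg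
      (intervalIntegral.integral_nonneg h fun r _ => by have := hκ0 r; positivity), heq, hneg h,
      mul_neg, ← neg_mul]
    linarith

-- The maximum `M` of `w(t) exp(-2|∫κ|)` satisfies `M ≤ C + M / 2`.
theorem le_mul_exp_of_le_add_abs_integral (hκ : ∀ s t, IntervalIntegrable κ volume s t)
    (hκ0 : ∀ t, 0 ≤ κ t) {w : ℝ → ℝ} (hw : Continuous w) (hw0 : ∀ t, 0 ≤ w t) {C a b t₀ : ℝ}
    (ht₀ : t₀ ∈ Icc a b) (h : ∀ t ∈ Icc a b, w t ≤ C + |∫ r in t₀..t, κ r * w r|) :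
    ∀ t ∈ Icc a b, w t ≤ 2 * C * Real.exp (2 * |∫ x in t₀..t, κ x|) := by
  set A : ℝ → ℝ := fun t => |∫ x in t₀..t, κ x|
  have hexp : Continuous fun t => Real.exp (2 * A t) :=
    ((intervalIntegral.continuous_primitive hκ t₀).abs.const_mul 2).rexp
  obtain ⟨τ, hτ, hmax⟩ := isCompact_Icc.exists_isMaxOn ⟨t₀, ht₀⟩
    (f := fun t => w t / Real.exp (2 * A t))
    (hw.div hexp fun _ => (Real.exp_pos _).ne').continuousOn
  set M := w τ / Real.exp (2 * A τ) with hM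
  have hM0 : 0 ≤ M := div_nonneg (hw0 _) (Real.exp_pos _).le
  have hle : ∀ t ∈ Icc a b, w t ≤ M * Real.exp (2 * A t) := fun t ht =>
    (div_le_iff₀ (Real.exp_pos _)).1 (hmax ht)
  have hint : |∫ r in t₀..τ, κ r * w r| ≤ M * (Real.exp (2 * A τ) / 2) := by
    have hmono : |∫ r in t₀..τ, κ r * w r| ≤ |∫ r in t₀..τ, M * (κ r * Real.exp (2 * A r))| := by
      rw [← Real.norm_eq_abs (∫ r in t₀..τ, κ r * w r)]
      refine intervalIntegral.norm_integral_le_abs_of_norm_le ?_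
        (((hκ _ _).mul_continuousOn hexp.continuousOn).const_mul M)
      refine ae_restrict_of_forall_mem measurableSet_uIoc fun r hr => ?_
      have hr' : r ∈ Icc a b := uIcc_subset_Icc ht₀ hτ (uIoc_subset_uIcc hr)
      rw [Real.norm_of_nonneg (mul_nonneg (hκ0 r) (hw0 r)), mul_left_comm]
      exact mul_le_mul_of_nonneg_left (hle r hr') (hκ0 r)
    rw [intervalIntegral.integral_const_mul, abs_mul, abs_of_nonneg hM0] at hmono
    exact hmono.trans
      (mul_le_mul_of_nonneg_left (abs_integral_mul_exp_abs_integral_le hκ hκ0 t₀ τ) hM0)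
  have hM2 : M ≤ 2 * C := by
    have h1 : (1 : ℝ) ≤ Real.exp (2 * A τ) := Real.one_le_exp (by positivity)
    have h2 : M * Real.exp (2 * A τ) ≤ C + M * (Real.exp (2 * A τ) / 2) := by
      rw [hM, div_mul_cancel₀ _ (Real.exp_pos _).ne', ← hM]
      linarith [h τ hτ]
    nlinarith
  intro t ht
  exact (hle t ht).trans (by gcongr)

end Gronwall

section Caratheodory

variable {E : Type*} [NormedAddCommGroup E] [NormedSpace ℝ E]

/-- A time-dependent vector field satisfying Carathéodory's conditions, with a global Lipschitz
bound `κ` that is locally integrable in time. Joint measurability is encoded by asking that the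
field be locally integrable along every continuous curve. -/
structure IsCaratheodory (F : ℝ → E → E) (κ : ℝ → ℝ) : Prop where
  intervalIntegrable_comp : ∀ z : ℝ → E, Continuous z →
    ∀ s t, IntervalIntegrable (fun r => F r (z r)) volume s t
  norm_sub_le : ∀ r x y, ‖F r x - F r y‖ ≤ κ r * ‖x - y‖
  intervalIntegrable_bound : ∀ s t, IntervalIntegrable κ volume s t
  bound_nonneg : ∀ r, 0 ≤ κ r

/-- `z` solves `z' = F(t, z)` on `I` in the sense of Carathéodory, expressed by the integral
equation; outside `I` only continuity is required. -/
structure IsIntegralSol (F : ℝ → E → E) (I : Set ℝ) (z : ℝ → E) : Prop where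
  continuous : Continuous z
  sub_eq : ∀ s ∈ I, ∀ t ∈ I, z t - z s = ∫ r in s..t, F r (z r)

theorem IsIntegralSol.mono {F : ℝ → E → E} {I J : Set ℝ} {z : ℝ → E} (hz : IsIntegralSol F I z)
    (hJI : J ⊆ I) : IsIntegralSol F J z :=
  ⟨hz.continuous, fun s hs t ht => hz.sub_eq s (hJI hs) t (hJI ht)⟩

variable {F : ℝ → E → E} {κ : ℝ → ℝ} {a b t₀ : ℝ}

theorem IsIntegralSol.norm_sub_le_of_defect_le (hF : IsCaratheodory F κ) {z y : ℝ → E}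
    (hz : IsIntegralSol F (Icc a b) z) (hy : Continuous y) {e : ℝ} (ht₀ : t₀ ∈ Icc a b)
    (hye : ∀ t ∈ Icc a b, ‖y t - y t₀ - ∫ r in t₀..t, F r (y r)‖ ≤ e) :
    ∀ t ∈ Icc a b, ‖z t - y t‖ ≤
      2 * (‖z t₀ - y t₀‖ + e) * Real.exp (2 * |∫ r in t₀..t, κ r|) := by
  have hzc := hz.continuous
  refine le_mul_exp_of_le_add_abs_integral (w := fun t => ‖z t - y t‖) hF.intervalIntegrable_bound
    hF.bound_nonneg (by fun_prop) (fun _ => norm_nonneg _) ht₀ fun t ht => ?_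
  have hdecomp : z t - y t = (z t₀ - y t₀) - (y t - y t₀ - ∫ r in t₀..t, F r (y r)) +
      ∫ r in t₀..t, (F r (z r) - F r (y r)) := by
    rw [intervalIntegral.integral_sub (hF.intervalIntegrable_comp z hzc _ _)
      (hF.intervalIntegrable_comp y hy _ _), ← hz.sub_eq t₀ ht₀ t ht]
    abel
  have hint : ‖∫ r in t₀..t, (F r (z r) - F r (y r))‖ ≤ |∫ r in t₀..t, κ r * ‖z r - y r‖| :=
    intervalIntegral.norm_integral_le_abs_of_norm_le
      (Eventually.of_forall fun r => hF.norm_sub_le r _ _)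
      ((hF.intervalIntegrable_bound _ _).mul_continuousOn (by fun_prop))
  calc ‖z t - y t‖ ≤ ‖z t₀ - y t₀‖ + ‖y t - y t₀ - ∫ r in t₀..t, F r (y r)‖ +
        ‖∫ r in t₀..t, (F r (z r) - F r (y r))‖ := by
        rw [hdecomp]
        exact (norm_add_le _ _).trans (by gcongr; exact _root_.norm_sub_le _ _)
    _ ≤ _ := by gcongr; exact hye t ht

theorem IsIntegralSol.norm_sub_le (hF : IsCaratheodory F κ) {z y : ℝ → E}
    (hz : IsIntegralSol F (Icc a b) z) (hy : IsIntegralSol F (Icc a b) y) (ht₀ : t₀ ∈ Icc a b) :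
    ∀ t ∈ Icc a b, ‖z t - y t‖ ≤
      2 * ‖z t₀ - y t₀‖ * Real.exp (2 * |∫ r in t₀..t, κ r|) := by
  simpa using hz.norm_sub_le_of_defect_le hF hy.continuous (e := 0) ht₀
    fun t ht => by simp [hy.sub_eq t₀ ht₀ t ht]

theorem IsCaratheodory.exists_norm_sub_le (hF : IsCaratheodory F κ) (a b : ℝ) :
    ∃ C, 0 < C ∧ ∀ (z y : ℝ → E) (e t₀ : ℝ), IsIntegralSol F (Icc a b) z → Continuous y →
      t₀ ∈ Icc a b → (∀ t ∈ Icc a b, ‖y t - y t₀ - ∫ r in t₀..t, F r (y r)‖ ≤ e) →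
      ∀ t ∈ Icc a b, ‖z t - y t‖ ≤ C * (‖z t₀ - y t₀‖ + e) := by
  refine ⟨2 * Real.exp (2 * |∫ r in a..b, κ r|), by positivity,
    fun z y e t₀ hz hy ht₀ hye t ht => ?_⟩
  have he : 0 ≤ e := (norm_nonneg _).trans (hye t ht)
  have hsub : uIoc t₀ t ⊆ uIoc a b := uIoc_subset_uIoc_of_uIcc_subset_uIcc <|
    (uIcc_subset_Icc ht₀ ht).trans Icc_subset_uIcc
  have hint : |∫ r in t₀..t, κ r| ≤ |∫ r in a..b, κ r| :=
    intervalIntegral.abs_integral_mono_interval hsub (Eventually.of_forall hF.bound_nonneg)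
      (hF.intervalIntegrable_bound a b)
  calc ‖z t - y t‖ ≤ 2 * (‖z t₀ - y t₀‖ + e) * Real.exp (2 * |∫ r in t₀..t, κ r|) :=
        hz.norm_sub_le_of_defect_le hF hy ht₀ hye t ht
    _ ≤ 2 * (‖z t₀ - y t₀‖ + e) * Real.exp (2 * |∫ r in a..b, κ r|) := by gcongr
    _ = _ := by ring

theorem IsCaratheodory.norm_integral_sub_integral_le (hF : IsCaratheodory F κ) {v w : ℝ → E}
    (hv : Continuous v) (hw : Continuous w) {D : ℝ}
    (hvw : ∀ r, ‖v r - w r‖ ≤ D * Real.exp (2 * |∫ x in t₀..r, κ x|)) (t : ℝ) :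
    ‖(∫ r in t₀..t, F r (v r)) - ∫ r in t₀..t, F r (w r)‖ ≤
      D * (Real.exp (2 * |∫ x in t₀..t, κ x|) / 2) := by
  have hD : 0 ≤ D := by simpa using (norm_nonneg _).trans (hvw t₀)
  have hexp : Continuous fun t => Real.exp (2 * |∫ x in t₀..t, κ x|) :=
    ((intervalIntegral.continuous_primitive hF.intervalIntegrable_bound t₀).abs.const_mul 2).rexp
  have hpt : ∀ r, ‖F r (v r) - F r (w r)‖ ≤ D * (κ r * Real.exp (2 * |∫ x in t₀..r, κ x|)) :=
    fun r => (hF.norm_sub_le r _ _).trans <|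
      (mul_le_mul_of_nonneg_left (hvw r) (hF.bound_nonneg r)).trans_eq (mul_left_comm _ _ _)
  rw [← intervalIntegral.integral_sub (hF.intervalIntegrable_comp v hv _ _)
    (hF.intervalIntegrable_comp w hw _ _)]
  refine (intervalIntegral.norm_integral_le_abs_of_norm_le (Eventually.of_forall hpt)
    (((hF.intervalIntegrable_bound _ _).mul_continuousOn hexp.continuousOn).const_mul _)).trans ?_
  rw [intervalIntegral.integral_const_mul, abs_mul, abs_of_nonneg hD]
  exact mul_le_mul_of_nonneg_left (abs_integral_mul_exp_abs_integral_le
    hF.intervalIntegrable_bound hF.bound_nonneg t₀ t) hD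

variable [CompleteSpace E]

-- Bielecki's weight: for `z(t) = exp(2|∫κ|) v(t)` the Picard iteration contracts in the sup norm of
-- `v` by a factor `1/2`, whatever the length of the interval.
theorem IsCaratheodory.exists_isIntegralSol (hF : IsCaratheodory F κ) (ht₀ : t₀ ∈ Icc a b)
    (x₀ : E) : ∃ z, IsIntegralSol F (Icc a b) z ∧ z t₀ = x₀ := by
  have hab : a ≤ b := ht₀.1.trans ht₀.2
  set B : ℝ → ℝ := fun t => Real.exp (2 * |∫ r in t₀..t, κ r|)
  have hB : Continuous B :=
    ((intervalIntegral.continuous_primitive hF.intervalIntegrable_bound t₀).abs.const_mul 2).rexp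
  have hB0 : ∀ t, 0 < B t := fun t => Real.exp_pos _
  let ext : C(Icc a b, E) → ℝ → E := fun v t => B t • IccExtend hab v t
  have hext : ∀ v, Continuous (ext v) := fun v => hB.smul v.continuous.Icc_extend'
  let P : C(Icc a b, E) → ℝ → E := fun v t => x₀ + ∫ r in t₀..t, F r (ext v r)
  have hP : ∀ v, Continuous (P v) := fun v => continuous_const.add
    (intervalIntegral.continuous_primitive (hF.intervalIntegrable_comp _ (hext v)) t₀)
  have hPsub : ∀ v w t, ‖P v t - P w t‖ ≤ dist v w * (B t / 2) := fun v w t => by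
    rw [add_sub_add_left_eq_sub]
    refine hF.norm_integral_sub_integral_le (hext v) (hext w) (fun r => ?_) t
    rw [← smul_sub, norm_smul, Real.norm_of_nonneg (hB0 r).le, ← dist_eq_norm, mul_comm]
    exact mul_le_mul_of_nonneg_right (ContinuousMap.dist_apply_le_dist _) (hB0 r).le
  let Φ : C(Icc a b, E) → C(Icc a b, E) := fun v =>
    ⟨fun t => (B t)⁻¹ • P v t, ((hB.inv₀ fun t => (hB0 t).ne').smul (hP v)).comp
      continuous_subtype_val⟩
  have hΦ : ContractingWith (1 / 2) Φ := by
    refine ⟨by norm_num [← NNReal.coe_lt_coe], LipschitzWith.of_dist_le_mul fun v w => ?_⟩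
    refine (ContinuousMap.dist_le (by positivity)).2 fun t => ?_
    simp only [Φ, ContinuousMap.coe_mk]
    rw [dist_eq_norm, ← smul_sub, norm_smul, Real.norm_of_nonneg (inv_pos.2 (hB0 t)).le,
      inv_mul_le_iff₀ (hB0 t)]
    refine (hPsub v w t).trans_eq ?_
    push_cast
    ring
  obtain ⟨v, hv⟩ : ∃ v, Φ v = v := ⟨_, hΦ.fixedPoint_isFixedPt⟩
  have hfix : ∀ t ∈ Icc a b, ext v t = P v t := fun t ht => by
    have h : (B t)⁻¹ • P v t = v ⟨t, ht⟩ := congrArg (fun f : C(Icc a b, E) => f ⟨t, ht⟩) hv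
    simp only [ext, IccExtend_of_mem hab _ ht]
    rw [← h, smul_inv_smul₀ (hB0 t).ne']
  refine ⟨P v, ⟨hP v, fun s hs t ht => ?_⟩, by simp [P]⟩
  rw [add_sub_add_left_eq_sub, intervalIntegral.integral_interval_sub_left
    (hF.intervalIntegrable_comp _ (hext v) _ _) (hF.intervalIntegrable_comp _ (hext v) _ _)]
  exact intervalIntegral.integral_congr fun r hr => by
    simp only [hfix r (uIcc_subset_Icc hs ht hr)]

theorem IsCaratheodory.exists_flow (hF : IsCaratheodory F κ) (ht₀ : t₀ ∈ Icc a b) :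
    ∃ Z : E → ℝ → E, (∀ x, IsIntegralSol F (Icc a b) (Z x)) ∧ (∀ x, Z x t₀ = x) ∧
      ∀ t ∈ Icc a b, Continuous fun x => Z x t := by
  choose Z hZ hZ₀ using hF.exists_isIntegralSol ht₀
  refine ⟨Z, hZ, hZ₀, fun t ht => (LipschitzWith.of_dist_le'
    (K := 2 * Real.exp (2 * |∫ r in t₀..t, κ r|)) fun x y => ?_).continuous⟩
  rw [dist_eq_norm, dist_eq_norm, mul_right_comm]
  simpa only [hZ₀] using (hZ x).norm_sub_le hF (hZ y) ht₀ t ht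

end Caratheodory

section NewtonField

/-- The planar field of the first-order system `u' = q`, `q' = -b(t) G(u)`, which is equivalent to
`u'' + b(t) G(u) = 0`; a point of `ℝ × ℝ` is `(u, q)`. -/
def newtonField (b G : ℝ → ℝ) (t : ℝ) (z : ℝ × ℝ) : ℝ × ℝ := (z.2, -(b t * G z.1))

open scoped NNReal

variable {b G : ℝ → ℝ} {K : ℝ≥0} {x₁ x₂ T : ℝ} {z : ℝ → ℝ × ℝ}

theorem intervalIntegrable_mul_comp_fst (hb : ∀ s t, IntervalIntegrable b volume s t)
    (hG : Continuous G) (hz : Continuous z) (s t : ℝ) :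
    IntervalIntegrable (fun r => b r * G (z r).1) volume s t :=
  (hb s t).mul_continuousOn (hG.comp hz.fst).continuousOn

theorem isCaratheodory_newtonField (hb : ∀ s t, IntervalIntegrable b volume s t)
    (hG : LipschitzWith K G) : IsCaratheodory (newtonField b G) fun t => 1 + K * |b t| where
  intervalIntegrable_comp z hz s t :=
    have hq := hz.snd.intervalIntegrable (μ := volume) s t
    have hf := (intervalIntegrable_mul_comp_fst hb hG.continuous hz s t).neg
    ⟨hq.1.prodMk hf.1, hq.2.prodMk hf.2⟩
  norm_sub_le r x y := by
    have hG' : |G x.1 - G y.1| ≤ K * ‖x - y‖ :=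
      (hG.norm_sub_le _ _).trans (by gcongr; exact norm_fst_le (x - y))
    refine norm_prod_le_iff.2 ⟨?_, ?_⟩
    · have : 0 ≤ K * |b r| * ‖x - y‖ := by positivity
      calc ‖(x - y).2‖ ≤ ‖x - y‖ := norm_snd_le (x - y)
        _ ≤ (1 + K * |b r|) * ‖x - y‖ := by linarith
    · calc ‖-(b r * G x.1) - -(b r * G y.1)‖ = |b r| * |G x.1 - G y.1| := by
            rw [neg_sub_neg, ← mul_sub, Real.norm_eq_abs, abs_mul, abs_sub_comm]
        _ ≤ |b r| * (K * ‖x - y‖) := by gcongr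
        _ ≤ (1 + K * |b r|) * ‖x - y‖ := by linarith [norm_nonneg (x - y)]
  intervalIntegrable_bound s t :=
    intervalIntegrable_const.add ((hb s t).abs.const_mul _)
  bound_nonneg r := by positivity

theorem integral_newtonField (hb : ∀ s t, IntervalIntegrable b volume s t) (hG : Continuous G)
    (hz : Continuous z) (s t : ℝ) :
    ∫ r in s..t, newtonField b G r (z r) =
      (∫ r in s..t, (z r).2, -∫ r in s..t, b r * G (z r).1) := by
  have hq := hz.snd.intervalIntegrable (μ := volume) s t
  have hf : IntervalIntegrable (fun r => -(b r * G (z r).1)) volume s t :=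
    (intervalIntegrable_mul_comp_fst hb hG hz s t).neg
  rw [← intervalIntegral.integral_neg]
  simp only [newtonField, intervalIntegral]
  rw [integral_pair hq.1 hf.1, integral_pair hq.2 hf.2, Prod.mk_sub_mk]

theorem isIntegralSol_newtonField_iff (hb : ∀ s t, IntervalIntegrable b volume s t)
    (hG : Continuous G) {I : Set ℝ} :
    IsIntegralSol (newtonField b G) I z ↔ Continuous z ∧
      (∀ s ∈ I, ∀ t ∈ I, (z t).1 - (z s).1 = ∫ r in s..t, (z r).2) ∧
      ∀ s ∈ I, ∀ t ∈ I, (z t).2 - (z s).2 = -∫ r in s..t, b r * G (z r).1 := by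
  constructor
  · refine fun ⟨hz, h⟩ => ⟨hz, fun s hs t ht => ?_, fun s hs t ht => ?_⟩
    · simpa [integral_newtonField hb hG hz] using congrArg Prod.fst (h s hs t ht)
    · simpa [integral_newtonField hb hG hz] using congrArg Prod.snd (h s hs t ht)
  · exact fun ⟨hz, h₁, h₂⟩ => ⟨hz, fun s hs t ht => by
      rw [integral_newtonField hb hG hz, ← h₁ s hs t ht, ← h₂ s hs t ht]; rfl⟩

theorem IsIntegralSol.fst_sub (hb : ∀ s t, IntervalIntegrable b volume s t) (hG : Continuous G)
    {I : Set ℝ} (hz : IsIntegralSol (newtonField b G) I z) {s t : ℝ} (hs : s ∈ I) (ht : t ∈ I) :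
    (z t).1 - (z s).1 = ∫ r in s..t, (z r).2 :=
  ((isIntegralSol_newtonField_iff hb hG).1 hz).2.1 s hs t ht

theorem IsIntegralSol.snd_sub (hb : ∀ s t, IntervalIntegrable b volume s t) (hG : Continuous G)
    {I : Set ℝ} (hz : IsIntegralSol (newtonField b G) I z) {s t : ℝ} (hs : s ∈ I) (ht : t ∈ I) :
    (z t).2 - (z s).2 = -∫ r in s..t, b r * G (z r).1 :=
  ((isIntegralSol_newtonField_iff hb hG).1 hz).2.2 s hs t ht

theorem IsIntegralSol.hasDerivWithinAt_fst (hb : ∀ s t, IntervalIntegrable b volume s t)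
    (hG : Continuous G) (hz : IsIntegralSol (newtonField b G) (Icc x₁ x₂) z) {t : ℝ}
    (ht : t ∈ Icc x₁ x₂) :
    HasDerivWithinAt (fun r => (z r).1) (z t).2 (Icc x₁ x₂) t := by
  have hd : HasDerivAt (fun r => (z t).1 + ∫ x in t..r, (z x).2) (z t).2 t :=
    (hz.continuous.snd.integral_hasStrictDerivAt t t).hasDerivAt.const_add _
  exact hd.hasDerivWithinAt.congr (fun r hr => by rw [← hz.fst_sub hb hG ht hr]; ring) (by simp)

theorem IsIntegralSol.time_reversal (hb : ∀ s t, IntervalIntegrable b volume s t)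
    (hG : Continuous G) (hz : IsIntegralSol (newtonField b G) (Icc 0 T) z) :
    IsIntegralSol (newtonField (fun t => b (T - t)) G) (Icc 0 T)
      fun t => ((z (T - t)).1, -(z (T - t)).2) := by
  have hzc := hz.continuous
  have hmem : ∀ t ∈ Icc 0 T, T - t ∈ Icc 0 T := fun t ht =>
    ⟨by linarith [ht.2], by linarith [ht.1]⟩
  refine (isIntegralSol_newtonField_iff (fun s t => ?_) hG).2
    ⟨by fun_prop, fun s hs t ht => ?_, fun s hs t ht => ?_⟩
  · simpa using (hb (T - s) (T - t)).comp_sub_left T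
  · rw [intervalIntegral.integral_neg, intervalIntegral.integral_comp_sub_left (fun r => (z r).2) T,
      ← hz.fst_sub hb hG (hmem t ht) (hmem s hs)]
    ring
  · rw [intervalIntegral.integral_comp_sub_left (fun r => b r * G (z r).1) T,
      ← hz.snd_sub hb hG (hmem t ht) (hmem s hs)]
    ring

theorem isIntegralSol_affine (hb : ∀ s t, IntervalIntegrable b volume s t) (hG : Continuous G)
    (hG0 : ∀ s ≤ 0, G s = 0) {t₀ c p : ℝ} (hle : ∀ t ∈ Icc x₁ x₂, c + (t - t₀) * p ≤ 0) :
    IsIntegralSol (newtonField b G) (Icc x₁ x₂) fun t => (c + (t - t₀) * p, p) := by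
  refine (isIntegralSol_newtonField_iff hb hG).2
    ⟨by fun_prop, fun s _ t _ => ?_, fun s hs t ht => ?_⟩
  · rw [intervalIntegral.integral_const, smul_eq_mul]
    ring
  · have hzero : EqOn (fun r => b r * G (c + (r - t₀) * p)) (fun _ => 0) (uIcc s t) :=
      fun r hr => by simp only [hG0 _ (hle r (uIcc_subset_Icc hs ht hr)), mul_zero]
    simp [intervalIntegral.integral_congr hzero]

theorem IsIntegralSol.eq_affine (hb : ∀ s t, IntervalIntegrable b volume s t)
    (hG : LipschitzWith K G) (hG0 : ∀ s ≤ 0, G s = 0)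
    (hz : IsIntegralSol (newtonField b G) (Icc x₁ x₂) z) {t₀ : ℝ} (ht₀ : t₀ ∈ Icc x₁ x₂)
    (hle : ∀ t ∈ Icc x₁ x₂, (z t₀).1 + (t - t₀) * (z t₀).2 ≤ 0) :
    ∀ t ∈ Icc x₁ x₂, z t = ((z t₀).1 + (t - t₀) * (z t₀).2, (z t₀).2) := fun t ht => by
  have h := hz.norm_sub_le (isCaratheodory_newtonField hb hG)
    (isIntegralSol_affine hb hG.continuous hG0 hle) ht₀ t ht
  simp only [sub_self, zero_mul, add_zero, Prod.mk.eta, norm_zero, mul_zero] at h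
  exact sub_eq_zero.1 (norm_le_zero_iff.1 h)

theorem IsIntegralSol.snd_nonpos_of_forall_fst_le (hb : ∀ s t, IntervalIntegrable b volume s t)
    (hG : Continuous G) (hz : IsIntegralSol (newtonField b G) (Icc x₁ x₂) z) {τ : ℝ}
    (h₁τ : x₁ < τ) (hτ₂ : τ ≤ x₂) (hmin : ∀ t ∈ Ico x₁ τ, (z τ).1 ≤ (z t).1) : (z τ).2 ≤ 0 := by
  have hd : HasDerivWithinAt (fun r => (z r).1) (z τ).2 (Ico x₁ τ) τ :=
    (hz.hasDerivWithinAt_fst hb hG ⟨h₁τ.le, hτ₂⟩).mono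
      (Ico_subset_Icc_self.trans (Icc_subset_Icc_right hτ₂))
  have := right_nhdsWithin_Ico_neBot h₁τ
  refine le_of_tendsto ((hasDerivWithinAt_iff_tendsto_slope' (by simp)).1 hd) ?_
  filter_upwards [self_mem_nhdsWithin] with t ht
  rw [slope_def_field]
  exact div_nonpos_of_nonneg_of_nonpos (sub_nonneg.2 (hmin t ht)) (sub_nonpos.2 ht.2.le)

-- Once `u` has reached `0` it continues affinely, and with negative slope by uniqueness.
theorem IsIntegralSol.nonpos_of_exists_nonpos (hb : ∀ s t, IntervalIntegrable b volume s t)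
    (hG : LipschitzWith K G) (hG0 : ∀ s ≤ 0, G s = 0)
    (hz : IsIntegralSol (newtonField b G) (Icc 0 T) z) (hu₀ : 0 < (z 0).1)
    (hu : ∃ t ∈ Icc 0 T, (z t).1 ≤ 0) : (z T).1 ≤ 0 ∧ (z T).2 < 0 := by
  have hcl : IsClosed {t : ℝ | (z t).1 ≤ 0} := isClosed_le hz.continuous.fst continuous_const
  obtain ⟨τ, ⟨hτ, hτu⟩, hleast⟩ := (isCompact_Icc.inter_right hcl).exists_isLeast hu
  have hτ0 : 0 < τ := hτ.1.lt_of_ne fun h => hu₀.not_ge (h ▸ hτu)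
  have hpos : ∀ t ∈ Ico 0 τ, 0 < (z t).1 := fun t ht => by
    by_contra! h
    exact (hleast ⟨⟨ht.1, ht.2.le.trans hτ.2⟩, h⟩).not_gt ht.2
  have hq : (z τ).2 ≤ 0 := hz.snd_nonpos_of_forall_fst_le hb hG.continuous hτ0 hτ.2
    fun t ht => hτu.trans (hpos t ht).le
  have hq0 : (z τ).2 ≠ 0 := fun h => by
    have h0 := hz.eq_affine hb hG hG0 hτ (fun t _ => by simpa [h] using hτu) 0
      ⟨le_rfl, hτ.1.trans hτ.2⟩
    have hz0 : (z 0).1 = (z τ).1 := by simpa [h] using congrArg Prod.fst h0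
    exact hu₀.not_ge (hz0 ▸ hτu)
  have hle : ∀ t ∈ Icc τ T, (z τ).1 + (t - τ) * (z τ).2 ≤ 0 := fun t ht =>
    add_nonpos hτu (mul_nonpos_of_nonneg_of_nonpos (sub_nonneg.2 ht.1) hq)
  have hT : T ∈ Icc τ T := right_mem_Icc.2 hτ.2
  rw [(hz.mono (Icc_subset_Icc_left hτ.1)).eq_affine hb hG hG0 (left_mem_Icc.2 hτ.2) hle T hT]
  exact ⟨hle T hT, hq.lt_of_ne hq0⟩

theorem exists_peak_forall_abs_sub_le (hG : LipschitzWith K G) (hG0 : ∀ s ≤ 0, G s = 0)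
    (hGpos : ∀ s, 0 < s → 0 < G s)
    (hsmall : ∀ η : ℝ≥0, 0 < η → ∃ r > 0, LipschitzOnWith η G (Iic r)) {C μ : ℝ} (hC : 0 ≤ C)
    (hμ : 0 < μ) :
    ∃ ε > 0, (∀ s ≤ ε, G s ≤ G ε) ∧ ∀ x, |x - ε| ≤ C * G ε → |G x - G ε| ≤ μ * G ε := by
  obtain ⟨η, hη⟩ : ∃ η : ℝ≥0, (η : ℝ) = μ / (C + 1) := ⟨_, Real.coe_toNNReal _ (by positivity)⟩
  obtain ⟨r, hr, hGr⟩ := hsmall η (by rw [← NNReal.coe_pos, hη]; positivity)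
  set r' : ℝ := r / (1 + C * K)
  have hr' : 0 < r' := by positivity
  have hr'r : r' * (1 + C * K) = r := div_mul_cancel₀ _ (by positivity)
  obtain ⟨ε, hε, hmax⟩ := isCompact_Icc.exists_isMaxOn (nonempty_Icc.2 hr'.le)
    hG.continuous.continuousOn
  have hGε : 0 < G ε := (hGpos r' hr').trans_le (hmax (right_mem_Icc.2 hr'.le))
  have hε0 : 0 < ε := not_le.1 fun h => hGε.ne' (hG0 ε h)
  have hGεle : G ε ≤ K * r' := calc
    G ε ≤ K * |ε - 0| := by simpa [hG0 0 le_rfl, abs_of_pos hGε] using hG.norm_sub_le ε 0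
    _ ≤ K * r' := by rw [sub_zero, abs_of_pos hε0]; gcongr; exact hε.2
  refine ⟨ε, hε0, fun s hs => ?_, fun x hx => ?_⟩
  · rcases le_total s 0 with hs0 | hs0
    · exact (hG0 s hs0).trans_le hGε.le
    · exact hmax ⟨hs0, hs.trans hε.2⟩
  · have hCK : C * G ε ≤ C * (K * r') := by gcongr
    have hxr : x ≤ r := by linarith [le_of_abs_le hx, hε.2]
    have hεr : ε ≤ r := by nlinarith [hε.2, mul_nonneg hC K.coe_nonneg]
    calc |G x - G ε| ≤ μ / (C + 1) * |x - ε| := hη ▸ hGr.norm_sub_le hxr hεr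
      _ ≤ μ / (C + 1) * ((C + 1) * G ε) := by gcongr; linarith
      _ = μ * G ε := by field_simp

theorem abs_integral_mul_le_of_forall_abs_le {c : ℝ → ℝ} {M : ℝ}
    (hb : ∀ s t, IntervalIntegrable b volume s t) {t : ℝ} (ht : t ∈ Icc 0 T)
    (hc : ∀ r ∈ Icc 0 t, |c r| ≤ M) :
    |∫ r in (0 : ℝ)..t, b r * c r| ≤ (∫ r in (0 : ℝ)..T, |b r|) * M := by
  have hM : 0 ≤ M := (abs_nonneg _).trans (hc 0 ⟨le_rfl, ht.1⟩)
  have hle : ∫ r in (0 : ℝ)..t, |b r| ≤ ∫ r in (0 : ℝ)..T, |b r| :=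
    intervalIntegral.integral_mono_interval le_rfl ht.1 ht.2
      (Eventually.of_forall fun r => abs_nonneg (b r)) (hb 0 T).abs
  calc |∫ r in (0 : ℝ)..t, b r * c r| ≤ ∫ r in (0 : ℝ)..t, |b r| * M :=
        intervalIntegral.norm_integral_le_of_norm_le ht.1 (ae_of_all _ fun r hr => by
          rw [Real.norm_eq_abs, abs_mul]
          exact mul_le_mul_of_nonneg_left (hc r (Ioc_subset_Icc_self hr)) (abs_nonneg _))
          ((hb 0 t).abs.mul_const M)
    _ = (∫ r in (0 : ℝ)..t, |b r|) * M := intervalIntegral.integral_mul_const ..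
    _ ≤ (∫ r in (0 : ℝ)..T, |b r|) * M := by gcongr

-- A solution starting from a peak `ε` of `G` with slope `O(G ε)` stays within `O(G ε)` of `ε`,
-- where `G` is `G ε + o(G ε)`; so to first order `u'' = -b(t) G(ε)`.
theorem exists_forall_abs_snd_sub_add_integral_mul_le
    (hb : ∀ s t, IntervalIntegrable b volume s t) (hG : LipschitzWith K G)
    (hG0 : ∀ s ≤ 0, G s = 0) (hGpos : ∀ s, 0 < s → 0 < G s)
    (hsmall : ∀ η : ℝ≥0, 0 < η → ∃ r > 0, LipschitzOnWith η G (Iic r)) (hT : 0 ≤ T) {A δ : ℝ}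
    (hA : 0 ≤ A) (hδ : 0 < δ) :
    ∃ ε > 0, (∀ s ≤ ε, G s ≤ G ε) ∧ ∀ z, IsIntegralSol (newtonField b G) (Icc 0 T) z →
      (z 0).1 = ε → |(z 0).2| ≤ A * G ε →
      ∀ t ∈ Icc 0 T, |(z t).2 - (z 0).2 + (∫ r in (0 : ℝ)..t, b r) * G ε| ≤ δ * G ε := by
  obtain ⟨C, hC, hdist⟩ := (isCaratheodory_newtonField hb hG).exists_norm_sub_le 0 T
  set N : ℝ := ∫ r in (0 : ℝ)..T, |b r|
  have hN : 0 ≤ N := intervalIntegral.integral_nonneg hT fun r _ => abs_nonneg (b r)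
  obtain ⟨ε, hε, hmax, hpeak⟩ := exists_peak_forall_abs_sub_le hG hG0 hGpos hsmall
    (C := C * (A + N)) (μ := δ / (N + 1)) (by positivity) (by positivity)
  have hGε := hGpos ε hε
  refine ⟨ε, hε, hmax, fun z hz hu hq t ht => ?_⟩
  have hdefect : ∀ s ∈ Icc 0 T,
      ‖(ε, (0 : ℝ)) - (ε, 0) - ∫ r in (0 : ℝ)..s, newtonField b G r (ε, 0)‖ ≤ N * G ε :=
    fun s hs => by
      rw [integral_newtonField hb hG.continuous continuous_const, sub_self, zero_sub, norm_neg]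
      refine norm_prod_le_iff.2 ⟨by simpa using by positivity, ?_⟩
      rw [norm_neg]
      exact abs_integral_mul_le_of_forall_abs_le hb hs fun _ _ => (abs_of_pos hGε).le
  have hclose : ∀ s ∈ Icc 0 T, |(z s).1 - ε| ≤ C * (A + N) * G ε := fun s hs => calc
    |(z s).1 - ε| ≤ ‖z s - (ε, 0)‖ := norm_fst_le (z s - (ε, 0))
    _ ≤ C * (‖z 0 - (ε, 0)‖ + N * G ε) :=
      hdist z (fun _ => (ε, 0)) _ 0 hz continuous_const (left_mem_Icc.2 hT) hdefect s hs
    _ ≤ C * (A * G ε + N * G ε) := by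
      gcongr
      exact norm_prod_le_iff.2 ⟨by simpa [hu] using by positivity, by simpa using hq⟩
    _ = C * (A + N) * G ε := by ring
  have hq_sub : (z t).2 - (z 0).2 + (∫ r in (0 : ℝ)..t, b r) * G ε =
      -∫ r in (0 : ℝ)..t, b r * (G (z r).1 - G ε) := by
    simp only [mul_sub]
    rw [intervalIntegral.integral_sub (intervalIntegrable_mul_comp_fst hb hG.continuous
      hz.continuous 0 t) ((hb 0 t).mul_const _), intervalIntegral.integral_mul_const,
      hz.snd_sub hb hG.continuous (left_mem_Icc.2 hT) ht]
    ring
  calc _ = |∫ r in (0 : ℝ)..t, b r * (G (z r).1 - G ε)| := by rw [hq_sub, abs_neg]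
    _ ≤ N * (δ / (N + 1) * G ε) := abs_integral_mul_le_of_forall_abs_le hb ht fun r hr =>
      hpeak _ (hclose r ⟨hr.1, hr.2.trans ht.2⟩)
    _ ≤ (N + 1) * (δ / (N + 1) * G ε) := by gcongr; linarith
    _ = δ * G ε := by field_simp

theorem IsIntegralSol.fst_lt_of_snd_add_integral_mul_neg
    (hb : ∀ s t, IntervalIntegrable b volume s t) (hG : Continuous G) (hT : 0 < T)
    (hz : IsIntegralSol (newtonField b G) (Icc 0 T) z) {M : ℝ}
    (hM : ∀ s ≤ (z 0).1, |G s| ≤ M) (hq : (z 0).2 + (∫ r in (0 : ℝ)..T, |b r|) * M < 0) :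
    (z T).1 < (z 0).1 := by
  have hanti : ∀ τ ∈ Icc 0 T, (∀ t ∈ Ico 0 τ, (z t).2 < 0) →
      StrictAntiOn (fun t => (z t).1) (Icc 0 τ) := fun τ hτ hneg =>
    strictAntiOn_of_hasDerivWithinAt_neg (convex_Icc 0 τ) hz.continuous.fst.continuousOn
      (fun t ht => (hz.hasDerivWithinAt_fst hb hG
        ⟨(interior_subset ht).1, (interior_subset ht).2.trans hτ.2⟩).mono
        (interior_subset.trans (Icc_subset_Icc_right hτ.2)))
      fun t ht => by
        rw [interior_Icc] at ht
        exact hneg t ⟨ht.1.le, ht.2⟩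
  have hneg : ∀ t ∈ Icc 0 T, (z t).2 < 0 := by
    by_contra! h
    have hcl : IsClosed {t : ℝ | 0 ≤ (z t).2} := isClosed_le continuous_const hz.continuous.snd
    obtain ⟨τ, ⟨hτ, hτq⟩, hleast⟩ := (isCompact_Icc.inter_right hcl).exists_isLeast h
    have hlt : ∀ t ∈ Ico 0 τ, (z t).2 < 0 := fun t ht => by
      by_contra! h
      exact (hleast ⟨⟨ht.1, ht.2.le.trans hτ.2⟩, h⟩).not_gt ht.2
    have hint := abs_integral_mul_le_of_forall_abs_le hb hτ fun r hr =>
      hM (z r).1 ((hanti τ hτ hlt).antitoneOn (left_mem_Icc.2 hτ.1) hr hr.1)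
    have hsub := hz.snd_sub hb hG (left_mem_Icc.2 hT.le) hτ
    have hτq' : 0 ≤ (z τ).2 := hτq
    linarith [neg_le_of_abs_le hint]
  exact hanti T (right_mem_Icc.2 hT.le) (fun t ht => hneg t (Ico_subset_Icc_self ht))
    (left_mem_Icc.2 hT.le) (right_mem_Icc.2 hT.le) hT

theorem IsIntegralSol.fst_lt_of_integral_mul_lt_snd
    (hb : ∀ s t, IntervalIntegrable b volume s t) (hG : Continuous G) (hT : 0 < T)
    (hz : IsIntegralSol (newtonField b G) (Icc 0 T) z) {M : ℝ}
    (hM : ∀ s ≤ (z T).1, |G s| ≤ M) (hq : (∫ r in (0 : ℝ)..T, |b r|) * M < (z T).2) :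
    (z 0).1 < (z T).1 := by
  have hb' : ∀ s t, IntervalIntegrable (fun r => b (T - r)) volume s t := fun s t => by
    simpa using (hb (T - s) (T - t)).comp_sub_left T
  have hint : ∫ r in (0 : ℝ)..T, |b (T - r)| = ∫ r in (0 : ℝ)..T, |b r| := by
    simpa using intervalIntegral.integral_comp_sub_left (a := 0) (b := T) (fun r => |b r|) T
  simpa using (hz.time_reversal hb hG).fst_lt_of_snd_add_integral_mul_neg hb' hG hT
    (by simpa using hM) (by simpa [hint] using by linarith)

theorem exists_small_data_behaviour (hb : ∀ s t, IntervalIntegrable b volume s t)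
    (hG : LipschitzWith K G) (hG0 : ∀ s ≤ 0, G s = 0) (hGpos : ∀ s, 0 < s → 0 < G s)
    (hsmall : ∀ η : ℝ≥0, 0 < η → ∃ r > 0, LipschitzOnWith η G (Iic r)) (hT : 0 < T)
    (hneg : ∫ r in (0 : ℝ)..T, b r < 0) :
    ∃ ε > 0, ∃ ρ > 0, ∀ z, IsIntegralSol (newtonField b G) (Icc 0 T) z → (z 0).1 = ε →
      (|(z 0).2| ≤ ρ → (z 0).2 < (z T).2) ∧ ((z 0).2 = ρ → ε < (z T).1) ∧
      ((z 0).2 < -ρ → (z T).1 < ε) ∧ (ρ ≤ (z 0).2 → (z T).1 = ε → (z T).2 < (z 0).2) := by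
  set N : ℝ := ∫ r in (0 : ℝ)..T, |b r|
  set σ : ℝ := -∫ r in (0 : ℝ)..T, b r
  have hσ : 0 < σ := neg_pos.2 hneg
  have hN : ∀ t ∈ Icc 0 T, |∫ r in (0 : ℝ)..t, b r| ≤ N := fun t ht => by
    simpa using abs_integral_mul_le_of_forall_abs_le (c := fun _ => 1) hb ht fun _ _ => abs_one.le
  have hσN : σ ≤ N := (neg_le_abs _).trans (hN T (right_mem_Icc.2 hT.le))
  obtain ⟨ε, hε, hmax, hsnd⟩ := exists_forall_abs_snd_sub_add_integral_mul_le hb hG hG0 hGpos hsmall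
    hT.le (A := 2 * N) (δ := σ / 2) (by linarith) (by linarith)
  have hGε := hGpos ε hε
  have hσε : 0 < σ * G ε := mul_pos hσ hGε
  have hσNε : σ * G ε ≤ N * G ε := by gcongr
  have hM : ∀ s ≤ ε, |G s| ≤ G ε := fun s hs => by
    rw [abs_of_nonneg ((le_or_gt s 0).elim (fun h => (hG0 s h).ge) fun h => (hGpos s h).le)]
    exact hmax s hs
  refine ⟨ε, hε, 2 * N * G ε, by linarith, fun z hz hu => ⟨fun hq => ?_, fun hq => ?_, fun hq => ?_,
    fun hq huT => ?_⟩⟩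
  · have h := neg_le_of_abs_le (hsnd z hz hu hq T (right_mem_Icc.2 hT.le))
    linarith
  · have hpos : ∀ t ∈ Icc 0 T, 0 < (z t).2 := fun t ht => by
      have h := neg_le_of_abs_le (hsnd z hz hu (by rw [hq, abs_of_nonneg (by linarith)]) t ht)
      have hle : (∫ r in (0 : ℝ)..t, b r) * G ε ≤ N * G ε := by
        gcongr; exact le_of_abs_le (hN t ht)
      linarith
    have hmono : StrictMonoOn (fun t => (z t).1) (Icc 0 T) :=
      strictMonoOn_of_hasDerivWithinAt_pos (convex_Icc 0 T) hz.continuous.fst.continuousOn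
        (fun t ht => (hz.hasDerivWithinAt_fst hb hG.continuous (interior_subset ht)).mono
          interior_subset) fun t ht => hpos t (interior_subset ht)
    exact hu ▸ hmono (left_mem_Icc.2 hT.le) (right_mem_Icc.2 hT.le) hT
  · have := hz.fst_lt_of_snd_add_integral_mul_neg hb hG.continuous hT (M := G ε)
      (by rwa [hu]) (by linarith)
    exact this.trans_eq hu
  · by_contra! h
    have := hz.fst_lt_of_integral_mul_lt_snd hb hG.continuous hT (M := G ε)
      (by rwa [huT]) (by linarith)
    exact this.ne (hu.trans huT.symm)

theorem div_mul_le_of_concaveOn {f : ℝ → ℝ} (hf : ConcaveOn ℝ (Icc x₁ x₂) f)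
    (hf0 : ∀ t ∈ Icc x₁ x₂, 0 ≤ f t) {δ : ℝ} (hδ : 0 < δ) {s y : ℝ}
    (hs : s ∈ Icc (x₁ + δ) (x₂ - δ)) (hy : y ∈ Icc x₁ x₂) : δ / (x₂ - x₁) * f y ≤ f s := by
  have hL : δ < x₂ - x₁ := by linarith [hs.1, hs.2]
  set θ : ℝ := δ / (x₂ - x₁)
  have hθ0 : 0 ≤ θ := div_nonneg hδ.le (by linarith)
  have hθ1 : 0 < 1 - θ := sub_pos.2 ((div_lt_one (by linarith)).2 hL)
  have hθL : θ * (x₂ - x₁) = δ := div_mul_cancel₀ _ (by linarith)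
  obtain ⟨e, he⟩ : ∃ e, (1 - θ) * e = s - θ * y := ⟨_, mul_div_cancel₀ _ hθ1.ne'⟩
  have he_mem : e ∈ Icc x₁ x₂ := by
    constructor <;> nlinarith [hs.1, hs.2, hy.1, hy.2]
  have hconc := hf.2 hy he_mem hθ0 hθ1.le (by ring)
  simp only [smul_eq_mul, he, add_sub_cancel] at hconc
  linarith [mul_nonneg hθ1.le (hf0 e he_mem)]

theorem IsIntegralSol.antitoneOn_snd (hb : ∀ s t, IntervalIntegrable b volume s t)
    (hG : Continuous G) (hG0 : ∀ s, 0 ≤ G s)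
    (hz : IsIntegralSol (newtonField b G) (Icc x₁ x₂) z)
    (hbJ : ∀ᵐ t ∂volume.restrict (Icc x₁ x₂), 0 ≤ b t) :
    AntitoneOn (fun t => (z t).2) (Icc x₁ x₂) := fun s hs t ht hst => by
  have hint : 0 ≤ ∫ r in s..t, b r * G (z r).1 :=
    intervalIntegral.integral_nonneg_of_ae_restrict hst <|
      (ae_restrict_of_ae_restrict_of_subset (Icc_subset_Icc hs.1 ht.2) hbJ).mono fun r hr =>
        mul_nonneg hr (hG0 _)
  have := hz.snd_sub hb hG hs ht
  linarith

theorem IsIntegralSol.concaveOn_fst (hb : ∀ s t, IntervalIntegrable b volume s t)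
    (hG : Continuous G) (hG0 : ∀ s, 0 ≤ G s)
    (hz : IsIntegralSol (newtonField b G) (Icc x₁ x₂) z)
    (hbJ : ∀ᵐ t ∂volume.restrict (Icc x₁ x₂), 0 ≤ b t) :
    ConcaveOn ℝ (Icc x₁ x₂) fun t => (z t).1 := by
  have hd : ∀ t ∈ interior (Icc x₁ x₂), HasDerivAt (fun r => (z r).1) (z t).2 t := fun t ht =>
    (hz.hasDerivWithinAt_fst hb hG (interior_subset ht)).hasDerivAt (mem_interior_iff_mem_nhds.1 ht)
  exact AntitoneOn.concaveOn_of_deriv (convex_Icc x₁ x₂) hz.continuous.fst.continuousOn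
    (fun t ht => (hd t ht).differentiableAt.differentiableWithinAt)
    (((hz.antitoneOn_snd hb hG hG0 hbJ).mono interior_subset).congr
      fun t ht => (hd t ht).deriv.symm)

theorem IsIntegralSol.snd_mem_Icc (hb : ∀ s t, IntervalIntegrable b volume s t)
    (hG : Continuous G) (hG0 : ∀ s, 0 ≤ G s)
    (hz : IsIntegralSol (newtonField b G) (Icc x₁ x₂) z)
    (hbJ : ∀ᵐ t ∂volume.restrict (Icc x₁ x₂), 0 ≤ b t) {δ : ℝ} (hδ : 0 < δ)
    (hnonneg : ∀ t ∈ Icc x₁ x₂, 0 ≤ (z t).1) {t : ℝ} (ht : t ∈ Icc (x₁ + δ) (x₂ - δ)) :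
    (z t).2 ∈ Icc (-((z (x₂ - δ)).1 / δ)) ((z (x₁ + δ)).1 / δ) := by
  have hx : x₁ + δ ≤ x₂ - δ := ht.1.trans ht.2
  have h₁ : x₁ ∈ Icc x₁ x₂ := ⟨le_rfl, by linarith⟩
  have h₂ : x₂ ∈ Icc x₁ x₂ := ⟨by linarith, le_rfl⟩
  have hy₁ : x₁ + δ ∈ Icc x₁ x₂ := ⟨by linarith, by linarith⟩
  have hy₂ : x₂ - δ ∈ Icc x₁ x₂ := ⟨by linarith, by linarith⟩
  have ht' : t ∈ Icc x₁ x₂ := ⟨hy₁.1.trans ht.1, ht.2.trans hy₂.2⟩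
  have hconc := hz.concaveOn_fst hb hG hG0 hbJ
  have hanti := hz.antitoneOn_snd hb hG hG0 hbJ
  have hl := hconc.le_slope_of_hasDerivWithinAt h₁ hy₁ (by linarith)
    (hz.hasDerivWithinAt_fst hb hG hy₁)
  have hr := hconc.slope_le_of_hasDerivWithinAt hy₂ h₂ (by linarith)
    (hz.hasDerivWithinAt_fst hb hG hy₂)
  rw [slope_def_field, add_sub_cancel_left] at hl
  rw [slope_def_field, sub_sub_cancel] at hr
  constructor
  · calc -((z (x₂ - δ)).1 / δ) ≤ ((z x₂).1 - (z (x₂ - δ)).1) / δ := by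
          rw [← neg_div]; gcongr; linarith [hnonneg x₂ h₂]
      _ ≤ (z (x₂ - δ)).2 := hr
      _ ≤ (z t).2 := hanti ht' hy₂ ht.2
  · calc (z t).2 ≤ (z (x₁ + δ)).2 := hanti hy₁ ht' ht.1
      _ ≤ ((z (x₁ + δ)).1 - (z x₁).1) / δ := hl
      _ ≤ (z (x₁ + δ)).1 / δ := by gcongr; linarith [hnonneg x₁ h₁]

theorem IsIntegralSol.integral_mul_comp_fst_le (hb : ∀ s t, IntervalIntegrable b volume s t)
    (hG : Continuous G) (hG0 : ∀ s, 0 ≤ G s)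
    (hz : IsIntegralSol (newtonField b G) (Icc x₁ x₂) z)
    (hbJ : ∀ᵐ t ∂volume.restrict (Icc x₁ x₂), 0 ≤ b t) {δ : ℝ} (hδ : 0 < δ)
    (hδx : x₁ + δ ≤ x₂ - δ) (hnonneg : ∀ t ∈ Icc x₁ x₂, 0 ≤ (z t).1) :
    ∫ t in x₁ + δ..x₂ - δ, b t * G (z t).1 ≤ ((z (x₁ + δ)).1 + (z (x₂ - δ)).1) / δ := by
  have h₁ := (hz.snd_mem_Icc hb hG hG0 hbJ hδ hnonneg (left_mem_Icc.2 hδx)).2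
  have h₂ := (hz.snd_mem_Icc hb hG hG0 hbJ hδ hnonneg (right_mem_Icc.2 hδx)).1
  have := hz.snd_sub hb hG (s := x₁ + δ) (t := x₂ - δ) ⟨by linarith, by linarith⟩
    ⟨by linarith, by linarith⟩
  rw [add_div]
  linarith

theorem IsIntegralSol.mul_le_integral_mul_comp_fst (hb : ∀ s t, IntervalIntegrable b volume s t)
    (hG : Continuous G) (hG0 : ∀ s, 0 ≤ G s)
    (hz : IsIntegralSol (newtonField b G) (Icc x₁ x₂) z)
    (hbJ : ∀ᵐ t ∂volume.restrict (Icc x₁ x₂), 0 ≤ b t) {δ : ℝ} (hδ : 0 < δ)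
    (hδx : x₁ + δ ≤ x₂ - δ) (hnonneg : ∀ t ∈ Icc x₁ x₂, 0 ≤ (z t).1) {k S : ℝ} (hk : 0 ≤ k)
    (hkG : ∀ s, 0 ≤ s → k * (s - S) ≤ G s) :
    (∫ t in x₁ + δ..x₂ - δ, b t) *
        (k * (δ / (2 * (x₂ - x₁)) * ((z (x₁ + δ)).1 + (z (x₂ - δ)).1) - S)) ≤
      ∫ t in x₁ + δ..x₂ - δ, b t * G (z t).1 := by
  have hy₁ : x₁ + δ ∈ Icc x₁ x₂ := ⟨by linarith, by linarith⟩
  have hy₂ : x₂ - δ ∈ Icc x₁ x₂ := ⟨by linarith, by linarith⟩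
  have hharnack : ∀ t ∈ Icc (x₁ + δ) (x₂ - δ), ∀ y ∈ Icc x₁ x₂,
      δ / (x₂ - x₁) * (z y).1 ≤ (z t).1 := fun t ht y hy =>
    div_mul_le_of_concaveOn (hz.concaveOn_fst hb hG hG0 hbJ) hnonneg hδ ht hy
  rw [← intervalIntegral.integral_mul_const]
  refine intervalIntegral.integral_mono_ae_restrict hδx ((hb _ _).mul_const _)
    (intervalIntegrable_mul_comp_fst hb hG hz.continuous _ _) ?_
  filter_upwards [ae_restrict_of_ae_restrict_of_subset (Icc_subset_Icc hy₁.1 hy₂.2) hbJ,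
    ae_restrict_mem measurableSet_Icc] with t hbt ht
  refine mul_le_mul_of_nonneg_left ?_ hbt
  refine le_trans (mul_le_mul_of_nonneg_left (sub_le_sub_right ?_ S) hk)
    (hkG _ (hnonneg t ⟨hy₁.1.trans ht.1, ht.2.trans hy₂.2⟩))
  rw [mul_comm 2, ← div_div]
  linarith [hharnack t ht _ hy₁, hharnack t ht _ hy₂]

-- Linear growth of `G` would make `∫ b G(u)`, the drop of the slope, larger than concavity allows.
theorem IsIntegralSol.fst_add_fst_le (hb : ∀ s t, IntervalIntegrable b volume s t)
    (hG : Continuous G) (hG0 : ∀ s, 0 ≤ G s)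
    (hz : IsIntegralSol (newtonField b G) (Icc x₁ x₂) z)
    (hbJ : ∀ᵐ t ∂volume.restrict (Icc x₁ x₂), 0 ≤ b t) {δ : ℝ} (hδ : 0 < δ)
    (hδx : x₁ + δ ≤ x₂ - δ) (hpos : ∀ t ∈ Icc x₁ x₂, 0 < (z t).1) {k S : ℝ} (hk : 0 ≤ k)
    (hkG : ∀ s, 0 ≤ s → k * (s - S) ≤ G s)
    (hbk : 4 * (x₂ - x₁) / δ ^ 2 ≤ (∫ t in x₁ + δ..x₂ - δ, b t) * k) :
    (z (x₁ + δ)).1 + (z (x₂ - δ)).1 ≤ 4 * (x₂ - x₁) * S / δ := by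
  have hnonneg : ∀ t ∈ Icc x₁ x₂, 0 ≤ (z t).1 := fun t ht => (hpos t ht).le
  have hle := (hz.mul_le_integral_mul_comp_fst hb hG hG0 hbJ hδ hδx hnonneg hk hkG).trans
    (hz.integral_mul_comp_fst_le hb hG hG0 hbJ hδ hδx hnonneg)
  set P : ℝ := (z (x₁ + δ)).1 + (z (x₂ - δ)).1
  set L : ℝ := x₂ - x₁
  set β : ℝ := ∫ t in x₁ + δ..x₂ - δ, b t
  have hL : 0 < L := by simp only [L]; linarith
  have hP : 0 < P :=
    add_pos (hpos _ ⟨by linarith, by linarith⟩) (hpos _ ⟨by linarith, by linarith⟩)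
  by_contra! h
  have hS : 4 * L * S < P * δ := (div_lt_iff₀ hδ).1 h
  have hbracket : δ / (4 * L) * P < δ / (2 * L) * P - S := by
    field_simp
    linarith
  refine hle.not_gt ?_
  calc P / δ = 4 * L / δ ^ 2 * (δ / (4 * L) * P) := by field_simp
    _ < 4 * L / δ ^ 2 * (δ / (2 * L) * P - S) := by gcongr
    _ ≤ β * k * (δ / (2 * L) * P - S) := by
      gcongr
      exact (by positivity : 0 < δ / (4 * L) * P).le.trans hbracket.le
    _ = _ := by ring

theorem IsIntegralSol.norm_le_of_forall_nonneg (hb : ∀ s t, IntervalIntegrable b volume s t)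
    (hG : Continuous G) (hG0 : ∀ s, 0 ≤ G s)
    (hz : IsIntegralSol (newtonField b G) (Icc x₁ x₂) z)
    (hbJ : ∀ᵐ t ∂volume.restrict (Icc x₁ x₂), 0 ≤ b t) {δ : ℝ} (hδ : 0 < δ)
    (hδx : x₁ + δ ≤ x₂ - δ) (hnonneg : ∀ t ∈ Icc x₁ x₂, 0 ≤ (z t).1) :
    ‖z (x₁ + δ)‖ ≤ ((z (x₁ + δ)).1 + (z (x₂ - δ)).1) * (1 + δ⁻¹) := by
  have h₁ := hnonneg (x₁ + δ) ⟨by linarith, by linarith⟩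
  have h₂ := hnonneg (x₂ - δ) ⟨by linarith, by linarith⟩
  have hsnd := hz.snd_mem_Icc hb hG hG0 hbJ hδ hnonneg (left_mem_Icc.2 hδx)
  have h₁δ : 0 ≤ (z (x₁ + δ)).1 / δ := by positivity
  have h₂δ : 0 ≤ (z (x₂ - δ)).1 / δ := by positivity
  rw [mul_add, mul_one, ← div_eq_mul_inv, add_div]
  refine norm_prod_le_iff.2 ⟨?_, ?_⟩
  · rw [Real.norm_of_nonneg h₁]
    linarith
  · exact abs_le.2 ⟨by linarith [hsnd.1], by linarith [hsnd.2]⟩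

theorem exists_norm_le_of_forall_pos (hb : ∀ s t, IntervalIntegrable b volume s t)
    (hG : LipschitzWith K G) (hG0 : ∀ s ≤ 0, G s = 0) (hGnn : ∀ s, 0 ≤ G s) (hx₁ : 0 ≤ x₁)
    (hx₂ : x₂ ≤ T) (hbJ : ∀ᵐ t ∂volume.restrict (Icc x₁ x₂), 0 ≤ b t) {δ : ℝ} (hδ : 0 < δ)
    (hδx : x₁ + δ ≤ x₂ - δ) {k S : ℝ} (hk : 0 ≤ k) (hkG : ∀ s, 0 ≤ s → k * (s - S) ≤ G s)
    (hbk : 4 * (x₂ - x₁) / δ ^ 2 ≤ (∫ t in x₁ + δ..x₂ - δ, b t) * k) :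
    ∃ R, ∀ z, IsIntegralSol (newtonField b G) (Icc 0 T) z → (∀ t ∈ Icc 0 T, 0 < (z t).1) →
      ‖z 0‖ ≤ R := by
  obtain ⟨C, hC, hdist⟩ := (isCaratheodory_newtonField hb hG).exists_norm_sub_le 0 T
  refine ⟨C * (4 * (x₂ - x₁) * S / δ * (1 + δ⁻¹)), fun z hz hpos => ?_⟩
  have hJ : Icc x₁ x₂ ⊆ Icc 0 T := Icc_subset_Icc hx₁ hx₂
  have hzJ := hz.mono hJ
  have hposJ : ∀ t ∈ Icc x₁ x₂, 0 < (z t).1 := fun t ht => hpos t (hJ ht)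
  have hnorm : ‖z (x₁ + δ)‖ ≤ 4 * (x₂ - x₁) * S / δ * (1 + δ⁻¹) := calc
    ‖z (x₁ + δ)‖ ≤ ((z (x₁ + δ)).1 + (z (x₂ - δ)).1) * (1 + δ⁻¹) :=
      hzJ.norm_le_of_forall_nonneg hb hG.continuous hGnn hbJ hδ hδx fun t ht => (hposJ t ht).le
    _ ≤ _ := by
      gcongr
      exact hzJ.fst_add_fst_le hb hG.continuous hGnn hbJ hδ hδx hposJ hk hkG hbk
  have hdist0 := hdist z 0 0 (x₁ + δ) hz continuous_const ⟨by linarith, by linarith⟩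
    (fun t _ => by simp [newtonField, hG0]) 0 ⟨le_rfl, by linarith⟩
  simp only [Pi.zero_apply, sub_zero, add_zero] at hdist0
  exact hdist0.trans (by gcongr)

theorem exists_pos_integral_pos {f : ℝ → ℝ} (hf : ∀ s t, IntervalIntegrable f volume s t)
    (hx : x₁ ≤ x₂) (hpos : 0 < ∫ t in x₁..x₂, f t) :
    ∃ δ > 0, x₁ + δ ≤ x₂ - δ ∧ 0 < ∫ t in x₁ + δ..x₂ - δ, f t := by
  have hlt : x₁ < x₂ := hx.lt_of_ne fun h => by simp [h] at hpos
  have hF := intervalIntegral.continuous_primitive hf x₁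
  have hcont : Continuous fun δ => (∫ t in x₁..x₂ - δ, f t) - ∫ t in x₁..x₁ + δ, f t :=
    (hF.comp (continuous_const.sub continuous_id)).sub
      (hF.comp (continuous_const.add continuous_id))
  have hev : ∀ᶠ δ in nhdsWithin 0 (Ioi 0),
      0 < (∫ t in x₁..x₂ - δ, f t) - ∫ t in x₁..x₁ + δ, f t :=
    (hcont.continuousAt.eventually_const_lt (by simpa using hpos)).filter_mono nhdsWithin_le_nhds
  obtain ⟨δ, hδpos, hδ0, hδx⟩ :=
    (hev.and (Ioo_mem_nhdsGT (by linarith : (0 : ℝ) < (x₂ - x₁) / 2))).exists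
  refine ⟨δ, hδ0, by linarith, ?_⟩
  rwa [intervalIntegral.integral_interval_sub_left (hf _ _) (hf _ _)] at hδpos

theorem IsIntegralSol.forall_fst_pos (hb : ∀ s t, IntervalIntegrable b volume s t)
    (hG : LipschitzWith K G) (hG0 : ∀ s ≤ 0, G s = 0)
    (hz : IsIntegralSol (newtonField b G) (Icc 0 T) z) (hu₀ : 0 < (z 0).1)
    (hzT : 0 < (z T).1 ∨ 0 ≤ (z T).2) : ∀ t ∈ Icc 0 T, 0 < (z t).1 := by
  by_contra! h
  obtain ⟨hu, hq⟩ := hz.nonpos_of_exists_nonpos hb hG hG0 hu₀ h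
  exact hzT.elim hu.not_gt hq.not_ge

theorem exists_pos_periodic_of_forall_pos_norm_le (hb : ∀ s t, IntervalIntegrable b volume s t)
    (hG : LipschitzWith K G) (hG0 : ∀ s ≤ 0, G s = 0) (hGpos : ∀ s, 0 < s → 0 < G s)
    (hsmall : ∀ η : ℝ≥0, 0 < η → ∃ r > 0, LipschitzOnWith η G (Iic r)) (hT : 0 < T)
    (hneg : ∫ r in (0 : ℝ)..T, b r < 0) {R : ℝ}
    (hR : ∀ z, IsIntegralSol (newtonField b G) (Icc 0 T) z → (∀ t ∈ Icc 0 T, 0 < (z t).1) →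
      ‖z 0‖ ≤ R) :
    ∃ z, IsIntegralSol (newtonField b G) (Icc 0 T) z ∧ (∀ t ∈ Icc 0 T, 0 < (z t).1) ∧
      z 0 = z T := by
  obtain ⟨ε, hε, ρ, hρ, hερ⟩ := exists_small_data_behaviour hb hG hG0 hGpos hsmall hT hneg
  obtain ⟨Z, hZ, hZ₀, hZc⟩ := (isCaratheodory_newtonField hb hG).exists_flow (left_mem_Icc.2 hT.le)
  have hZT : Continuous fun x => Z x T := hZc T (right_mem_Icc.2 hT.le)
  have hZpos : ∀ x : ℝ × ℝ, 0 < x.1 → 0 < (Z x T).1 → ∀ t ∈ Icc 0 T, 0 < (Z x t).1 :=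
    fun x hx hxT => (hZ x).forall_fst_pos hb hG hG0 (by rwa [hZ₀]) (.inl hxT)
  have hfar : ∀ x : ℝ × ℝ, 0 < x.1 → R < ‖x‖ → (Z x T).1 ≤ 0 := fun x hx hRx => by
    by_contra! h
    exact hRx.not_ge (hZ₀ x ▸ hR _ (hZ x) (hZpos x hx h))
  have hleft : ∀ p, (|p| ≤ ρ → p < (Z (ε, p) T).2) ∧ (p = ρ → ε < (Z (ε, p) T).1) ∧
      (p < -ρ → (Z (ε, p) T).1 < ε) ∧ (ρ ≤ p → (Z (ε, p) T).1 = ε → (Z (ε, p) T).2 < p) :=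
    fun p => by simpa only [hZ₀, forall_const] using hερ _ (hZ (ε, p))
  set R₁ : ℝ := |R| + ε + ρ + 1
  have hR₁ : R < R₁ := by linarith [le_abs_self R]
  have hεR₁ : ε + ρ < R₁ := by linarith [abs_nonneg R]
  obtain ⟨x, hx, hfst, hsnd⟩ := exists_eq_zero_of_rectangle (f₁ := fun x => x.1 - (Z x T).1)
    (f₂ := fun x => x.2 - (Z x T).2) (by fun_prop) (by fun_prop) (c₀ := ε) (c₁ := R₁) (p₀ := -R₁)
    (m := ρ) (p₁ := R₁) (by linarith) (by linarith) (by linarith)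
    (fun x hx hside => by
      have hx₁ : 0 < x.1 := hε.trans_le hx.1.1
      have hnorm : R₁ ≤ max |x.1| |x.2| := by
        rcases hside with h | h | h <;> simp [h, le_abs_self]
      linarith [hfar x hx₁ (hR₁.trans_le hnorm)])
    (fun p hp h => by
      rcases lt_or_ge p (-ρ) with hlt | hge
      · linarith [(hleft p).2.2.1 hlt]
      · exact sub_neg.2 ((hleft p).1 (abs_le.2 ⟨hge, hp.2⟩)))
    (sub_neg.2 ((hleft ρ).2.1 rfl))
    fun p hp h => sub_pos.2 ((hleft p).2.2.2 hp.1 (sub_eq_zero.1 h).symm)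
  have hx₁ : 0 < x.1 := hε.trans_le hx.1.1
  refine ⟨Z x, hZ x, hZpos x hx₁ (sub_eq_zero.1 hfst ▸ hx₁), ?_⟩
  rw [hZ₀]
  exact Prod.ext (sub_eq_zero.1 hfst) (sub_eq_zero.1 hsnd)

theorem exists_pos_neumann_of_forall_pos_norm_le (hb : ∀ s t, IntervalIntegrable b volume s t)
    (hG : LipschitzWith K G) (hG0 : ∀ s ≤ 0, G s = 0) (hGpos : ∀ s, 0 < s → 0 < G s)
    (hsmall : ∀ η : ℝ≥0, 0 < η → ∃ r > 0, LipschitzOnWith η G (Iic r)) (hT : 0 < T)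
    (hneg : ∫ r in (0 : ℝ)..T, b r < 0) {R : ℝ}
    (hR : ∀ z, IsIntegralSol (newtonField b G) (Icc 0 T) z → (∀ t ∈ Icc 0 T, 0 < (z t).1) →
      ‖z 0‖ ≤ R) :
    ∃ z, IsIntegralSol (newtonField b G) (Icc 0 T) z ∧ (∀ t ∈ Icc 0 T, 0 < (z t).1) ∧
      (z 0).2 = 0 ∧ (z T).2 = 0 := by
  obtain ⟨ε, hε, ρ, hρ, hερ⟩ := exists_small_data_behaviour hb hG hG0 hGpos hsmall hT hneg
  obtain ⟨Z, hZ, hZ₀, hZc⟩ := (isCaratheodory_newtonField hb hG).exists_flow (left_mem_Icc.2 hT.le)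
  have hZT : Continuous fun x => Z x T := hZc T (right_mem_Icc.2 hT.le)
  have hZpos : ∀ c, 0 < c → 0 ≤ (Z (c, 0) T).2 → ∀ t ∈ Icc 0 T, 0 < (Z (c, 0) t).1 :=
    fun c hc hcT => (hZ _).forall_fst_pos hb hG hG0 (by rwa [hZ₀]) (.inr hcT)
  set R₁ : ℝ := |R| + ε + 1
  have hRR₁ : R < R₁ := by linarith [le_abs_self R]
  have hεR₁ : ε ≤ R₁ := by linarith [abs_nonneg R]
  have hqε : 0 ≤ (Z (ε, 0) T).2 := by
    have h := (hερ _ (hZ (ε, 0)) (by rw [hZ₀])).1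
    rw [hZ₀, abs_zero] at h
    exact (h hρ.le).le
  have hqR₁ : (Z (R₁, 0) T).2 ≤ 0 := by
    by_contra! h
    have hnorm := hR _ (hZ _) (hZpos R₁ (hε.trans_le hεR₁) h.le)
    rw [hZ₀] at hnorm
    exact hRR₁.not_ge (((le_abs_self R₁).trans (norm_fst_le (R₁, (0 : ℝ)))).trans hnorm)
  obtain ⟨c, hc, hcT⟩ := intermediate_value_Icc' hεR₁
    (f := fun c => (Z (c, 0) T).2) (by fun_prop) ⟨hqR₁, hqε⟩
  exact ⟨Z (c, 0), hZ _, hZpos c (hε.trans_le hc.1) hcT.ge, by rw [hZ₀], hcT⟩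

end NewtonField

section HalfLine

open scoped NNReal

variable {g g' : ℝ → ℝ} {c : ℝ}

theorem exists_lipschitzOnWith_Ici (hg : ∀ s ∈ Ici c, HasDerivWithinAt g (g' s) (Ici c) s)
    (hg' : ContinuousOn g' (Ici c)) {M : ℝ} (hM : ∀ᶠ s in atTop, |g' s| ≤ M) :
    ∃ K : ℝ≥0, LipschitzOnWith K g (Ici c) := by
  obtain ⟨B, hB⟩ := eventually_atTop.1 hM
  obtain ⟨C, hC⟩ := isCompact_Icc.exists_bound_of_continuousOn
    (hg'.mono (Icc_subset_Ici_self : Icc c B ⊆ Ici c))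
  refine ⟨(max C M).toNNReal, (convex_Ici c).lipschitzOnWith_of_nnnorm_hasDerivWithin_le hg
    fun s hs => ?_⟩
  rw [← NNReal.coe_le_coe, coe_nnnorm]
  refine le_trans ?_ (Real.le_coe_toNNReal _)
  rcases le_total s B with h | h
  · exact (hC s ⟨hs, h⟩).trans (le_max_left _ _)
  · exact (hB s h).trans (le_max_right _ _)

theorem exists_lipschitzOnWith_Icc (hg : ∀ s ∈ Ici c, HasDerivWithinAt g (g' s) (Ici c) s)
    (hg' : ContinuousWithinAt g' (Ici c) c) {η : ℝ≥0} (hη : ‖g' c‖₊ < η) :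
    ∃ r > c, LipschitzOnWith η g (Icc c r) := by
  obtain ⟨r, hr, hrη⟩ := mem_nhdsGE_iff_exists_Icc_subset.1 (hg'.nnnorm.eventually_lt_const hη)
  exact ⟨r, hr, (convex_Icc c r).lipschitzOnWith_of_nnnorm_hasDerivWithin_le
    (fun s hs => (hg s hs.1).mono Icc_subset_Ici_self) fun s hs => (hrη hs).le⟩

theorem exists_forall_mul_sub_le (hg : ∀ s ∈ Ici c, HasDerivWithinAt g (g' s) (Ici c) s)
    (hg0 : ∀ s ∈ Ici c, 0 ≤ g s) {k : ℝ} (hk : 0 ≤ k) (hkg' : ∀ᶠ s in atTop, k ≤ g' s) :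
    ∃ S, ∀ s ∈ Ici c, k * (s - S) ≤ g s := by
  obtain ⟨B, hB⟩ := eventually_atTop.1 (hkg'.and (eventually_ge_atTop c))
  have hBc : c ≤ B := (hB B le_rfl).2
  refine ⟨B, fun s hs => ?_⟩
  rcases le_total s B with h | h
  · exact (mul_nonpos_of_nonneg_of_nonpos hk (sub_nonpos.2 h)).trans (hg0 s hs)
  · have hmono : MonotoneOn (fun s => g s - k * s) (Ici B) :=
      monotoneOn_of_hasDerivWithinAt_nonneg (f' := fun s => g' s - k * 1) (convex_Ici B)
        (fun s hs => (((hg s (hBc.trans hs)).mono (Ici_subset_Ici.2 hBc)).sub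
          ((hasDerivWithinAt_id s _).const_mul k)).continuousWithinAt)
        (fun s hs => ((hg s (hBc.trans (interior_subset hs))).mono
          (interior_subset.trans (Ici_subset_Ici.2 hBc))).sub
          ((hasDerivWithinAt_id s _).const_mul k))
        fun s hs => by linarith [(hB s (interior_subset hs)).1]
    have := hmono self_mem_Ici h h
    simp only at this
    linarith [hg0 B hBc]

theorem lipschitzOnWith_comp_max {K : ℝ≥0} {s t : Set ℝ} (hg : LipschitzOnWith K g t)
    (hst : MapsTo (fun x => max x c) s t) : LipschitzOnWith K (fun x => g (max x c)) s := by
  have h := hg.comp (LipschitzWith.id.max_const c).lipschitzOnWith hst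
  rwa [mul_one] at h

theorem exists_pos_eventually_mem_Icc
    (hinf : (0 : EReal) < liminf (fun s => (g s : EReal)) atTop)
    (hsup : limsup (fun s => (g s : EReal)) atTop < ⊤) :
    ∃ k > 0, ∃ M, ∀ᶠ s in atTop, g s ∈ Icc k M := by
  obtain ⟨k, hk, hkinf⟩ := EReal.lt_iff_exists_real_btwn.1 hinf
  obtain ⟨M, hsupM, -⟩ := EReal.lt_iff_exists_real_btwn.1 hsup
  refine ⟨k, EReal.coe_pos.1 hk, M, ?_⟩
  filter_upwards [eventually_lt_of_lt_liminf hkinf, eventually_lt_of_limsup_lt hsupM] with s h₁ h₂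
  exact ⟨(EReal.coe_lt_coe_iff.1 h₁).le, (EReal.coe_lt_coe_iff.1 h₂).le⟩

end HalfLine

section Solutions

variable {T : ℝ} {a₁ a₂ g₁ g₂ : ℝ → ℝ}

theorem IsSolOn.congr {f₁ f₂ u u' : ℝ → ℝ} (h : IsSolOn T f₁ u u') (hf : EqOn f₁ f₂ (Icc 0 T)) :
    IsSolOn T f₂ u u' :=
  ⟨h.1, h.2.1, fun x hx => (h.2.2 x hx).trans <| congrArg (u' 0 - ·) <|
    intervalIntegral.integral_congr <|
      hf.mono (uIcc_subset_Icc (left_mem_Icc.2 (hx.1.trans hx.2)) hx)⟩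

theorem PosSolNeumann.congr (h : PosSolNeumann T a₁ g₁) (ha : EqOn a₁ a₂ (Icc 0 T))
    (hg : EqOn g₁ g₂ (Ioi 0)) : PosSolNeumann T a₂ g₂ :=
  let ⟨u, u', hu, hpos, hbc⟩ := h
  ⟨u, u', hu.congr fun t ht => congrArg₂ _ (ha ht) (hg (hpos t ht)), hpos, hbc⟩

theorem PosSolPeriodic.congr (h : PosSolPeriodic T a₁ g₁) (ha : EqOn a₁ a₂ (Icc 0 T))
    (hg : EqOn g₁ g₂ (Ioi 0)) : PosSolPeriodic T a₂ g₂ :=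
  let ⟨u, u', hu, hpos, hbc⟩ := h
  ⟨u, u', hu.congr fun t ht => congrArg₂ _ (ha ht) (hg (hpos t ht)), hpos, hbc⟩

theorem IsIntegralSol.isSolOn {b G : ℝ → ℝ} {z : ℝ → ℝ × ℝ}
    (hb : ∀ s t, IntervalIntegrable b volume s t) (hG : Continuous G)
    (hz : IsIntegralSol (newtonField b G) (Icc 0 T) z) :
    IsSolOn T (fun t => b t * G (z t).1) (fun t => (z t).1) fun t => (z t).2 :=
  ⟨fun t ht => hz.hasDerivWithinAt_fst hb hG ht, hz.continuous.snd.continuousOn, fun t ht => by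
    linarith [hz.snd_sub hb hG (left_mem_Icc.2 (ht.1.trans ht.2)) ht]⟩

end Solutions

section Existence

open scoped NNReal

theorem exists_forall_lt_posSol_of_lipschitzWith {T x₁ x₂ : ℝ} {a G : ℝ → ℝ} {K : ℝ≥0}
    (ha : ∀ s t, IntervalIntegrable a volume s t) (hG : LipschitzWith K G)
    (hG0 : ∀ s ≤ 0, G s = 0) (hGpos : ∀ s, 0 < s → 0 < G s)
    (hsmall : ∀ η : ℝ≥0, 0 < η → ∃ r > 0, LipschitzOnWith η G (Iic r)) {k S : ℝ} (hk : 0 < k)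
    (hkG : ∀ s, 0 ≤ s → k * (s - S) ≤ G s) (hT : 0 < T) (hx₁ : 0 ≤ x₁) (hx : x₁ ≤ x₂)
    (hx₂ : x₂ ≤ T) (haJ : ∀ᵐ t ∂volume.restrict (Icc x₁ x₂), 0 ≤ a t)
    (hneg : ∫ t in (0 : ℝ)..T, a t < 0) (hpos : 0 < ∫ t in x₁..x₂, a t) :
    ∃ νs > 0, ∀ ν > νs,
      PosSolNeumann T (fun t => ν * a t) G ∧ PosSolPeriodic T (fun t => ν * a t) G := by
  obtain ⟨δ, hδ, hδx, hδa⟩ := exists_pos_integral_pos ha hx hpos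
  have hL : 0 < x₂ - x₁ := by linarith
  refine ⟨4 * (x₂ - x₁) / δ ^ 2 / ((∫ t in x₁ + δ..x₂ - δ, a t) * k), by positivity,
    fun ν hν => ?_⟩
  have hν0 : 0 < ν := lt_trans (by positivity) hν
  have hGnn : ∀ s, 0 ≤ G s := fun s =>
    (le_or_gt s 0).elim (fun h => (hG0 s h).ge) fun h => (hGpos s h).le
  have hb : ∀ s t, IntervalIntegrable (fun r => ν * a r) volume s t := fun s t =>
    (ha s t).const_mul ν
  have hbneg : ∫ t in (0 : ℝ)..T, ν * a t < 0 := by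
    rw [intervalIntegral.integral_const_mul]
    exact mul_neg_of_pos_of_neg hν0 hneg
  have hbk : 4 * (x₂ - x₁) / δ ^ 2 ≤ (∫ t in x₁ + δ..x₂ - δ, ν * a t) * k := by
    rw [intervalIntegral.integral_const_mul, mul_assoc]
    exact ((div_lt_iff₀ (by positivity)).1 hν).le
  obtain ⟨R, hR⟩ := exists_norm_le_of_forall_pos hb hG hG0 hGnn hx₁ hx₂
    (haJ.mono fun t ht => mul_nonneg hν0.le ht) hδ hδx hk.le hkG hbk
  obtain ⟨z, hz, hzpos, hz0, hzT⟩ :=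
    exists_pos_neumann_of_forall_pos_norm_le hb hG hG0 hGpos hsmall hT hbneg hR
  obtain ⟨w, hw, hwpos, hwT⟩ :=
    exists_pos_periodic_of_forall_pos_norm_le hb hG hG0 hGpos hsmall hT hbneg hR
  exact ⟨⟨_, _, hz.isSolOn hb hG.continuous, hzpos, hz0, hzT⟩,
    ⟨_, _, hw.isSolOn hb hG.continuous, hwpos, congrArg Prod.fst hwT, congrArg Prod.snd hwT⟩⟩

end Existence

theorem statement_9_general
    (T : ℝ) (hT : 0 < T)
    (a : ℝ → ℝ) (ha : IntervalIntegrable a volume 0 T)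
    (x₁ x₂ : ℝ) (hx₁ : 0 ≤ x₁) (hx : x₁ ≤ x₂) (hx₂ : x₂ ≤ T)
    (haJ : ∀ᵐ x ∂(volume.restrict (Icc x₁ x₂)), 0 ≤ a x)
    (hneg : (∫ x in (0 : ℝ)..T, a x) < 0) (hpos : 0 < ∫ x in x₁..x₂, a x)
    (g : ℝ → ℝ) (hg0 : g 0 = 0) (hgpos : ∀ s, 0 < s → 0 < g s)
    (hg : ∃ K, LipschitzOnWith K g (Ici 0))
    (hgsmall : ∀ η, 0 < η → ∃ r > 0, LipschitzOnWith η g (Icc 0 r))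
    (hglarge : ∃ k > 0, ∃ S, ∀ s ∈ Ici 0, k * (s - S) ≤ g s) :
    ∃ νs : ℝ, 0 < νs ∧ ∀ ν : ℝ, νs < ν →
      PosSolNeumann T (fun t => ν * a t) g ∧ PosSolPeriodic T (fun t => ν * a t) g := by
  obtain ⟨K, hK⟩ := hg
  obtain ⟨k, hk, S, hkS⟩ := hglarge
  have hJ : Icc x₁ x₂ ⊆ Icc 0 T := Icc_subset_Icc hx₁ hx₂
  set A : ℝ → ℝ := (Icc 0 T).indicator a
  have hAa : EqOn A a (Icc 0 T) := fun t ht => indicator_of_mem ht a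
  have hA : ∀ s t, IntervalIntegrable A volume s t := fun s t =>
    (((intervalIntegrable_iff_integrableOn_Icc_of_le hT.le).1 ha).integrable_indicator
      measurableSet_Icc).intervalIntegrable
  have hAint : ∀ s ∈ Icc 0 T, ∀ t ∈ Icc 0 T, ∫ x in s..t, A x = ∫ x in s..t, a x :=
    fun s hs t ht => intervalIntegral.integral_congr (hAa.mono (uIcc_subset_Icc hs ht))
  have hAJ : ∀ᵐ x ∂(volume.restrict (Icc x₁ x₂)), 0 ≤ A x := by
    filter_upwards [haJ, ae_restrict_mem measurableSet_Icc] with t hat ht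
    rwa [hAa (hJ ht)]
  set G : ℝ → ℝ := fun s => g (max s 0)
  have hGg : EqOn G g (Ioi 0) := fun s hs => by simp only [G, max_eq_left (mem_Ioi.1 hs).le]
  have hG : LipschitzWith K G := lipschitzOnWith_univ.1 <|
    lipschitzOnWith_comp_max hK fun s _ => le_max_right s 0
  obtain ⟨νs, hνs, h⟩ := exists_forall_lt_posSol_of_lipschitzWith hA hG
    (fun s hs => by simp only [G, max_eq_right hs, hg0])
    (fun s hs => (hgpos s hs).trans_eq (hGg hs).symm)
    (fun η hη => let ⟨r, hr, hgr⟩ := hgsmall η hη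
      ⟨r, hr, lipschitzOnWith_comp_max hgr fun s (hs : s ≤ r) =>
        show max s 0 ∈ Icc 0 r from ⟨le_max_right s 0, max_le hs hr.le⟩⟩)
    hk (S := S) (fun s hs => by simpa only [G, max_eq_left hs] using hkS s hs) hT hx₁ hx hx₂ hAJ
    (by rwa [hAint 0 (left_mem_Icc.2 hT.le) T (right_mem_Icc.2 hT.le)])
    (by rwa [hAint x₁ (hJ (left_mem_Icc.2 hx)) x₂ (hJ (right_mem_Icc.2 hx))])
  have hνA : ∀ ν, EqOn (fun t => ν * A t) (fun t => ν * a t) (Icc 0 T) := fun ν t ht =>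
    congrArg (ν * ·) (hAa ht)
  exact ⟨νs, hνs, fun ν hν => (h ν hν).imp (·.congr (hνA ν) hGg) (·.congr (hνA ν) hGg)⟩

/-- Theorem: if `a ≥ 0` a.e. on a closed interval `J = [x₁,x₂] ⊆ [0,T]` with
`∫₀ᵀ a < 0 < ∫_J a`, and `g` is continuously differentiable on `[0,∞)` with
`g(0) = 0`, `g > 0` on `(0,∞)`, `g'(0) = 0` and
`0 < liminf_{s→+∞} g'(s) ≤ limsup_{s→+∞} g'(s) < +∞`, then for every
sufficiently large `ν` the equation `u'' + ν a(x) g(u) = 0` has a positive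
Neumann solution and a positive periodic solution. -/
theorem statement_9
    (T : ℝ) (hT : 0 < T)
    (a : ℝ → ℝ) (ha : IntervalIntegrable a volume 0 T)
    (x₁ x₂ : ℝ) (hx1 : 0 ≤ x₁) (hx12 : x₁ ≤ x₂) (hx2 : x₂ ≤ T)
    (haJ : ∀ᵐ x ∂(volume.restrict (Icc x₁ x₂)), 0 ≤ a x)
    (ha2 : (∫ x in (0:ℝ)..T, a x) < 0)
    (haJpos : 0 < ∫ x in x₁..x₂, a x)
    (g g' : ℝ → ℝ)
    (hg0 : g 0 = 0) (hgpos : ∀ s : ℝ, 0 < s → 0 < g s)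
    (hgd : ∀ s ∈ Ici (0:ℝ), HasDerivWithinAt g (g' s) (Ici (0:ℝ)) s)
    (hgdc : ContinuousOn g' (Ici (0:ℝ)))
    (hgd0 : g' 0 = 0)
    (hinf : (0 : EReal) < liminf (fun s : ℝ => ((g' s : ℝ) : EReal)) atTop)
    (hsup : limsup (fun s : ℝ => ((g' s : ℝ) : EReal)) atTop < ⊤) :
    ∃ νs : ℝ, 0 < νs ∧ ∀ ν : ℝ, νs < ν →
      PosSolNeumann T (fun t => ν * a t) g ∧ PosSolPeriodic T (fun t => ν * a t) g := by
  obtain ⟨k, hk, M, hkM⟩ := exists_pos_eventually_mem_Icc hinf hsup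
  exact statement_9_general T hT a ha x₁ x₂ hx1 hx12 hx2 haJ ha2 haJpos g hg0 hgpos
    (exists_lipschitzOnWith_Ici hgd hgdc
      (hkM.mono fun s hs => abs_le.2 ⟨by linarith [hs.1, hs.2], hs.2⟩))
    (fun η hη => exists_lipschitzOnWith_Icc hgd (hgdc 0 self_mem_Ici) (by simpa [hgd0] using hη))
    ⟨k, hk, exists_forall_mul_sub_le hgd
      (fun s hs => (eq_or_lt_of_le hs).elim (fun h => by rw [← h, hg0]) fun h => (hgpos s h).le)
      hk.le (hkM.mono fun s hs => hs.1)⟩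
end

section
/- Let N ≥ 2 be an integer, 0 < R₁ < R₂, and let Q : [R₁,R₂] → ℝ be continuous satisfying (q1) and (q2). Let g satisfy (g1), be regularly oscillating at zero, and satisfy lim_{s→0⁺} g(s)/s = 0 and lim_{s→+∞} g(s)/s = +∞. Then there exists a C² function w : [R₁,R₂] → ℝ with w(r) > 0 for all r ∈ [R₁,R₂], w''(r) + ((N−1)/r) w'(r) + Q(r) g(w(r)) = 0 for all r ∈ [R₁,R₂], and w'(R₁) = w'(R₂) = 0; that is, the Neumann problem −Δu = Q(‖x‖) g(u) on the annulus {x ∈ ℝᴺ : R₁ < ‖x‖ < R₂} has at least one positive radially symmetric solution u(x) = w(‖x‖). -/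
open MeasureTheory Set Filter

/-- The Neumann problem for the radial equation
`w'' + ((N−1)/r) w' + Q(r) g(w) = 0` on `[R₁,R₂]` has a positive `C²` solution,
i.e. the Neumann problem `−Δu = Q(‖x‖) g(u)` on the annulus has a positive
radially symmetric solution `u(x) = w(‖x‖)`. -/
def RadialNeumannPosSol (N : ℕ) (R₁ R₂ : ℝ) (Q g : ℝ → ℝ) : Prop :=
  ∃ w w' w'' : ℝ → ℝ,
    (∀ r ∈ Icc R₁ R₂, HasDerivWithinAt w (w' r) (Icc R₁ R₂) r) ∧
    (∀ r ∈ Icc R₁ R₂, HasDerivWithinAt w' (w'' r) (Icc R₁ R₂) r) ∧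
    ContinuousOn w'' (Icc R₁ R₂) ∧
    (∀ r ∈ Icc R₁ R₂, 0 < w r) ∧
    (∀ r ∈ Icc R₁ R₂, w'' r + (((N : ℝ) - 1) / r) * w' r + Q r * g (w r) = 0) ∧
    w' R₁ = 0 ∧ w' R₂ = 0

/-- Condition (q1): there are `m ≥ 1` pairwise disjoint closed intervals in
`[R₁,R₂]` on which `Q ≥ 0` with `max Q > 0`, while `Q ≤ 0` outside them. -/
def CondQ1 (R₁ R₂ : ℝ) (Q : ℝ → ℝ) : Prop :=
  ∃ (m : ℕ) (σ τ : Fin m → ℝ), 0 < m ∧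
    (∀ i, R₁ ≤ σ i ∧ σ i ≤ τ i ∧ τ i ≤ R₂) ∧
    (Pairwise fun i j => Disjoint (Icc (σ i) (τ i)) (Icc (σ j) (τ j))) ∧
    (∀ i, ∀ r ∈ Icc (σ i) (τ i), 0 ≤ Q r) ∧
    (∀ i, ∃ r ∈ Icc (σ i) (τ i), 0 < Q r) ∧
    (∀ r ∈ Icc R₁ R₂ \ ⋃ i, Icc (σ i) (τ i), Q r ≤ 0)

/-- Condition (g1): `g : [0,∞) → [0,∞)` is continuous, `g 0 = 0`, `g > 0` on `(0,∞)`. -/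
def CondG1 (g : ℝ → ℝ) : Prop :=
  ContinuousOn g (Ici (0:ℝ)) ∧ (∀ s : ℝ, 0 ≤ s → 0 ≤ g s) ∧ g 0 = 0 ∧
    ∀ s : ℝ, 0 < s → 0 < g s

/-- `g` is regularly oscillating at zero. -/
def RegOscAtZero (g : ℝ → ℝ) : Prop :=
  ∀ ε : ℝ, 0 < ε → ∃ δ > (0:ℝ), ∃ η > (0:ℝ), ∀ s ω : ℝ,
    0 < s → s < δ → |ω - 1| < η → |g (ω * s) / g s - 1| < ε

/-- `liminf_{s → +∞} g(s)/s`, computed in `EReal`. -/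
noncomputable def GrowthLiminf (g : ℝ → ℝ) : EReal :=
  liminf (fun s : ℝ => ((g s / s : ℝ) : EReal)) atTop

/-- `limsup_{s → +∞} g(s)/s`, computed in `EReal`. -/
noncomputable def GrowthLimsup (g : ℝ → ℝ) : EReal :=
  limsup (fun s : ℝ => ((g s / s : ℝ) : EReal)) atTop

/-!
Write the equation as the system `w' = r^(1-N) v`, `v' = -r^(N-1) Q g(w)` and shoot from
`w(R₁) = c`, `v(R₁) = 0`, looking for `c` with `v(R₂) = 0`. As `g` is only continuous, solutions
need not be unique; Tonelli's approximate solutions nevertheless depend continuously on `c`, so the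
intermediate value theorem applies to them, and a compactness argument passes to the limit.

For small `c`, `g(s)/s → 0` keeps `w` close to `c` and regular oscillation keeps `g(w)` close to
`g(c)`, so that `v(R₂) ≈ -g(c) ∫ r^(N-1) Q > 0`. For large `c`, suppose `v(R₂) ≥ 0`. Then `w ≥ 0`,
because where `w` is negative `v` is constant and `w` is monotone. On an interval where `Q ≥ 0`, `w`
is concave in the variable `∫ r^(1-N)`, hence large on a whole subinterval as soon as it is large
somewhere; there superlinearity would make `v` vary more than `w ≥ 0` permits. So `w ≤ M` on the
positivity intervals, with `M` independent of the solution. Off those intervals `v` is monotone,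
which from `v(R₁) = 0` propagates the bound to `w(R₁) = c`, a contradiction for `c > M`. Since these
bounds also confine the solution found by shooting, `g` may be truncated to have linear growth.
-/

open scoped Topology Interval NNReal

section Tonelli

variable {E : Type*} [NormedAddCommGroup E] [NormedSpace ℝ E]
  {f : ℝ → E → E} {a b δ L : ℝ} {k n : ℕ} {c : E} {t : ℝ}

/-- The `k`-th iterate of the delayed Picard map `y ↦ c + ∫ₐᵗ f s (y (s - δ)) ds`, where `y` is
extended to the left of `a` by the constant `y a`, started at the constant `c`. -/
noncomputable def tonelliIter (f : ℝ → E → E) (a δ : ℝ) : ℕ → E → ℝ → E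
  | 0, c => fun _ => c
  | k + 1, c => ODE.picard f a c fun s => tonelliIter f a δ k c (max a (s - δ))

/-- Tonelli's approximate solution on `[a, b]` of `x' = f t x`, `x a = c`: it solves the delay
equation `y' t = f t (y (t - δ))` with `δ = (b - a) / (n + 1)`. -/
noncomputable def tonelli (f : ℝ → E → E) (a b : ℝ) (n : ℕ) : E → ℝ → E :=
  tonelliIter f a ((b - a) / (n + 1)) (n + 1)

lemma continuous_tonelliIter (hf : Continuous ↿f) :
    ∀ k, Continuous ↿(tonelliIter f a δ k)
  | 0 => continuous_fst
  | k + 1 => by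
    have ih := continuous_tonelliIter hf k
    have hdelay : Continuous fun q : (E × ℝ) × ℝ =>
        f q.2 (tonelliIter f a δ k q.1.1 (max a (q.2 - δ))) :=
      hf.comp (continuous_snd.prodMk (ih.comp (by fun_prop :
        Continuous fun q : (E × ℝ) × ℝ => (q.1.1, max a (q.2 - δ)))))
    exact continuous_fst.add
      (intervalIntegral.continuous_parametric_intervalIntegral_of_continuous hdelay continuous_snd)

lemma continuous_tonelli (hf : Continuous ↿f) : Continuous ↿(tonelli f a b n) :=
  continuous_tonelliIter hf (n + 1)

lemma tonelliIter_succ_eqOn (hδ : 0 ≤ δ) (k : ℕ) (c : E) :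
    EqOn (tonelliIter f a δ (k + 1) c) (tonelliIter f a δ k c) (Icc a (a + k * δ)) := by
  induction k with
  | zero =>
    rintro t ⟨hat, hta⟩
    obtain rfl : t = a := le_antisymm (by simpa using hta) hat
    exact ODE.picard_apply₀
  | succ k ih =>
    rintro t ⟨hat, hta⟩
    refine congrArg (c + ·) (intervalIntegral.integral_congr fun s hs => ?_)
    rw [uIcc_of_le hat] at hs
    refine congrArg (f s) (ih ⟨le_max_left _ _, max_le ?_ ?_⟩)
    · exact le_add_of_nonneg_right (by positivity)
    · push_cast at hta
      linarith [hs.2]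

lemma tonelli_left : tonelli f a b n c a = c := ODE.picard_apply₀

lemma max_delay_mem_Icc (hδ : 0 ≤ δ) (ht : t ∈ Icc a b) : max a (t - δ) ∈ Icc a t :=
  ⟨le_max_left _ _, max_le ht.1 (sub_le_self _ hδ)⟩

lemma tonelli_eq_picard (ht : t ∈ Icc a b) :
    tonelli f a b n c t =
      ODE.picard f a c (fun s => tonelli f a b n c (max a (s - (b - a) / (n + 1)))) t := by
  have hδ : 0 ≤ (b - a) / (n + 1) := div_nonneg (sub_nonneg.2 (ht.1.trans ht.2)) (by positivity)
  have hb : a + (n + 1 : ℕ) * ((b - a) / (n + 1)) = b := by push_cast; field_simp; ring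
  have hstab := tonelliIter_succ_eqOn (f := f) (a := a) hδ (n + 1) c
  rw [hb] at hstab
  exact (hstab ht).symm

variable [CompleteSpace E]

lemma hasDerivWithinAt_tonelliIter_succ (hf : Continuous ↿f) (ht : t ∈ Icc a b) :
    HasDerivWithinAt (tonelliIter f a δ (k + 1) c)
      (f t (tonelliIter f a δ k c (max a (t - δ)))) (Icc a b) t := by
  have hdelay : Continuous fun s => tonelliIter f a δ k c (max a (s - δ)) :=
    (continuous_tonelliIter hf k).comp (by fun_prop : Continuous fun s => (c, max a (s - δ)))
  exact ODE.hasDerivWithinAt_picard_Icc (u := univ) (left_mem_Icc.2 (ht.1.trans ht.2))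
    hf.continuousOn hdelay.continuousOn (fun _ _ => mem_univ _) c ht

lemma one_add_norm_tonelliIter_le (hf : Continuous ↿f) (hfL : ∀ t x, ‖f t x‖ ≤ L * (1 + ‖x‖))
    (hδ : 0 ≤ δ) (k : ℕ) (c : E) (hat : a ≤ t) :
    1 + ‖tonelliIter f a δ k c t‖ ≤ (1 + ‖c‖) * Real.exp (L * (t - a)) := by
  have hL : 0 ≤ L := by simpa using (norm_nonneg _).trans (hfL 0 0)
  induction k generalizing t with
  | zero =>
    exact le_mul_of_one_le_right (by positivity)
      (Real.one_le_exp (mul_nonneg hL (sub_nonneg.2 hat)))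
  | succ k ih =>
    have hderiv (s : ℝ) (hs : s ∈ Icc a t) :=
      hasDerivWithinAt_tonelliIter_succ (δ := δ) (k := k) (c := c) hf hs
    have hB (s : ℝ) : HasDerivAt (fun s => (1 + ‖c‖) * Real.exp (L * (s - a)) - 1)
        (L * ((1 + ‖c‖) * Real.exp (L * (s - a)))) s := by
      convert! ((((hasDerivAt_id s).sub_const a).const_mul L).exp.const_mul (1 + ‖c‖)).sub_const 1
        using 1
      simp only [id, mul_one]
      ring
    have hslope (s : ℝ) (hs : s ∈ Ico a t) :
        ‖f s (tonelliIter f a δ k c (max a (s - δ)))‖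
          ≤ L * ((1 + ‖c‖) * Real.exp (L * (s - a))) := by
      have hdelay := max_delay_mem_Icc hδ (Ico_subset_Icc_self hs)
      refine (hfL _ _).trans (mul_le_mul_of_nonneg_left ((ih hdelay.1).trans ?_) hL)
      gcongr
      exact hdelay.2
    have hbound := image_norm_le_of_norm_deriv_right_le_deriv_boundary
      (HasDerivWithinAt.continuousOn hderiv)
      (fun s hs => (hderiv s (Ico_subset_Icc_self hs)).mono_of_mem_nhdsWithin
        (Icc_mem_nhdsGE_of_mem hs))
      (by simp [tonelliIter]) hB hslope (right_mem_Icc.2 hat)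
    linarith

lemma one_add_norm_tonelli_le (hf : Continuous ↿f) (hfL : ∀ t x, ‖f t x‖ ≤ L * (1 + ‖x‖))
    (ht : t ∈ Icc a b) :
    1 + ‖tonelli f a b n c t‖ ≤ (1 + ‖c‖) * Real.exp (L * (b - a)) := by
  have hL : 0 ≤ L := by simpa using (norm_nonneg _).trans (hfL 0 0)
  have hδ : 0 ≤ (b - a) / (n + 1) := div_nonneg (sub_nonneg.2 (ht.1.trans ht.2)) (by positivity)
  refine (one_add_norm_tonelliIter_le hf hfL hδ _ c ht.1).trans ?_
  gcongr
  exact ht.2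

lemma lipschitzOnWith_tonelli (hf : Continuous ↿f) (hfL : ∀ t x, ‖f t x‖ ≤ L * (1 + ‖x‖))
    {K : ℝ≥0} (hK : L * ((1 + ‖c‖) * Real.exp (L * (b - a))) ≤ K) :
    LipschitzOnWith K (tonelli f a b n c) (Icc a b) := by
  have hL : 0 ≤ L := by simpa using (norm_nonneg _).trans (hfL 0 0)
  refine (convex_Icc a b).lipschitzOnWith_of_nnnorm_hasDerivWithin_le
    (fun t ht => hasDerivWithinAt_tonelliIter_succ hf ht) fun t ht => ?_
  have hδ : 0 ≤ (b - a) / (n + 1) := div_nonneg (sub_nonneg.2 (ht.1.trans ht.2)) (by positivity)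
  have hdelay := max_delay_mem_Icc hδ ht
  refine (hfL _ _).trans <| le_trans ?_ hK
  gcongr
  refine (one_add_norm_tonelliIter_le hf hfL hδ n c hdelay.1).trans ?_
  gcongr
  exact hdelay.2.trans ht.2

end Tonelli

section Shooting

variable {E : Type*} [NormedAddCommGroup E] [NormedSpace ℝ E] {f : ℝ → E → E} {a b L : ℝ}

lemma exists_subseq_tendstoUniformlyOn {X Y : Type*} [PseudoMetricSpace X] [MetricSpace Y]
    [Nonempty Y] {S : Set X} (hS : IsCompact S) {T : Set Y} (hT : IsCompact T) {K : ℝ≥0}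
    {y : ℕ → X → Y} (hy : ∀ n, LipschitzOnWith K (y n) S) (hyT : ∀ n, MapsTo (y n) S T) :
    ∃ (x : X → Y) (φ : ℕ → ℕ), StrictMono φ ∧
      TendstoUniformlyOn (fun n => y (φ n)) x atTop S := by
  have : CompactSpace S := isCompact_iff_compactSpace.1 hS
  let z (n : ℕ) : BoundedContinuousFunction S Y :=
    BoundedContinuousFunction.mkOfCompact ⟨S.domRestrict (y n), (hy n).continuousOn.domRestrict⟩
  have hequi : Equicontinuous ((↑) : range z → S → Y) := by
    refine (LipschitzWith.uniformEquicontinuous _ K ?_).equicontinuous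
    rintro ⟨_, n, rfl⟩
    exact lipschitzOnWith_iff_restrict.1 (hy n)
  have hcompact := BoundedContinuousFunction.arzela_ascoli T hT (range z)
    (by rintro _ p ⟨n, rfl⟩; exact hyT n p.2) hequi
  obtain ⟨x, -, φ, hφ, hlim⟩ := hcompact.tendsto_subseq fun n => subset_closure (mem_range_self n)
  refine ⟨Function.extend (↑) x fun _ => Classical.arbitrary Y, φ, hφ, ?_⟩
  rw [tendstoUniformlyOn_iff_tendstoUniformly_comp_coe, Function.extend_comp Subtype.val_injective]
  exact BoundedContinuousFunction.tendsto_iff_tendstoUniformly.1 hlim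

lemma tendsto_max_delay {φ : ℕ → ℕ} (hφ : Tendsto φ atTop atTop) {s : ℝ} (hs : s ∈ Icc a b) :
    Tendsto (fun n => max a (s - (b - a) / (φ n + 1))) atTop (𝓝[Icc a b] s) := by
  refine tendsto_nhdsWithin_iff.2 ⟨?_, .of_forall fun n => ?_⟩
  · have hδ : Tendsto (fun n : ℕ => (b - a) / ((n : ℝ) + 1)) atTop (𝓝 0) :=
      tendsto_const_nhds.div_atTop (tendsto_natCast_atTop_atTop.atTop_add tendsto_const_nhds)
    simpa [hs.1] using tendsto_const_nhds (x := a).max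
      ((tendsto_const_nhds (x := s)).sub (hδ.comp hφ))
  · have hδ : 0 ≤ (b - a) / ((φ n : ℝ) + 1) :=
      div_nonneg (sub_nonneg.2 (hs.1.trans hs.2)) (by positivity)
    exact Icc_subset_Icc_right hs.2 (max_delay_mem_Icc hδ hs)

lemma continuousOn_of_tendstoUniformlyOn_tonelli (hf : Continuous ↿f) {φ : ℕ → ℕ} {c : ℕ → E}
    {x : ℝ → E} (hx : TendstoUniformlyOn (fun n => tonelli f a b (φ n) (c n)) x atTop (Icc a b)) :
    ContinuousOn x (Icc a b) :=
  hx.continuousOn <| .of_forall fun n =>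
    ((continuous_tonelli hf).comp (Continuous.prodMk_right (c n))).continuousOn

lemma eqOn_picard_of_tendstoUniformlyOn_tonelli [CompleteSpace E] (hf : Continuous ↿f)
    (hfL : ∀ t x, ‖f t x‖ ≤ L * (1 + ‖x‖)) {φ : ℕ → ℕ} (hφ : Tendsto φ atTop atTop)
    {c : ℕ → E} {R : ℝ} (hc : ∀ n, ‖c n‖ ≤ R) {x : ℝ → E}
    (hx : TendstoUniformlyOn (fun n => tonelli f a b (φ n) (c n)) x atTop (Icc a b)) :
    EqOn x (ODE.picard f a (x a) x) (Icc a b) := by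
  intro t ht
  have hab : a ≤ b := ht.1.trans ht.2
  have hL : 0 ≤ L := by simpa using (norm_nonneg _).trans (hfL 0 0)
  have hδ (n : ℕ) : 0 ≤ (b - a) / ((φ n : ℝ) + 1) :=
    div_nonneg (sub_nonneg.2 hab) (by positivity)
  have hsub : Ι a t ⊆ Icc a b := by
    rw [uIoc_of_le ht.1]
    exact Ioc_subset_Icc_self.trans (Icc_subset_Icc_right ht.2)
  refine tendsto_nhds_unique (hx.tendsto_at ht) ?_
  simp only [tonelli_eq_picard ht, ODE.picard_apply]
  refine .add (by simpa only [tonelli_left] using hx.tendsto_at (left_mem_Icc.2 hab)) ?_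
  refine intervalIntegral.tendsto_integral_filter_of_dominated_convergence
    (fun _ => L * ((1 + R) * Real.exp (L * (b - a)))) (.of_forall fun n => ?_)
    (.of_forall fun n => .of_forall fun s hs => ?_) intervalIntegrable_const
    (.of_forall fun s hs => ?_)
  · exact (hf.comp (continuous_id.prodMk ((continuous_tonelli hf).comp
      (by fun_prop : Continuous fun s =>
        (c n, max a (s - (b - a) / (φ n + 1))))))).aestronglyMeasurable
  · have hdelay := Icc_subset_Icc_right (hsub hs).2 (max_delay_mem_Icc (hδ n) (hsub hs))
    refine (hfL _ _).trans (mul_le_mul_of_nonneg_left ?_ hL)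
    exact (one_add_norm_tonelli_le hf hfL hdelay).trans (by gcongr; exact hc n)
  · have hxs := continuousOn_of_tendstoUniformlyOn_tonelli hf hx s (hsub hs)
    exact (hf.uncurry_left s).continuousAt.tendsto.comp
      (hx.tendsto_comp hxs (tendsto_max_delay hφ (hsub hs)))

lemma isIntegralCurveOn_of_tendstoUniformlyOn_tonelli [CompleteSpace E] (hf : Continuous ↿f)
    (hfL : ∀ t x, ‖f t x‖ ≤ L * (1 + ‖x‖)) {φ : ℕ → ℕ} (hφ : Tendsto φ atTop atTop)
    {c : ℕ → E} {R : ℝ} (hc : ∀ n, ‖c n‖ ≤ R) {x : ℝ → E}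
    (hx : TendstoUniformlyOn (fun n => tonelli f a b (φ n) (c n)) x atTop (Icc a b)) :
    IsIntegralCurveOn x f (Icc a b) := by
  have hpicard := eqOn_picard_of_tendstoUniformlyOn_tonelli hf hfL hφ hc hx
  intro t ht
  exact (ODE.hasDerivWithinAt_picard_Icc (left_mem_Icc.2 (ht.1.trans ht.2)) (u := univ)
    hf.continuousOn (continuousOn_of_tendstoUniformlyOn_tonelli hf hx) (fun _ _ => mem_univ _)
    (x a) ht).congr hpicard (hpicard ht)

lemma exists_isIntegralCurveOn_of_frequently_tonelli [ProperSpace E] (hab : a ≤ b)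
    (hf : Continuous ↿f) (hfL : ∀ t x, ‖f t x‖ ≤ L * (1 + ‖x‖)) {C Z : Set E} (hC : IsCompact C)
    (hZ : IsClosed Z) (hCZ : ∃ᶠ n in atTop, ∃ c ∈ C, tonelli f a b n c b ∈ Z) :
    ∃ x : ℝ → E, IsIntegralCurveOn x f (Icc a b) ∧ x a ∈ C ∧ x b ∈ Z := by
  obtain ⟨ψ, hψ, hψCZ⟩ := extraction_of_frequently_atTop hCZ
  choose c hcC hcZ using hψCZ
  obtain ⟨R, hR⟩ := hC.isBounded.exists_norm_le
  have hL : 0 ≤ L := by simpa using (norm_nonneg _).trans (hfL 0 0)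
  set D := (1 + R) * Real.exp (L * (b - a))
  have hD (n : ℕ) : (1 + ‖c n‖) * Real.exp (L * (b - a)) ≤ D :=
    mul_le_mul_of_nonneg_right (by gcongr; exact hR _ (hcC n)) (Real.exp_nonneg _)
  have hlip (n : ℕ) : LipschitzOnWith (L * D).toNNReal (tonelli f a b (ψ n) (c n)) (Icc a b) :=
    lipschitzOnWith_tonelli hf hfL <|
      (mul_le_mul_of_nonneg_left (hD n) hL).trans (Real.le_coe_toNNReal _)
  have hbdd (n : ℕ) : MapsTo (tonelli f a b (ψ n) (c n)) (Icc a b) (Metric.closedBall 0 D) := by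
    intro t ht
    have := (one_add_norm_tonelli_le (n := ψ n) hf hfL ht).trans (hD n)
    exact mem_closedBall_zero_iff.2 (by linarith)
  obtain ⟨x, φ, hφ, hx⟩ :=
    exists_subseq_tendstoUniformlyOn isCompact_Icc (isCompact_closedBall 0 D) hlip hbdd
  refine ⟨x, isIntegralCurveOn_of_tendstoUniformlyOn_tonelli hf hfL (hψ.comp hφ).tendsto_atTop
    (fun n => hR _ (hcC (φ n))) hx, ?_, ?_⟩
  · refine hC.isClosed.mem_of_tendsto (hx.tendsto_at (left_mem_Icc.2 hab)) (.of_forall fun n => ?_)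
    rw [tonelli_left]
    exact hcC _
  · exact hZ.mem_of_tendsto (hx.tendsto_at (right_mem_Icc.2 hab)) (.of_forall fun n => hcZ _)

lemma exists_isIntegralCurveOn_eq_zero_of_continuous [ProperSpace E] (hab : a ≤ b)
    (hf : Continuous ↿f) (hfL : ∀ t x, ‖f t x‖ ≤ L * (1 + ‖x‖)) {C : Set E} (hC : IsCompact C)
    (hC' : IsPreconnected C) {φ : E → ℝ} (hφ : Continuous φ) {p q : E} (hp : p ∈ C) (hq : q ∈ C)
    (hpos : ∀ x, IsIntegralCurveOn x f (Icc a b) → x a = p → 0 < φ (x b))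
    (hneg : ∀ x, IsIntegralCurveOn x f (Icc a b) → x a = q → φ (x b) < 0) :
    ∃ x, IsIntegralCurveOn x f (Icc a b) ∧ x a ∈ C ∧ φ (x b) = 0 := by
  have hp' : ∀ᶠ n in atTop, 0 < φ (tonelli f a b n p b) := by
    by_contra h
    obtain ⟨x, hx, hxa, hxb⟩ := exists_isIntegralCurveOn_of_frequently_tonelli hab hf hfL
      isCompact_singleton (isClosed_le hφ continuous_const)
      ((not_eventually.1 h).mono fun n hn => ⟨p, rfl, not_lt.1 hn⟩)
    exact (hpos x hx hxa).not_ge hxb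
  have hq' : ∀ᶠ n in atTop, φ (tonelli f a b n q b) < 0 := by
    by_contra h
    obtain ⟨x, hx, hxa, hxb⟩ := exists_isIntegralCurveOn_of_frequently_tonelli hab hf hfL
      isCompact_singleton (isClosed_le continuous_const hφ)
      ((not_eventually.1 h).mono fun n hn => ⟨q, rfl, not_lt.1 hn⟩)
    exact (hneg x hx hxa).not_ge hxb
  refine exists_isIntegralCurveOn_of_frequently_tonelli hab hf hfL hC
    (isClosed_eq hφ continuous_const) <| (hp'.and hq').frequently.mono fun n hn => ?_
  have hcont : ContinuousOn (fun c => φ (tonelli f a b n c b)) C :=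
    (hφ.comp ((continuous_tonelli hf).comp (Continuous.prodMk_left b))).continuousOn
  exact hC'.intermediate_value hq hp hcont ⟨hn.2.le, hn.1.le⟩

theorem exists_isIntegralCurveOn_eq_zero [ProperSpace E] (hab : a ≤ b)
    (hf : ContinuousOn ↿f (Icc a b ×ˢ univ))
    (hfL : ∀ t ∈ Icc a b, ∀ x, ‖f t x‖ ≤ L * (1 + ‖x‖)) {C : Set E} (hC : IsCompact C)
    (hC' : IsPreconnected C) {φ : E → ℝ} (hφ : Continuous φ) {p q : E} (hp : p ∈ C) (hq : q ∈ C)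
    (hpos : ∀ x, IsIntegralCurveOn x f (Icc a b) → x a = p → 0 < φ (x b))
    (hneg : ∀ x, IsIntegralCurveOn x f (Icc a b) → x a = q → φ (x b) < 0) :
    ∃ x, IsIntegralCurveOn x f (Icc a b) ∧ x a ∈ C ∧ φ (x b) = 0 := by
  let F (t : ℝ) : E → E := f (projIcc a b hab t)
  have hF : Continuous ↿F :=
    hf.comp_continuous (f := fun q : ℝ × E => ((projIcc a b hab q.1 : ℝ), q.2)) (by fun_prop)
      fun q => ⟨(projIcc a b hab q.1).2, mem_univ _⟩
  have hcurve (x : ℝ → E) : IsIntegralCurveOn x F (Icc a b) ↔ IsIntegralCurveOn x f (Icc a b) :=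
    forall₂_congr fun t ht => by simp only [F, projIcc_of_mem hab ht]
  simp only [← hcurve] at hpos hneg ⊢
  exact exists_isIntegralCurveOn_eq_zero_of_continuous hab hF (fun t => hfL _ (projIcc a b hab t).2)
    hC hC' hφ hp hq hpos hneg

end Shooting

section Tangent

variable {β w v : ℝ → ℝ} {a b x y z : ℝ}

lemma integral_eq_sub_of_hasDerivWithinAt_Icc {E : Type*} [NormedAddCommGroup E]
    [NormedSpace ℝ E] [CompleteSpace E] {F F' : ℝ → E}
    (hF : ∀ t ∈ Icc a b, HasDerivWithinAt F (F' t) (Icc a b) t)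
    (hF' : ContinuousOn F' (Icc a b)) (hx : x ∈ Icc a b) (hy : y ∈ Icc a b) :
    ∫ t in x..y, F' t = F y - F x := by
  have hsub : uIcc x y ⊆ Icc a b := uIcc_subset_Icc hx hy
  refine intervalIntegral.integral_eq_sub_of_hasDeriv_right
    ((HasDerivWithinAt.continuousOn hF).mono hsub) (fun t ht => ?_)
    (hF'.mono hsub).intervalIntegrable
  have ht' : t ∈ Ioo a b :=
    ⟨(le_min hx.1 hy.1).trans_lt ht.1, ht.2.trans_le (max_le hx.2 hy.2)⟩
  exact ((hF t (Ioo_subset_Icc_self ht')).hasDerivAt (Icc_mem_nhds ht'.1 ht'.2)).hasDerivWithinAt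

lemma sub_le_mul_integral_of_antitoneOn
    (hw : ∀ t ∈ Icc a b, HasDerivWithinAt w (β t * v t) (Icc a b) t)
    (hβ : ContinuousOn β (Icc a b)) (hβ0 : ∀ t ∈ Icc a b, 0 ≤ β t) (hv : ContinuousOn v (Icc a b))
    (hx : x ∈ Icc a b) (hy : y ∈ Icc a b) (hanti : AntitoneOn v (uIcc x y)) :
    w y - w x ≤ v x * ∫ t in x..y, β t := by
  have hsub : uIcc x y ⊆ Icc a b := uIcc_subset_Icc hx hy
  have hint := ((hβ.mul hv).mono hsub).intervalIntegrable (μ := volume)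
  have hint' := ((hβ.mul_const (v x)).mono hsub).intervalIntegrable (μ := volume)
  rw [← integral_eq_sub_of_hasDerivWithinAt_Icc hw (hβ.mul hv) hx hy, mul_comm (v x),
    ← intervalIntegral.integral_mul_const]
  rcases le_total x y with hxy | hyx
  · refine intervalIntegral.integral_mono_on hxy hint hint' fun t ht => ?_
    rw [← uIcc_of_le hxy] at ht
    exact mul_le_mul_of_nonneg_left (hanti left_mem_uIcc ht (uIcc_of_le hxy ▸ ht).1)
      (hβ0 t (hsub ht))
  · rw [intervalIntegral.integral_symm y x, intervalIntegral.integral_symm y x, neg_le_neg_iff]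
    refine intervalIntegral.integral_mono_on hyx hint'.symm hint.symm fun t ht => ?_
    rw [← uIcc_of_ge hyx] at ht
    exact mul_le_mul_of_nonneg_left (hanti ht left_mem_uIcc (uIcc_of_ge hyx ▸ ht).2)
      (hβ0 t (hsub ht))

lemma mul_integral_le_sub_of_monotoneOn
    (hw : ∀ t ∈ Icc a b, HasDerivWithinAt w (β t * v t) (Icc a b) t)
    (hβ : ContinuousOn β (Icc a b)) (hβ0 : ∀ t ∈ Icc a b, 0 ≤ β t) (hv : ContinuousOn v (Icc a b))
    (hx : x ∈ Icc a b) (hy : y ∈ Icc a b) (hmono : MonotoneOn v (uIcc x y)) :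
    v x * ∫ t in x..y, β t ≤ w y - w x := by
  have hneg := sub_le_mul_integral_of_antitoneOn (w := -w) (v := -v)
    (fun t ht => by simpa using (hw t ht).neg) hβ hβ0 hv.neg hx hy hmono.neg
  simp only [Pi.neg_apply, neg_mul] at hneg
  linarith

-- `w` is concave as a function of the variable `∫ β`.
lemma mul_integral_add_mul_integral_le_of_antitoneOn
    (hw : ∀ t ∈ Icc a b, HasDerivWithinAt w (β t * v t) (Icc a b) t)
    (hβ : ContinuousOn β (Icc a b)) (hβ0 : ∀ t ∈ Icc a b, 0 ≤ β t)
    (hv : AntitoneOn v (Icc a b)) (hvc : ContinuousOn v (Icc a b))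
    (hx : x ∈ Icc a b) (hz : z ∈ Icc a b) (hxy : x ≤ y) (hyz : y ≤ z) :
    (w x * ∫ t in y..z, β t) + w z * (∫ t in x..y, β t) ≤ w y * ∫ t in x..z, β t := by
  have hy : y ∈ Icc a b := ⟨hx.1.trans hxy, hyz.trans hz.2⟩
  have hint {s t : ℝ} (hs : s ∈ Icc a b) (ht : t ∈ Icc a b) : IntervalIntegrable β volume s t :=
    (hβ.mono (uIcc_subset_Icc hs ht)).intervalIntegrable
  have hβxy : 0 ≤ ∫ t in x..y, β t :=
    intervalIntegral.integral_nonneg hxy fun t ht => hβ0 t ⟨hx.1.trans ht.1, ht.2.trans hy.2⟩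
  have hβyz : 0 ≤ ∫ t in y..z, β t :=
    intervalIntegral.integral_nonneg hyz fun t ht => hβ0 t ⟨hy.1.trans ht.1, ht.2.trans hz.2⟩
  have htx := sub_le_mul_integral_of_antitoneOn hw hβ hβ0 hvc hy hx
    (hv.mono (uIcc_subset_Icc hy hx))
  have htz := sub_le_mul_integral_of_antitoneOn hw hβ hβ0 hvc hy hz
    (hv.mono (uIcc_subset_Icc hy hz))
  rw [intervalIntegral.integral_symm] at htx
  rw [← intervalIntegral.integral_add_adjacent_intervals (hint hx hy) (hint hy hz)]
  linear_combination (∫ t in y..z, β t) * htx + (∫ t in x..y, β t) * htz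

lemma mul_le_integral_mul_of_antitoneOn
    (hw : ∀ t ∈ Icc a b, HasDerivWithinAt w (β t * v t) (Icc a b) t)
    (hβ : ContinuousOn β (Icc a b)) (hβ0 : ∀ t ∈ Icc a b, 0 ≤ β t)
    (hv : AntitoneOn v (Icc a b)) (hvc : ContinuousOn v (Icc a b))
    (hw0 : ∀ t ∈ Icc a b, 0 ≤ w t) {d r t : ℝ} (hr : r ∈ Icc a b) (ht : t ∈ Icc a b)
    (hat : d ≤ ∫ s in a..t, β s) (htb : d ≤ ∫ s in t..b, β s) :
    d * w r ≤ (∫ s in a..b, β s) * w t := by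
  have ha : a ∈ Icc a b := left_mem_Icc.2 (ht.1.trans ht.2)
  have hb : b ∈ Icc a b := right_mem_Icc.2 (ht.1.trans ht.2)
  have hsub {x y : ℝ} (hx : x ∈ Icc a b) (hy : y ∈ Icc a b) (hxy : x ≤ y) :
      0 ≤ ∫ s in x..y, β s ∧ ∫ s in x..y, β s ≤ ∫ s in a..b, β s := by
    refine ⟨intervalIntegral.integral_nonneg hxy fun s hs =>
        hβ0 s ⟨hx.1.trans hs.1, hs.2.trans hy.2⟩,
      intervalIntegral.integral_mono_interval hx.1 hxy hy.2 ?_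
        (hβ.intervalIntegrable_of_Icc ha.2)⟩
    exact (ae_restrict_mem measurableSet_Ioc).mono fun s hs => hβ0 s (Ioc_subset_Icc_self hs)
  rcases le_total r t with hrt | htr
  · have := mul_integral_add_mul_integral_le_of_antitoneOn hw hβ hβ0 hv hvc hr hb hrt ht.2
    nlinarith [hw0 r hr, hw0 t ht, hw0 b hb, hsub hr ht hrt, hsub hr hb hr.2]
  · have := mul_integral_add_mul_integral_le_of_antitoneOn hw hβ hβ0 hv hvc ha hr ht.1 htr
    nlinarith [hw0 r hr, hw0 t ht, hw0 a ha, hsub ht hr htr, hsub ha hr hr.1]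

lemma exists_mem_forall_interior_uIcc_notMem {S : Set ℝ} (hS : IsClosed S) (hne : S.Nonempty)
    (x : ℝ) : ∃ s ∈ S, ∀ t ∈ interior (uIcc x s), t ∉ S := by
  obtain ⟨s, hs, hdist⟩ := hS.exists_infDist_eq_dist hne x
  refine ⟨s, hs, fun t ht htS => ?_⟩
  have hle := Metric.infDist_le_dist_of_mem (x := x) htS
  rw [hdist, Real.dist_eq, Real.dist_eq] at hle
  rw [uIcc, interior_Icc, mem_Ioo, min_lt_iff, lt_max_iff] at ht
  grind

end Tangent

/-- `w` and `v` solve on `[a, b]` the first-order system `w' = β v`, `v' = -α G(w)`, which encodes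
the Sturm–Liouville equation `(w' / β)' + α G(w) = 0`. -/
structure SturmLiouvilleSol (α β G : ℝ → ℝ) (a b : ℝ) (w v : ℝ → ℝ) : Prop where
  hasDerivWithinAt_fst : ∀ t ∈ Icc a b, HasDerivWithinAt w (β t * v t) (Icc a b) t
  hasDerivWithinAt_snd : ∀ t ∈ Icc a b, HasDerivWithinAt v (-(α t * G (w t))) (Icc a b) t

/-- The right-hand side of the system `w' = β v`, `v' = -α G(w)` in the unknown `z = (w, v)`. -/
def sturmLiouvilleField (α β G : ℝ → ℝ) (t : ℝ) (z : ℝ × ℝ) : ℝ × ℝ :=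
  (β t * z.2, -(α t * G z.1))

lemma isIntegralCurveOn_sturmLiouvilleField_iff {α β G : ℝ → ℝ} {a b : ℝ} {x : ℝ → ℝ × ℝ} :
    IsIntegralCurveOn x (sturmLiouvilleField α β G) (Icc a b) ↔
      SturmLiouvilleSol α β G a b (fun t => (x t).1) (fun t => (x t).2) := by
  refine ⟨fun h => ⟨fun t ht => (h t ht).fst, fun t ht => (h t ht).snd⟩, fun h t ht => ?_⟩
  exact (h.hasDerivWithinAt_fst t ht).prodMk (h.hasDerivWithinAt_snd t ht)

lemma exists_norm_sturmLiouvilleField_le {α β G : ℝ → ℝ} {a b L : ℝ}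
    (hα : ContinuousOn α (Icc a b)) (hβ : ContinuousOn β (Icc a b)) (hG : ∀ s, |G s| ≤ L * |s|) :
    ∃ K ≥ 0, ∀ t ∈ Icc a b, ∀ z, ‖sturmLiouvilleField α β G t z‖ ≤ K * ‖z‖ := by
  have hL : 0 ≤ L := by simpa using (abs_nonneg _).trans (hG 1)
  obtain ⟨A, hA⟩ := isCompact_Icc.exists_bound_of_continuousOn hα
  obtain ⟨B, hB⟩ := isCompact_Icc.exists_bound_of_continuousOn hβ
  refine ⟨max (max B (A * L)) 0, le_max_right _ _, fun t ht z => ?_⟩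
  refine le_trans ?_ (mul_le_mul_of_nonneg_right (le_max_left _ _) (norm_nonneg z))
  have hA0 : 0 ≤ A := (norm_nonneg _).trans (hA t ht)
  rw [max_mul_of_nonneg _ _ (norm_nonneg z)]
  refine max_le_max ?_ ?_
  · rw [sturmLiouvilleField, norm_mul]
    exact mul_le_mul (hB t ht) (norm_snd_le z) (norm_nonneg _) ((norm_nonneg _).trans (hB t ht))
  · rw [sturmLiouvilleField, norm_neg, norm_mul, mul_assoc]
    refine mul_le_mul (hA t ht) ((hG z.1).trans ?_) (norm_nonneg _) hA0
    exact mul_le_mul_of_nonneg_left (norm_fst_le z) hL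

lemma eqOn_zero_of_isIntegralCurveOn {E : Type*} [NormedAddCommGroup E] [NormedSpace ℝ E]
    {f : ℝ → E → E} {x : ℝ → E} {a b K : ℝ} (hx : IsIntegralCurveOn x f (Icc a b)) (hxb : x b = 0)
    (hf : ∀ t ∈ Icc a b, ∀ z, ‖f t z‖ ≤ K * ‖z‖) : EqOn x 0 (Icc a b) := by
  have hf0 (t : ℝ) (ht : t ∈ Icc a b) : f t 0 = 0 := norm_le_zero_iff.1 (by simpa using hf t ht 0)
  have hlip (t : ℝ) (ht : t ∈ Ioc a b) : LipschitzOnWith K.toNNReal (f t) {x t, 0} := by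
    have ht' := Ioc_subset_Icc_self ht
    have hK (z : E) : ‖f t z‖ ≤ max K 0 * ‖z‖ := (hf t ht' z).trans
      (mul_le_mul_of_nonneg_right (le_max_left K 0) (norm_nonneg z))
    refine LipschitzOnWith.of_dist_le_mul ?_
    rintro y (rfl | rfl) z (rfl | rfl) <;> simp [hf0 t ht', hK]
  refine ODE_solution_unique_of_mem_Icc_left hlip hx.continuousOn
    (fun t ht => (hx t (Ioc_subset_Icc_self ht)).mono_of_mem_nhdsWithin (Icc_mem_nhdsLE_of_mem ht))
    (fun t _ => mem_insert _ _) continuousOn_const (fun t ht => ?_)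
    (fun t _ => mem_insert_of_mem _ rfl) hxb
  rw [Pi.zero_apply, hf0 t (Ioc_subset_Icc_self ht)]
  exact hasDerivWithinAt_zero t _

namespace SturmLiouvilleSol

variable {α β G w v : ℝ → ℝ} {a b L M r x y : ℝ}

lemma mono (h : SturmLiouvilleSol α β G a b w v) {a' b' : ℝ} (hsub : Icc a' b' ⊆ Icc a b) :
    SturmLiouvilleSol α β G a' b' w v where
  hasDerivWithinAt_fst t ht := (h.hasDerivWithinAt_fst t (hsub ht)).mono hsub
  hasDerivWithinAt_snd t ht := (h.hasDerivWithinAt_snd t (hsub ht)).mono hsub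

lemma continuousOn_fst (h : SturmLiouvilleSol α β G a b w v) : ContinuousOn w (Icc a b) :=
  HasDerivWithinAt.continuousOn h.hasDerivWithinAt_fst

lemma continuousOn_snd (h : SturmLiouvilleSol α β G a b w v) : ContinuousOn v (Icc a b) :=
  HasDerivWithinAt.continuousOn h.hasDerivWithinAt_snd

lemma integral_eq_sub_snd (h : SturmLiouvilleSol α β G a b w v) (hα : ContinuousOn α (Icc a b))
    (hG : Continuous G) (hx : x ∈ Icc a b) (hy : y ∈ Icc a b) :
    ∫ t in x..y, α t * G (w t) = v x - v y := by
  have := integral_eq_sub_of_hasDerivWithinAt_Icc h.hasDerivWithinAt_snd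
    (hα.mul (hG.comp_continuousOn h.continuousOn_fst)).neg hx hy
  rw [intervalIntegral.integral_neg] at this
  linarith

lemma antitoneOn_snd (h : SturmLiouvilleSol α β G a b w v) {D : Set ℝ} (hD : Convex ℝ D)
    (hsub : D ⊆ Icc a b) (h0 : ∀ t ∈ interior D, 0 ≤ α t * G (w t)) : AntitoneOn v D :=
  antitoneOn_of_hasDerivWithinAt_nonpos hD (h.continuousOn_snd.mono hsub)
    (fun t ht => (h.hasDerivWithinAt_snd t (hsub (interior_subset ht))).mono
      (interior_subset.trans hsub)) fun t ht => neg_nonpos.2 (h0 t ht)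

lemma antitoneOn_snd_of_nonneg (h : SturmLiouvilleSol α β G a b w v) (hα : ∀ t ∈ Icc a b, 0 ≤ α t)
    (hG : ∀ s, 0 ≤ s → 0 ≤ G s) (hw : ∀ t ∈ Icc a b, 0 ≤ w t) : AntitoneOn v (Icc a b) :=
  h.antitoneOn_snd (convex_Icc a b) subset_rfl fun t ht =>
    have ht' := interior_subset ht
    mul_nonneg (hα t ht') (hG _ (hw t ht'))

lemma monotoneOn_snd (h : SturmLiouvilleSol α β G a b w v) {D : Set ℝ} (hD : Convex ℝ D)
    (hsub : D ⊆ Icc a b) (h0 : ∀ t ∈ interior D, α t * G (w t) ≤ 0) : MonotoneOn v D :=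
  monotoneOn_of_hasDerivWithinAt_nonneg hD (h.continuousOn_snd.mono hsub)
    (fun t ht => (h.hasDerivWithinAt_snd t (hsub (interior_subset ht))).mono
      (interior_subset.trans hsub)) fun t ht => neg_nonneg.2 (h0 t ht)

lemma snd_eq_zero_of_isExtrOn (h : SturmLiouvilleSol α β G a b w v) (hβ : ∀ t ∈ Icc a b, 0 < β t)
    (hr : r ∈ Ioo a b) (hext : IsExtrOn w (Icc a b) r) : v r = 0 := by
  have hnhds : Icc a b ∈ 𝓝 r := Icc_mem_nhds hr.1 hr.2
  have hr' := Ioo_subset_Icc_self hr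
  have := (hext.isLocalExtr hnhds).hasDerivAt_eq_zero
    ((h.hasDerivWithinAt_fst r hr').hasDerivAt hnhds)
  exact (mul_eq_zero.1 this).resolve_left (hβ r hr').ne'

lemma fst_nonneg (h : SturmLiouvilleSol α β G a b w v) (hβ : ContinuousOn β (Icc a b))
    (hβ0 : ∀ t ∈ Icc a b, 0 < β t) (hG : ∀ s ≤ 0, G s = 0) (ha : 0 ≤ w a) (hb : 0 ≤ v b) :
    ∀ t ∈ Icc a b, 0 ≤ w t := by
  intro t ht
  by_contra! hwt
  obtain ⟨r, hr, hmin⟩ := isCompact_Icc.exists_isMinOn ⟨t, ht⟩ h.continuousOn_fst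
  have hwr : w r < 0 := (hmin ht).trans_lt hwt
  obtain ⟨s, ⟨hs, hws⟩, hrs⟩ := exists_mem_forall_interior_uIcc_notMem
    (h.continuousOn_fst.preimage_isClosed_of_isClosed isClosed_Icc isClosed_Ici)
    ⟨a, left_mem_Icc.2 (ht.1.trans ht.2), ha⟩ r
  have hsub : uIcc r s ⊆ Icc a b := uIcc_subset_Icc hr hs
  have hanti : AntitoneOn v (uIcc r s) := h.antitoneOn_snd (convex_uIcc r s) hsub fun x hx => by
    have hwx : w x ≤ 0 := le_of_not_ge fun hx0 => hrs x hx ⟨hsub (interior_subset hx), hx0⟩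
    simp only [hG _ hwx, mul_zero, le_refl]
  have htangent := sub_le_mul_integral_of_antitoneOn h.hasDerivWithinAt_fst hβ
    (fun t ht => (hβ0 t ht).le) h.continuousOn_snd hr hs hanti
  have hslope : v r * ∫ t in r..s, β t ≤ 0 := by
    rcases eq_endpoints_or_mem_Ioo_of_mem_Icc hr with rfl | rfl | hr'
    · exact absurd ha hwr.not_ge
    · rw [intervalIntegral.integral_symm]
      refine mul_nonpos_of_nonneg_of_nonpos hb (neg_nonpos.2 ?_)
      exact intervalIntegral.integral_nonneg hs.2 fun t ht => (hβ0 t ⟨hs.1.trans ht.1, ht.2⟩).le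
    · rw [h.snd_eq_zero_of_isExtrOn hβ0 hr' (.inl hmin), zero_mul]
  have hws' : 0 ≤ w s := hws
  linarith

lemma exists_mem_fst_le (h : SturmLiouvilleSol α β G a b w v) (hβ : ContinuousOn β (Icc a b))
    (hβ0 : ∀ t ∈ Icc a b, 0 ≤ β t) {S : Set ℝ} (hS : IsClosed S) (hSne : S.Nonempty)
    (hSab : S ⊆ Icc a b) (hα : ∀ t ∈ Icc a b \ S, α t ≤ 0) (hG : ∀ t ∈ Icc a b, 0 ≤ G (w t))
    (hx : x ∈ Icc a b) (hvx : v x = 0) : ∃ s ∈ S, w x ≤ w s := by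
  obtain ⟨s, hs, hxs⟩ := exists_mem_forall_interior_uIcc_notMem hS hSne x
  have hsub : uIcc x s ⊆ Icc a b := uIcc_subset_Icc hx (hSab hs)
  have hmono : MonotoneOn v (uIcc x s) := h.monotoneOn_snd (convex_uIcc x s) hsub fun t ht =>
    have ht' := hsub (interior_subset ht)
    mul_nonpos_of_nonpos_of_nonneg (hα t ⟨ht', hxs t ht⟩) (hG t ht')
  have htangent := mul_integral_le_sub_of_monotoneOn h.hasDerivWithinAt_fst hβ hβ0
    h.continuousOn_snd hx (hSab hs) hmono
  rw [hvx, zero_mul, sub_nonneg] at htangent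
  exact ⟨s, hs, htangent⟩

lemma fst_le_of_forall_mem_le (h : SturmLiouvilleSol α β G a b w v)
    (hβ : ContinuousOn β (Icc a b)) (hβ0 : ∀ t ∈ Icc a b, 0 < β t) {S : Set ℝ} (hS : IsClosed S)
    (hSne : S.Nonempty) (hSab : S ⊆ Icc a b) (hα : ∀ t ∈ Icc a b \ S, α t ≤ 0)
    (hG : ∀ t ∈ Icc a b, 0 ≤ G (w t)) (hva : v a = 0) (hvb : v b = 0) (hwS : ∀ s ∈ S, w s ≤ M) :
    ∀ t ∈ Icc a b, w t ≤ M := by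
  intro t ht
  obtain ⟨r, hr, hmax⟩ := isCompact_Icc.exists_isMaxOn ⟨t, ht⟩ h.continuousOn_fst
  have hvr : v r = 0 := by
    rcases eq_endpoints_or_mem_Ioo_of_mem_Icc hr with rfl | rfl | hr'
    · exact hva
    · exact hvb
    · exact h.snd_eq_zero_of_isExtrOn hβ0 hr' (.inr hmax)
  obtain ⟨s, hs, hrs⟩ :=
    h.exists_mem_fst_le hβ (fun t ht => (hβ0 t ht).le) hS hSne hSab hα hG hr hvr
  exact (hmax ht).trans (hrs.trans (hwS s hs))

lemma fst_eq_zero_of_right_eq_zero (h : SturmLiouvilleSol α β G a b w v)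
    (hα : ContinuousOn α (Icc a b)) (hβ : ContinuousOn β (Icc a b)) (hG : ∀ s, |G s| ≤ L * |s|)
    (hw : w b = 0) (hv : v b = 0) : EqOn w 0 (Icc a b) := by
  obtain ⟨K, -, hK⟩ := exists_norm_sturmLiouvilleField_le hα hβ hG
  have hcurve := isIntegralCurveOn_sturmLiouvilleField_iff (x := fun t => (w t, v t)).2 h
  have hzero := eqOn_zero_of_isIntegralCurveOn hcurve (Prod.ext hw hv) hK
  exact fun t ht => congrArg Prod.fst (hzero ht)

lemma fst_pos (h : SturmLiouvilleSol α β G a b w v) (hα : ContinuousOn α (Icc a b))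
    (hβ : ContinuousOn β (Icc a b)) (hβ0 : ∀ t ∈ Icc a b, 0 < β t) (hG : ∀ s, |G s| ≤ L * |s|)
    (hw : ∀ t ∈ Icc a b, 0 ≤ w t) (hwa : 0 < w a) (hvb : v b = 0) : ∀ t ∈ Icc a b, 0 < w t := by
  intro t ht
  refine (hw t ht).lt_of_ne' fun hwt => hwa.ne' ?_
  have hmin : IsMinOn w (Icc a b) t := fun s hs => hwt.trans_le (hw s hs)
  have hvt : v t = 0 := by
    rcases eq_endpoints_or_mem_Ioo_of_mem_Icc ht with rfl | rfl | ht'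
    · exact absurd hwt hwa.ne'
    · exact hvb
    · exact h.snd_eq_zero_of_isExtrOn hβ0 ht' (.inl hmin)
  have hsub : Icc a t ⊆ Icc a b := Icc_subset_Icc_right ht.2
  exact (h.mono hsub).fst_eq_zero_of_right_eq_zero (hα.mono hsub) (hβ.mono hsub) hG hwt hvt
    (left_mem_Icc.2 ht.1)

end SturmLiouvilleSol

section APrioriBound

variable {α β G w v : ℝ → ℝ} {a b p q C K : ℝ}

lemma exists_Icc_subset_Ioo_forall_pos (hab : a < b) (hα : ContinuousOn α (Icc a b))
    (hpos : ∃ t ∈ Icc a b, 0 < α t) :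
    ∃ p q, p < q ∧ Icc p q ⊆ Ioo a b ∧ ∀ t ∈ Icc p q, 0 < α t := by
  obtain ⟨t, ht, hαt⟩ := hpos
  have : (𝓝[Ioo a b] t).NeBot := mem_closure_iff_nhdsWithin_neBot.1 (by rwa [closure_Ioo hab.ne])
  obtain ⟨s, hs, hαs⟩ := (eventually_mem_nhdsWithin.and
    (((hα t ht).mono Ioo_subset_Icc_self).eventually (lt_mem_nhds hαt))).exists
  have hnhds : ∀ᶠ r in 𝓝 s, r ∈ Ioo a b ∧ 0 < α r :=
    (eventually_mem_set.2 (Ioo_mem_nhds hs.1 hs.2)).and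
      ((hα.continuousAt (Icc_mem_nhds hs.1 hs.2)).eventually (lt_mem_nhds hαs))
  obtain ⟨ε, hε, hball⟩ := Metric.nhds_basis_closedBall.eventually_iff.1 hnhds
  rw [Real.closedBall_eq_Icc] at hball
  exact ⟨s - ε, s + ε, by linarith, fun r hr => (hball hr).1, fun r hr => (hball hr).2⟩

lemma SturmLiouvilleSol.integral_mul_le (h : SturmLiouvilleSol α β G a b w v)
    (hα : ContinuousOn α (Icc a b)) (hα0 : ∀ t ∈ Icc a b, 0 ≤ α t) (hβ : ContinuousOn β (Icc a b))
    (hβ0 : ∀ t ∈ Icc a b, 0 ≤ β t) (hGc : Continuous G) (hG : ∀ s, 0 ≤ s → 0 ≤ G s)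
    (hw : ∀ t ∈ Icc a b, 0 ≤ w t) (hap : a ≤ p) (hpq : p ≤ q) (hqb : q ≤ b) {d κ W : ℝ}
    (hdp : d ≤ ∫ t in a..p, β t) (hdq : d ≤ ∫ t in q..b, β t) (hd : 0 < d)
    (hwW : ∀ t ∈ Icc a b, w t ≤ W) (hκ : ∀ t ∈ Icc p q, κ ≤ G (w t)) :
    (∫ t in p..q, α t) * κ ≤ 2 / d * W := by
  have hp : p ∈ Icc a b := ⟨hap, hpq.trans hqb⟩
  have hq : q ∈ Icc a b := ⟨hap.trans hpq, hqb⟩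
  have ha : a ∈ Icc a b := left_mem_Icc.2 (hap.trans hp.2)
  have hb : b ∈ Icc a b := right_mem_Icc.2 (hap.trans hp.2)
  have hsub : uIcc p q ⊆ Icc a b := uIcc_subset_Icc hp hq
  have hanti : AntitoneOn v (Icc a b) := h.antitoneOn_snd_of_nonneg hα0 hG hw
  have hwa := sub_le_mul_integral_of_antitoneOn h.hasDerivWithinAt_fst hβ hβ0 h.continuousOn_snd
    hp ha (hanti.mono (uIcc_subset_Icc hp ha))
  have hwb := sub_le_mul_integral_of_antitoneOn h.hasDerivWithinAt_fst hβ hβ0 h.continuousOn_snd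
    hq hb (hanti.mono (uIcc_subset_Icc hq hb))
  rw [intervalIntegral.integral_symm] at hwa
  have hW : 0 ≤ W := (hw a ha).trans (hwW a ha)
  have hvp : v p ≤ W / d := by
    rw [le_div_iff₀ hd]
    rcases le_total (v p) 0 with hneg | hpos
    · exact (mul_nonpos_of_nonpos_of_nonneg hneg hd.le).trans hW
    · linarith [mul_le_mul_of_nonneg_left hdp hpos, hwW p hp, hw a ha]
  have hvq : -v q ≤ W / d := by
    rw [le_div_iff₀ hd]
    rcases le_total 0 (v q) with hpos | hneg
    · linarith [mul_nonneg hpos hd.le]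
    · linarith [mul_le_mul_of_nonpos_left hdq hneg, hwW q hq, hw b hb]
  calc (∫ t in p..q, α t) * κ = ∫ t in p..q, α t * κ := by
        rw [intervalIntegral.integral_mul_const]
    _ ≤ ∫ t in p..q, α t * G (w t) :=
        intervalIntegral.integral_mono_on hpq ((hα.mono hsub).mul_const κ).intervalIntegrable
          ((hα.mul (hGc.comp_continuousOn h.continuousOn_fst)).mono hsub).intervalIntegrable
          fun t ht => mul_le_mul_of_nonneg_left (hκ t ht) (hα0 t (hsub (uIcc_of_le hpq ▸ ht)))
    _ = v p - v q := h.integral_eq_sub_snd hα hGc hp hq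
    _ ≤ 2 / d * W := by linear_combination hvp + hvq

lemma SturmLiouvilleSol.mul_fst_le_integral_mul_fst (h : SturmLiouvilleSol α β G a b w v)
    (hα0 : ∀ t ∈ Icc a b, 0 ≤ α t) (hβ : ContinuousOn β (Icc a b))
    (hβ0 : ∀ t ∈ Icc a b, 0 ≤ β t) (hG : ∀ s, 0 ≤ s → 0 ≤ G s)
    (hw : ∀ t ∈ Icc a b, 0 ≤ w t) {d r t : ℝ} (hdp : d ≤ ∫ s in a..p, β s)
    (hdq : d ≤ ∫ s in q..b, β s) (hap : a ≤ p) (hqb : q ≤ b) (hr : r ∈ Icc a b)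
    (ht : t ∈ Icc p q) : d * w r ≤ (∫ s in a..b, β s) * w t := by
  have hat : a ≤ t := hap.trans ht.1
  have htb : t ≤ b := ht.2.trans hqb
  have hanti : AntitoneOn v (Icc a b) := h.antitoneOn_snd_of_nonneg hα0 hG hw
  refine mul_le_integral_mul_of_antitoneOn h.hasDerivWithinAt_fst hβ hβ0 hanti h.continuousOn_snd
    hw hr ⟨hat, htb⟩ (hdp.trans ?_) (hdq.trans ?_)
  · refine intervalIntegral.integral_mono_interval le_rfl hap ht.1 ?_
      ((hβ.mono (Icc_subset_Icc_right htb)).intervalIntegrable_of_Icc hat)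
    exact (ae_restrict_mem measurableSet_Ioc).mono fun s hs => hβ0 s ⟨hs.1.le, hs.2.trans htb⟩
  · refine intervalIntegral.integral_mono_interval ht.2 hqb le_rfl ?_
      ((hβ.mono (Icc_subset_Icc_left hat)).intervalIntegrable_of_Icc htb)
    exact (ae_restrict_mem measurableSet_Ioc).mono fun s hs => hβ0 s ⟨hat.trans hs.1.le, hs.2⟩

lemma SturmLiouvilleSol.fst_le_mul (h : SturmLiouvilleSol α β G a b w v)
    (hα : ContinuousOn α (Icc a b)) (hα0 : ∀ t ∈ Icc a b, 0 ≤ α t) (hβ : ContinuousOn β (Icc a b))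
    (hβ0 : ∀ t ∈ Icc a b, 0 ≤ β t) (hGc : Continuous G) (hG0 : ∀ s, 0 ≤ s → 0 ≤ G s)
    (hG : ∀ s, 0 ≤ s → K * s - C ≤ G s) (hw : ∀ t ∈ Icc a b, 0 ≤ w t) (hap : a ≤ p) (hpq : p ≤ q)
    (hqb : q ≤ b) {d : ℝ} (hdp : d ≤ ∫ t in a..p, β t) (hdq : d ≤ ∫ t in q..b, β t) (hd : 0 < d)
    (hT : 0 < ∫ t in a..b, β t) (hK0 : 0 ≤ K)
    (hK : 2 / d + 1 ≤ K * ((∫ t in p..q, α t) * d / ∫ t in a..b, β t)) :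
    ∀ t ∈ Icc a b, w t ≤ (∫ t in p..q, α t) * C := by
  intro t ht
  obtain ⟨r, hr, hmax⟩ := isCompact_Icc.exists_isMaxOn ⟨t, ht⟩ h.continuousOn_fst
  set m := ∫ t in p..q, α t
  set T := ∫ t in a..b, β t
  have hκ (t : ℝ) (ht : t ∈ Icc p q) : K * (d * w r / T) - C ≤ G (w t) := by
    have hharnack : d * w r / T ≤ w t :=
      (div_le_iff₀' hT).2 (h.mul_fst_le_integral_mul_fst hα0 hβ hβ0 hG0 hw hdp hdq hap hqb hr ht)
    exact (sub_le_sub_right (mul_le_mul_of_nonneg_left hharnack hK0) C).trans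
      (hG _ (hw t ⟨hap.trans ht.1, ht.2.trans hqb⟩))
  have hbound : m * (K * (d * w r / T) - C) ≤ 2 / d * w r :=
    h.integral_mul_le hα hα0 hβ hβ0 hGc hG0 hw hap hpq hqb hdp hdq hd hmax hκ
  have hwr : w r ≤ m * C := by
    linear_combination hbound + mul_le_mul_of_nonneg_right hK (hw r hr)
  exact (hmax ht).trans hwr

lemma eventually_forall_fst_le (hab : a < b) (hα : ContinuousOn α (Icc a b))
    (hα0 : ∀ t ∈ Icc a b, 0 ≤ α t) (hpos : ∃ t ∈ Icc a b, 0 < α t) (hβ : ContinuousOn β (Icc a b))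
    (hβ0 : ∀ t ∈ Icc a b, 0 < β t) :
    ∀ᶠ K in atTop, ∀ C, ∀ᶠ M in atTop, ∀ G w v : ℝ → ℝ, Continuous G →
      (∀ s, 0 ≤ s → 0 ≤ G s) → (∀ s, 0 ≤ s → K * s - C ≤ G s) → SturmLiouvilleSol α β G a b w v →
      (∀ t ∈ Icc a b, 0 ≤ w t) → ∀ t ∈ Icc a b, w t ≤ M := by
  obtain ⟨p, q, hpq, hsub, hαpq⟩ := exists_Icc_subset_Ioo_forall_pos hab hα hpos
  have hp := hsub (left_mem_Icc.2 hpq.le)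
  have hq := hsub (right_mem_Icc.2 hpq.le)
  have hβpos {x y : ℝ} (hax : a ≤ x) (hxy : x < y) (hyb : y ≤ b) : 0 < ∫ t in x..y, β t :=
    intervalIntegral.intervalIntegral_pos_of_pos_on
      ((hβ.mono (Icc_subset_Icc hax hyb)).intervalIntegrable_of_Icc hxy.le)
      (fun t ht => hβ0 t ⟨hax.trans ht.1.le, ht.2.le.trans hyb⟩) hxy
  have hm : 0 < ∫ t in p..q, α t := intervalIntegral.intervalIntegral_pos_of_pos_on
    ((hα.mono (hsub.trans Ioo_subset_Icc_self)).intervalIntegrable_of_Icc hpq.le)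
    (fun t ht => hαpq t (Ioo_subset_Icc_self ht)) hpq
  have hT : 0 < ∫ t in a..b, β t := hβpos le_rfl hab le_rfl
  have hd : 0 < min (∫ t in a..p, β t) (∫ t in q..b, β t) :=
    lt_min (hβpos le_rfl hp.1 hp.2.le) (hβpos hq.1.le hq.2 le_rfl)
  filter_upwards [eventually_ge_atTop 0, (tendsto_id.atTop_mul_const
    (div_pos (mul_pos hm hd) hT)).eventually_ge_atTop _] with K hK0 hK C
  filter_upwards [eventually_ge_atTop ((∫ t in p..q, α t) * C)]
    with M hM G w v hGc hG0 hG h hw t ht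
  exact (h.fst_le_mul hα hα0 hβ (fun t ht => (hβ0 t ht).le) hGc hG0 hG hw hp.1.le hpq.le hq.2.le
    (min_le_left _ _) (min_le_right _ _) hd hT hK0 hK t ht).trans hM

end APrioriBound

section SmallStart

variable {α β G g w v : ℝ → ℝ} {a b c L ρ ε : ℝ}

lemma SturmLiouvilleSol.abs_fst_sub_le (h : SturmLiouvilleSol α β G a b w v)
    (hα : ∀ t ∈ Icc a b, |α t| ≤ L) (hβ : ∀ t ∈ Icc a b, |β t| ≤ L) (hwa : w a = c) (hva : v a = 0)
    (hρ : 0 < ρ) (hG : ∀ s, |s - c| ≤ ρ * Real.exp ((L + 1) * (b - a)) → |G s| ≤ ρ) :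
    ∀ t ∈ Icc a b, |w t - c| ≤ ρ * Real.exp ((L + 1) * (b - a)) := by
  intro t ht
  have hL : 0 ≤ L := (abs_nonneg _).trans (hα t ht)
  set B : ℝ → ℝ := fun s => ρ * Real.exp ((L + 1) * (s - a))
  have hB (s : ℝ) : HasDerivAt B ((L + 1) * B s) s := by
    convert! (((hasDerivAt_id s).sub_const a).const_mul (L + 1)).exp.const_mul ρ using 1
    simp only [B, id, mul_one]
    ring
  have hBb {s : ℝ} (hs : s ≤ b) : B s ≤ B b := by
    simp only [B]
    gcongr
  have hderiv (s : ℝ) (hs : s ∈ Icc a b) : HasDerivWithinAt (fun s => (w s - c, v s))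
      (β s * v s, -(α s * G (w s))) (Icc a b) s :=
    ((h.hasDerivWithinAt_fst s hs).sub_const c).prodMk (h.hasDerivWithinAt_snd s hs)
  have hbound := image_norm_le_of_norm_deriv_right_lt_deriv_boundary
    (HasDerivWithinAt.continuousOn hderiv)
    (fun s hs => (hderiv s (Ico_subset_Icc_self hs)).mono_of_mem_nhdsWithin
      (Icc_mem_nhdsGE_of_mem hs))
    (by simp [hwa, hva, B, hρ.le]) hB (fun s hs hsB => ?_) ht
  · exact ((norm_fst_le (w t - c, v t)).trans hbound).trans (hBb ht.2)
  · have hs' := Ico_subset_Icc_self hs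
    have hBs : 0 < B s := by positivity
    have hws : |w s - c| ≤ B s := (norm_fst_le (w s - c, v s)).trans_eq hsB
    have hvs : |v s| ≤ B s := (norm_snd_le (w s - c, v s)).trans_eq hsB
    have hρB : ρ ≤ B s := le_mul_of_one_le_right hρ.le
      (Real.one_le_exp (mul_nonneg (by linarith) (sub_nonneg.2 hs.1)))
    have hGs : |G (w s)| ≤ B s := (hG _ (hws.trans (hBb hs'.2))).trans hρB
    refine (Prod.norm_mk _ _).trans_lt (max_lt ?_ ?_)
    · calc |β s * v s| ≤ L * B s := by
            rw [abs_mul]; exact mul_le_mul (hβ s hs') hvs (abs_nonneg _) hL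
        _ < (L + 1) * B s := by linarith
    · calc |-(α s * G (w s))| ≤ L * B s := by
            rw [abs_neg, abs_mul]; exact mul_le_mul (hα s hs') hGs (abs_nonneg _) hL
        _ < (L + 1) * B s := by linarith

lemma SturmLiouvilleSol.snd_pos_of_abs_sub_le (h : SturmLiouvilleSol α β G a b w v) (hab : a ≤ b)
    (hα : ContinuousOn α (Icc a b)) (hGc : Continuous G) (hva : v a = 0) (hGc0 : 0 < G c)
    (hε : ε * ∫ t in a..b, |α t| < -∫ t in a..b, α t)
    (hw : ∀ t ∈ Icc a b, |G (w t) - G c| ≤ ε * G c) : 0 < v b := by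
  have hαint : IntervalIntegrable α volume a b := hα.intervalIntegrable_of_Icc hab
  have hle : ∫ t in a..b, α t * G (w t) ≤ ∫ t in a..b, (α t * G c + |α t| * (ε * G c)) := by
    refine intervalIntegral.integral_mono_on hab
      ((hα.mul (hGc.comp_continuousOn h.continuousOn_fst)).intervalIntegrable_of_Icc hab)
      ((hαint.mul_const _).add (hαint.abs.mul_const _)) fun t ht => ?_
    have := (le_abs_self _).trans_eq (abs_mul (α t) (G (w t) - G c))
    linear_combination this + mul_le_mul_of_nonneg_left (hw t ht) (abs_nonneg (α t))
  rw [h.integral_eq_sub_snd hα hGc (left_mem_Icc.2 hab) (right_mem_Icc.2 hab), hva,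
    intervalIntegral.integral_add (hαint.mul_const _) (hαint.abs.mul_const _),
    intervalIntegral.integral_mul_const, intervalIntegral.integral_mul_const] at hle
  linear_combination hle + mul_lt_mul_of_pos_right hε hGc0

lemma RegOscAtZero.exists_abs_sub_le (hg : RegOscAtZero g) (hg0 : ∀ s, 0 < s → 0 < g s)
    (hε : 0 < ε) : ∃ θ ∈ Ioo (0 : ℝ) 1, ∀ᶠ c in 𝓝[>] 0, ∀ s, |s - c| ≤ θ * c →
      |g s - g c| ≤ ε * g c := by
  obtain ⟨δ, hδ, η, hη, hosc⟩ := hg ε hε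
  obtain ⟨θ, hθ, hθ'⟩ := exists_between (lt_min hη one_pos)
  refine ⟨θ, ⟨hθ, hθ'.trans_le (min_le_right _ _)⟩, ?_⟩
  filter_upwards [Ioo_mem_nhdsGT hδ] with c hc s hs
  have hω : |s / c - 1| < η := by
    rw [div_sub_one hc.1.ne', abs_div, abs_of_pos hc.1, div_lt_iff₀ hc.1]
    nlinarith [hθ'.trans_le (min_le_left η 1), hc.1]
  have := hosc c (s / c) hc.1 hc.2 hω
  rw [div_mul_cancel₀ s hc.1.ne', div_sub_one (hg0 c hc.1).ne', abs_div,
    abs_of_pos (hg0 c hc.1), div_lt_iff₀ (hg0 c hc.1)] at this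
  exact this.le

lemma eventually_forall_abs_le_of_tendsto_div_zero
    (hG0 : Tendsto (fun s => G s / s) (𝓝[>] 0) (𝓝 0)) {θ ℓ : ℝ} (hθ : θ < 1) (hℓ : 0 < ℓ) :
    ∀ᶠ c in 𝓝[>] 0, ∀ s, |s - c| ≤ θ * c → |G s| ≤ ℓ * c := by
  have hlim : ∀ᶠ s in 𝓝[>] 0, |G s / s| < ℓ / 2 := by
    simpa using hG0.abs.eventually_lt_const (by simpa using half_pos hℓ)
  obtain ⟨δ, hδ, hlim⟩ := mem_nhdsGT_iff_exists_Ioo_subset.1 hlim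
  filter_upwards [Ioo_mem_nhdsGT (half_pos hδ)] with c hc s hs
  have hs' := abs_le.1 hs
  have hs0 : 0 < s := by nlinarith [hc.1]
  have hs2 : s < 2 * c := by nlinarith [hc.1]
  have hGs : |G s / s| < ℓ / 2 := hlim ⟨hs0, by linarith [hc.2]⟩
  rw [abs_div, abs_of_pos hs0, div_lt_iff₀ hs0] at hGs
  nlinarith

lemma eventually_forall_snd_pos (hab : a ≤ b) (hα : ContinuousOn α (Icc a b))
    (hβ : ContinuousOn β (Icc a b)) (hαint : ∫ t in a..b, α t < 0) (hGc : Continuous G)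
    (hGpos : ∀ s, 0 < s → 0 < G s) (hG : RegOscAtZero G)
    (hG0 : Tendsto (fun s => G s / s) (𝓝[>] 0) (𝓝 0)) :
    ∀ᶠ c in 𝓝[>] 0, ∀ w v, SturmLiouvilleSol α β G a b w v → w a = c → v a = 0 → 0 < v b := by
  obtain ⟨A, hA⟩ := isCompact_Icc.exists_bound_of_continuousOn hα
  obtain ⟨B, hB⟩ := isCompact_Icc.exists_bound_of_continuousOn hβ
  obtain ⟨ε, hε, hεα⟩ := exists_pos_mul_lt (neg_pos.2 hαint) (∫ t in a..b, |α t|)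
  obtain ⟨θ, hθ, hosc⟩ := hG.exists_abs_sub_le hGpos hε
  set D := Real.exp ((max A B + 1) * (b - a)) with hD
  have hD0 : 0 < D := Real.exp_pos _
  filter_upwards [self_mem_nhdsWithin, hosc,
    eventually_forall_abs_le_of_tendsto_div_zero hG0 hθ.2 (div_pos hθ.1 hD0)]
    with c hc hosc hsmall w v h hwa hva
  have hc0 : 0 < c := hc
  have hρ : θ / D * c * D = θ * c := by field_simp
  have hclose := h.abs_fst_sub_le (ρ := θ / D * c)
    (fun t ht => (hA t ht).trans (le_max_left A B)) (fun t ht => (hB t ht).trans (le_max_right A B))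
    hwa hva (mul_pos (div_pos hθ.1 hD0) hc) (by rwa [← hD, hρ])
  rw [← hD, hρ] at hclose
  exact h.snd_pos_of_abs_sub_le hab hα hGc hva (hGpos c hc) (mul_comm ε _ ▸ hεα)
    fun t ht => hosc _ (hclose t ht)

end SmallStart

section Truncation

variable {g G : ℝ → ℝ} {s C K L : ℝ}

/-- The nonlinearity `g` cut off at slope `L` and extended by `g 0` to the negative half-line. With
it the associated systems have linear growth, so that their solutions do not blow up. -/
noncomputable def truncation (g : ℝ → ℝ) (L s : ℝ) : ℝ :=
  min (g (max s 0)) (L * max s 0)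

lemma continuous_truncation (hg : ContinuousOn g (Ici 0)) : Continuous (truncation g L) :=
  (hg.comp_continuous (by fun_prop) fun s => le_max_right s 0).min (by fun_prop)

lemma truncation_of_nonpos (hg : g 0 = 0) (hs : s ≤ 0) : truncation g L s = 0 := by
  simp [truncation, hs, hg]

lemma truncation_pos (hg : ∀ s, 0 < s → 0 < g s) (hL : 0 < L) (hs : 0 < s) :
    0 < truncation g L s := by
  rw [truncation, max_eq_left hs.le]
  exact lt_min (hg s hs) (mul_pos hL hs)

lemma truncation_nonneg (hg : ∀ s, 0 ≤ s → 0 ≤ g s) (hL : 0 ≤ L) (s : ℝ) :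
    0 ≤ truncation g L s :=
  le_min (hg _ (le_max_right s 0)) (mul_nonneg hL (le_max_right s 0))

lemma abs_truncation_le (hg : ∀ s, 0 ≤ s → 0 ≤ g s) (hL : 0 ≤ L) (s : ℝ) :
    |truncation g L s| ≤ L * |s| := by
  rw [abs_of_nonneg (truncation_nonneg hg hL s)]
  exact (min_le_right _ _).trans
    (mul_le_mul_of_nonneg_left (max_le (le_abs_self s) (abs_nonneg s)) hL)

lemma truncation_of_le (hs : 0 ≤ s) (h : g s ≤ L * s) : truncation g L s = g s := by
  rw [truncation, max_eq_left hs, min_eq_left h]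

lemma sub_le_truncation (hs : 0 ≤ s) (h : K * s - C ≤ g s) (hC : 0 ≤ C) (hKL : K ≤ L) :
    K * s - C ≤ truncation g L s := by
  rw [truncation, max_eq_left hs]
  exact le_min h ((sub_le_self _ hC).trans (mul_le_mul_of_nonneg_right hKL hs))

lemma exists_forall_mem_Icc_le_mul (hg : ContinuousOn g (Ici 0)) (hg00 : g 0 = 0)
    (hg0 : Tendsto (fun s => g s / s) (𝓝[>] 0) (𝓝 0)) (M : ℝ) :
    ∃ L, ∀ s ∈ Icc 0 M, g s ≤ L * s := by
  have hquot : ContinuousOn (fun s => g s / s) (Ici 0) := by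
    intro s hs
    rcases (mem_Ici.1 hs).eq_or_lt with rfl | hs0
    · rw [← continuousWithinAt_Ioi_iff_Ici]
      simpa [ContinuousWithinAt] using hg0
    · exact (hg s hs).div continuousWithinAt_id hs0.ne'
  obtain ⟨L, hL⟩ := isCompact_Icc.exists_bound_of_continuousOn
    (hquot.mono (Icc_subset_Ici_self : Icc 0 M ⊆ Ici 0))
  refine ⟨L, fun s hs => ?_⟩
  rcases hs.1.eq_or_lt with rfl | hs0
  · simp [hg00]
  · exact (div_le_iff₀ hs0).1 ((le_abs_self _).trans (hL s hs))

lemma RegOscAtZero.congr (hg : RegOscAtZero g) (h : g =ᶠ[𝓝[>] 0] G) : RegOscAtZero G := by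
  obtain ⟨u, hu, hgG⟩ := mem_nhdsGT_iff_exists_Ioo_subset.1 h
  intro ε hε
  obtain ⟨δ, hδ, η, hη, hosc⟩ := hg ε hε
  refine ⟨min δ (u / 2), lt_min hδ (half_pos hu), min η 1, lt_min hη one_pos,
    fun s ω hs hsδ hω => ?_⟩
  obtain ⟨hsδ, hsu⟩ := lt_min_iff.1 hsδ
  obtain ⟨hω, hω1⟩ := lt_min_iff.1 hω
  have hω' := abs_lt.1 hω1
  have hωs : ω * s ∈ Ioo 0 u := ⟨mul_pos (by linarith) hs, by nlinarith⟩
  have hs' : s ∈ Ioo 0 u := ⟨hs, by linarith⟩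
  rw [← show g (ω * s) = G (ω * s) from hgG hωs, ← show g s = G s from hgG hs']
  exact hosc s ω hs hsδ hω

lemma exists_forall_sub_le_of_eventually_le_div (hg : ∀ s, 0 ≤ s → 0 ≤ g s) (hK : 0 ≤ K)
    (h : ∀ᶠ s in atTop, K ≤ g s / s) : ∃ C ≥ 0, ∀ s, 0 ≤ s → K * s - C ≤ g s := by
  obtain ⟨x, hx⟩ := eventually_atTop.1 (h.and (eventually_gt_atTop 0))
  have hx0 : 0 < x := (hx x le_rfl).2
  refine ⟨K * x, mul_nonneg hK hx0.le, fun s hs => ?_⟩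
  rcases le_total x s with hxs | hsx
  · have := (le_div_iff₀ (hx s hxs).2).1 (hx s hxs).1
    linarith [mul_nonneg hK hx0.le]
  · linarith [mul_le_mul_of_nonneg_left hsx hK, hg s hs]

end Truncation

section Existence

variable {α β G w v : ℝ → ℝ} {a b c d L M : ℝ}

lemma exists_sturmLiouvilleSol_snd_eq_zero (hab : a ≤ b) (hα : ContinuousOn α (Icc a b))
    (hβ : ContinuousOn β (Icc a b)) (hG : Continuous G) (hGL : ∀ s, |G s| ≤ L * |s|) (hcd : c ≤ d)
    (hc : ∀ w v, SturmLiouvilleSol α β G a b w v → w a = c → v a = 0 → 0 < v b)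
    (hd : ∀ w v, SturmLiouvilleSol α β G a b w v → w a = d → v a = 0 → v b < 0) :
    ∃ w v, SturmLiouvilleSol α β G a b w v ∧ w a ∈ Icc c d ∧ v a = 0 ∧ v b = 0 := by
  obtain ⟨K, hK0, hK⟩ := exists_norm_sturmLiouvilleField_le hα hβ hGL
  have hf : ContinuousOn ↿(sturmLiouvilleField α β G) (Icc a b ×ˢ univ) := by
    have hfst : MapsTo Prod.fst (Icc a b ×ˢ (univ : Set (ℝ × ℝ))) (Icc a b) := fun q hq => hq.1
    exact ((hβ.comp continuousOn_fst hfst).mul (by fun_prop)).prodMk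
      ((hα.comp continuousOn_fst hfst).mul (by fun_prop)).neg
  have hfL (t : ℝ) (ht : t ∈ Icc a b) (z : ℝ × ℝ) :
      ‖sturmLiouvilleField α β G t z‖ ≤ K * (1 + ‖z‖) :=
    (hK t ht z).trans (mul_le_mul_of_nonneg_left (by linarith) hK0)
  obtain ⟨x, hx, hxa, hxb⟩ := exists_isIntegralCurveOn_eq_zero hab hf hfL
    (isCompact_Icc.prod isCompact_singleton) (isPreconnected_Icc.prod isPreconnected_singleton)
    continuous_snd (p := (c, 0)) (q := (d, 0)) ⟨left_mem_Icc.2 hcd, rfl⟩ ⟨right_mem_Icc.2 hcd, rfl⟩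
    (fun x hx hxa => hc _ _ (isIntegralCurveOn_sturmLiouvilleField_iff.1 hx)
      (congrArg Prod.fst hxa) (congrArg Prod.snd hxa))
    (fun x hx hxa => hd _ _ (isIntegralCurveOn_sturmLiouvilleField_iff.1 hx)
      (congrArg Prod.fst hxa) (congrArg Prod.snd hxa))
  exact ⟨_, _, isIntegralCurveOn_sturmLiouvilleField_iff.1 hx, hxa.1, hxa.2, hxb⟩

lemma SturmLiouvilleSol.snd_neg_of_lt (h : SturmLiouvilleSol α β G a b w v) (hab : a ≤ b)
    (hβ : ContinuousOn β (Icc a b)) (hβ0 : ∀ t ∈ Icc a b, 0 < β t) {S : Set ℝ} (hS : IsClosed S)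
    (hSne : S.Nonempty) (hSab : S ⊆ Icc a b) (hα : ∀ t ∈ Icc a b \ S, α t ≤ 0)
    (hG : ∀ s, 0 ≤ s → 0 ≤ G s) (hGneg : ∀ s ≤ 0, G s = 0) (hva : v a = 0) (hwa0 : 0 ≤ w a)
    (hM : (∀ t ∈ Icc a b, 0 ≤ w t) → ∀ s ∈ S, w s ≤ M) (hwa : M < w a) : v b < 0 := by
  by_contra! hvb
  have hw := h.fst_nonneg hβ hβ0 hGneg hwa0 hvb
  obtain ⟨s, hs, has⟩ := h.exists_mem_fst_le hβ (fun t ht => (hβ0 t ht).le) hS hSne hSab hα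
    (fun t ht => hG _ (hw t ht)) (left_mem_Icc.2 hab) hva
  exact (hwa.trans_le has).not_ge (hM hw s hs)

lemma exists_pos_sturmLiouvilleSol_le (hab : a ≤ b) (hα : ContinuousOn α (Icc a b))
    (hβ : ContinuousOn β (Icc a b)) (hβ0 : ∀ t ∈ Icc a b, 0 < β t) {S : Set ℝ} (hS : IsClosed S)
    (hSne : S.Nonempty) (hSab : S ⊆ Icc a b) (hα0 : ∀ t ∈ Icc a b \ S, α t ≤ 0)
    (hαint : ∫ t in a..b, α t < 0) (hGc : Continuous G) (hGneg : ∀ s ≤ 0, G s = 0)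
    (hGpos : ∀ s, 0 < s → 0 < G s) (hGL : ∀ s, |G s| ≤ L * |s|) (hG : RegOscAtZero G)
    (hG0 : Tendsto (fun s => G s / s) (𝓝[>] 0) (𝓝 0))
    (hM : ∀ w v, SturmLiouvilleSol α β G a b w v → (∀ t ∈ Icc a b, 0 ≤ w t) → ∀ s ∈ S, w s ≤ M) :
    ∃ w v, SturmLiouvilleSol α β G a b w v ∧ v a = 0 ∧ v b = 0 ∧
      ∀ t ∈ Icc a b, w t ∈ Ioc 0 M := by
  have hGnn (s : ℝ) (hs : 0 ≤ s) : 0 ≤ G s :=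
    hs.eq_or_lt.elim (fun hs => (hGneg s hs.ge).ge) fun hs => (hGpos s hs).le
  obtain ⟨c, hc, hc0⟩ := ((eventually_forall_snd_pos hab hα hβ hαint hGc hGpos hG hG0).and
    eventually_mem_nhdsWithin).exists
  have hc0 : 0 < c := hc0
  have hcd : c ≤ max c (M + 1) := le_max_left _ _
  have hMd : M < max c (M + 1) := lt_max_of_lt_right (lt_add_one M)
  obtain ⟨w, v, h, hwa, hva, hvb⟩ := exists_sturmLiouvilleSol_snd_eq_zero hab hα hβ hGc hGL hcd hc
    fun w v h hwa hva => h.snd_neg_of_lt hab hβ hβ0 hS hSne hSab hα0 hGnn hGneg hva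
      (hwa ▸ hc0.le.trans hcd) (hM w v h) (hwa ▸ hMd)
  have hwa0 : 0 < w a := hc0.trans_le hwa.1
  have hw := h.fst_nonneg hβ hβ0 hGneg hwa0.le hvb.ge
  have hwpos := h.fst_pos hα hβ hβ0 hGL hw hwa0 hvb
  have hwM := h.fst_le_of_forall_mem_le hβ hβ0 hS hSne hSab hα0 (fun t ht => hGnn _ (hw t ht))
    hva hvb (hM w v h hw)
  exact ⟨w, v, h, hva, hvb, fun t ht => ⟨hwpos t ht, hwM t ht⟩⟩

lemma SturmLiouvilleSol.congr (h : SturmLiouvilleSol α β G a b w v) {g : ℝ → ℝ}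
    (hg : ∀ t ∈ Icc a b, G (w t) = g (w t)) : SturmLiouvilleSol α β g a b w v where
  hasDerivWithinAt_fst := h.hasDerivWithinAt_fst
  hasDerivWithinAt_snd t ht := hg t ht ▸ h.hasDerivWithinAt_snd t ht

variable {ι : Type*} [Finite ι] {σ τ : ι → ℝ}

lemma eventually_forall_fst_le_iUnion (hστ : ∀ i, σ i < τ i)
    (hsub : ∀ i, Icc (σ i) (τ i) ⊆ Icc a b) (hα : ContinuousOn α (Icc a b))
    (hα0 : ∀ i, ∀ t ∈ Icc (σ i) (τ i), 0 ≤ α t) (hpos : ∀ i, ∃ t ∈ Icc (σ i) (τ i), 0 < α t)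
    (hβ : ContinuousOn β (Icc a b)) (hβ0 : ∀ t ∈ Icc a b, 0 < β t) :
    ∀ᶠ K in atTop, ∀ C, ∀ᶠ M in atTop, ∀ G w v : ℝ → ℝ, Continuous G →
      (∀ s, 0 ≤ s → 0 ≤ G s) → (∀ s, 0 ≤ s → K * s - C ≤ G s) → SturmLiouvilleSol α β G a b w v →
      (∀ t ∈ Icc a b, 0 ≤ w t) → ∀ s ∈ ⋃ i, Icc (σ i) (τ i), w s ≤ M := by
  have hbound (i : ι) := eventually_forall_fst_le (hστ i) (hα.mono (hsub i)) (hα0 i) (hpos i)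
    (hβ.mono (hsub i)) fun t ht => hβ0 t (hsub i ht)
  filter_upwards [eventually_all.2 hbound] with K hK C
  filter_upwards [eventually_all.2 fun i => hK i C] with M hM G w v hGc hG0 hG h hw s hs
  obtain ⟨i, hi⟩ := mem_iUnion.1 hs
  exact hM i G w v hGc hG0 hG (h.mono (hsub i)) (fun t ht => hw t (hsub i ht)) s hi

theorem exists_forall_exists_pos_sturmLiouvilleSol [Nonempty ι] (hστ : ∀ i, σ i < τ i)
    (hsub : ∀ i, Icc (σ i) (τ i) ⊆ Icc a b) (hα : ContinuousOn α (Icc a b))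
    (hα0 : ∀ i, ∀ t ∈ Icc (σ i) (τ i), 0 ≤ α t) (hpos : ∀ i, ∃ t ∈ Icc (σ i) (τ i), 0 < α t)
    (hαneg : ∀ t ∈ Icc a b \ ⋃ i, Icc (σ i) (τ i), α t ≤ 0) (hαint : ∫ t in a..b, α t < 0)
    (hβ : ContinuousOn β (Icc a b)) (hβ0 : ∀ t ∈ Icc a b, 0 < β t) :
    ∃ K : ℝ, ∀ g, CondG1 g → RegOscAtZero g → Tendsto (fun s => g s / s) (𝓝[>] 0) (𝓝 0) →
      (∀ᶠ s in atTop, K ≤ g s / s) →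
      ∃ w v, SturmLiouvilleSol α β g a b w v ∧ v a = 0 ∧ v b = 0 ∧ ∀ t ∈ Icc a b, 0 < w t := by
  obtain ⟨K, hK, hK0⟩ := ((eventually_forall_fst_le_iUnion hστ hsub hα hα0 hpos hβ hβ0).and
    (eventually_gt_atTop 0)).exists
  refine ⟨K, fun g ⟨hgc, hgnn, hg00, hgpos⟩ hosc hg0 hgK => ?_⟩
  obtain ⟨C, hC, hgC⟩ := exists_forall_sub_le_of_eventually_le_div hgnn hK0.le hgK
  obtain ⟨M, hM, hM0⟩ := ((hK C).and (eventually_gt_atTop 0)).exists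
  obtain ⟨L, hL⟩ := exists_forall_mem_Icc_le_mul hgc hg00 hg0 M
  set G := truncation g (max K L)
  have hKL : 0 < max K L := lt_max_of_lt_left hK0
  have hGg (s : ℝ) (hs : s ∈ Icc 0 M) : G s = g s := truncation_of_le hs.1 <|
    (hL s hs).trans (mul_le_mul_of_nonneg_right (le_max_right K L) hs.1)
  have hgG : g =ᶠ[𝓝[>] 0] G := by
    filter_upwards [Ioo_mem_nhdsGT hM0] with s hs using (hGg s (Ioo_subset_Icc_self hs)).symm
  have i₀ : ι := Classical.arbitrary ι
  have hσ₀ : σ i₀ ∈ Icc (σ i₀) (τ i₀) := left_mem_Icc.2 (hστ i₀).le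
  have hab : a ≤ b := (hsub i₀ hσ₀).1.trans (hsub i₀ hσ₀).2
  obtain ⟨w, v, h, hva, hvb, hw⟩ := exists_pos_sturmLiouvilleSol_le (M := M) hab hα hβ hβ0
    (isClosed_iUnion_of_finite fun i => isClosed_Icc) ⟨σ i₀, mem_iUnion_of_mem i₀ hσ₀⟩
    (iUnion_subset hsub) hαneg hαint (continuous_truncation hgc)
    (fun s => truncation_of_nonpos hg00) (fun s => truncation_pos hgpos hKL)
    (abs_truncation_le hgnn hKL.le) (hosc.congr hgG)
    (hg0.congr' (hgG.mono fun s hs => by rw [hs])) fun w v =>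
      hM G w v (continuous_truncation hgc) (fun s _ => truncation_nonneg hgnn hKL.le s)
        fun s hs => sub_le_truncation hs (hgC s hs) hC (le_max_left K L)
  exact ⟨w, v, h.congr fun t ht => hGg _ (Ioc_subset_Icc_self (hw t ht)), hva, hvb,
    fun t ht => (hw t ht).1⟩

end Existence

section Radial

variable {Q g w v : ℝ → ℝ} {R₁ R₂ : ℝ} {N : ℕ}

lemma left_lt_right_of_pairwise_disjoint_Icc {ι : Type*} [Finite ι] {σ τ : ι → ℝ} {a b : ℝ}
    (hab : a < b) (hQ : ContinuousOn Q (Icc a b)) (hsub : ∀ i, Icc (σ i) (τ i) ⊆ Icc a b)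
    (hdisj : Pairwise fun i j => Disjoint (Icc (σ i) (τ i)) (Icc (σ j) (τ j)))
    (hpos : ∀ i, ∃ r ∈ Icc (σ i) (τ i), 0 < Q r)
    (hneg : ∀ r ∈ Icc a b \ ⋃ i, Icc (σ i) (τ i), Q r ≤ 0) (i : ι) : σ i < τ i := by
  obtain ⟨r, hr, hQr⟩ := hpos i
  by_contra! hτσ
  have hfreq : ∃ᶠ t in 𝓝 r, t ≠ r ∧ t ∈ Icc a b := accPt_iff_frequently.1 <|
    isPreconnected_Icc.preperfect_of_nontrivial
      ⟨a, left_mem_Icc.2 hab.le, b, right_mem_Icc.2 hab.le, hab.ne⟩ r (hsub i hr)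
  have hQpos : ∀ᶠ t in 𝓝 r, t ∈ Icc a b → 0 < Q t :=
    eventually_nhdsWithin_iff.1 ((hQ r (hsub i hr)).eventually (lt_mem_nhds hQr))
  have hothers : ∀ᶠ t in 𝓝 r, ∀ j, j ≠ i → t ∉ Icc (σ j) (τ j) :=
    eventually_all.2 fun j => eventually_imp_distrib_left.2 fun hji =>
      isClosed_Icc.isOpen_compl.mem_nhds fun hj => (hdisj hji).le_bot ⟨hj, hr⟩
  obtain ⟨t, ⟨htr, ht⟩, hQt, hother⟩ := (hfreq.and_eventually (hQpos.and hothers)).exists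
  refine (hneg t ⟨ht, fun hmem => ?_⟩).not_gt (hQt ht)
  obtain ⟨j, hj⟩ := mem_iUnion.1 hmem
  obtain rfl : j = i := of_not_not fun hji => hother j hji hj
  exact htr (by linarith [hr.1, hr.2, hj.1, hj.2])

lemma hasDerivWithinAt_inv_pow_pred {r : ℝ} (hN : 1 ≤ N) (hr : r ≠ 0) {s : Set ℝ} :
    HasDerivWithinAt (fun r : ℝ => (r ^ (N - 1))⁻¹) (-((N - 1) / r * (r ^ (N - 1))⁻¹)) s r := by
  obtain ⟨n, rfl⟩ := Nat.exists_eq_add_of_le' hN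
  rcases n with _ | n
  · simpa using hasDerivWithinAt_const r s (1 : ℝ)
  · refine (((hasDerivAt_pow (n + 1) r).fun_inv (pow_ne_zero _ hr)).congr_deriv ?_).hasDerivWithinAt
    push_cast [Nat.add_sub_cancel]
    field_simp
    ring

lemma SturmLiouvilleSol.radialNeumannPosSol (hN : 1 ≤ N) (hR1 : 0 < R₁)
    (hQ : ContinuousOn Q (Icc R₁ R₂)) (hg : ContinuousOn g (Ici 0))
    (h : SturmLiouvilleSol (fun r => r ^ (N - 1) * Q r) (fun r => (r ^ (N - 1))⁻¹) g R₁ R₂ w v)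
    (hw : ∀ r ∈ Icc R₁ R₂, 0 < w r) (hv₁ : v R₁ = 0) (hv₂ : v R₂ = 0) :
    RadialNeumannPosSol N R₁ R₂ Q g := by
  have hr0 (r : ℝ) (hr : r ∈ Icc R₁ R₂) : r ≠ 0 := (hR1.trans_le hr.1).ne'
  have hw'' (r : ℝ) (hr : r ∈ Icc R₁ R₂) : HasDerivWithinAt (fun r => (r ^ (N - 1))⁻¹ * v r)
      (-((N - 1) / r * ((r ^ (N - 1))⁻¹ * v r) + Q r * g (w r))) (Icc R₁ R₂) r := by
    refine ((hasDerivWithinAt_inv_pow_pred hN (hr0 r hr)).mul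
      (h.hasDerivWithinAt_snd r hr)).congr_deriv ?_
    have := hr0 r hr
    field_simp
    ring
  refine ⟨w, fun r => (r ^ (N - 1))⁻¹ * v r, _, h.hasDerivWithinAt_fst, hw'', ?_, hw,
    fun r _ => by ring, by simp [hv₁], by simp [hv₂]⟩
  exact (((continuousOn_const.div continuousOn_id hr0).mul (HasDerivWithinAt.continuousOn hw'')).add
    (hQ.mul (hg.comp h.continuousOn_fst fun r hr => (hw r hr).le))).neg

end Radial

theorem statement_11_general (N : ℕ) (hN : 1 ≤ N) (R₁ R₂ : ℝ) (hR1 : 0 < R₁) (hR12 : R₁ < R₂)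
    (Q : ℝ → ℝ) (hQc : ContinuousOn Q (Icc R₁ R₂)) (hq1 : CondQ1 R₁ R₂ Q)
    (hq2 : (∫ r in R₁..R₂, r ^ (N - 1) * Q r) < 0) :
    ∃ K : ℝ, ∀ g, CondG1 g → RegOscAtZero g →
      Tendsto (fun s => g s / s) (nhdsWithin 0 (Ioi 0)) (nhds 0) →
      (∀ᶠ s in atTop, K ≤ g s / s) → RadialNeumannPosSol N R₁ R₂ Q g := by
  obtain ⟨m, σ, τ, hm, hστ, hdisj, hnonneg, hpos, hneg⟩ := hq1
  have : Nonempty (Fin m) := ⟨⟨0, hm⟩⟩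
  have hsub (i : Fin m) : Icc (σ i) (τ i) ⊆ Icc R₁ R₂ := Icc_subset_Icc (hστ i).1 (hστ i).2.2
  have hpow (r : ℝ) (hr : r ∈ Icc R₁ R₂) : 0 < r ^ (N - 1) := pow_pos (hR1.trans_le hr.1) _
  obtain ⟨K, hK⟩ := exists_forall_exists_pos_sturmLiouvilleSol
    (α := fun r => r ^ (N - 1) * Q r) (β := fun r => (r ^ (N - 1))⁻¹)
    (left_lt_right_of_pairwise_disjoint_Icc hR12 hQc hsub hdisj hpos hneg) hsub
    ((continuousOn_pow _).mul hQc)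
    (fun i r hr => mul_nonneg (hpow r (hsub i hr)).le (hnonneg i r hr))
    (fun i => (hpos i).imp fun r hr => ⟨hr.1, mul_pos (hpow r (hsub i hr.1)) hr.2⟩)
    (fun r hr => mul_nonpos_of_nonneg_of_nonpos (hpow r hr.1).le (hneg r hr)) hq2
    ((continuousOn_pow _).inv₀ fun r hr => (hpow r hr).ne') fun r hr => inv_pos.2 (hpow r hr)
  refine ⟨K, fun g hg hreg hg0 hgK => ?_⟩
  obtain ⟨w, v, h, hv₁, hv₂, hw⟩ := hK g hg hreg hg0 hgK
  exact h.radialNeumannPosSol hN hR1 hQc hg.1 hw hv₁ hv₂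

/-- Theorem: for `N ≥ 2`, `0 < R₁ < R₂`, a continuous radial weight `Q`
satisfying (q1) and (q2), and `g` satisfying (g1), regularly oscillating at
zero, with `g(s)/s → 0` as `s → 0⁺` and `g(s)/s → +∞` as `s → +∞`, the Neumann
problem `−Δu = Q(‖x‖) g(u)` on the annulus has a positive radially symmetric
solution. -/
theorem statement_11
    (N : ℕ) (hN : 2 ≤ N) (R₁ R₂ : ℝ) (hR1 : 0 < R₁) (hR12 : R₁ < R₂)
    (Q : ℝ → ℝ) (hQc : ContinuousOn Q (Icc R₁ R₂))
    (hq1 : CondQ1 R₁ R₂ Q)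
    (hq2 : (∫ r in R₁..R₂, r ^ (N - 1) * Q r) < 0)
    (g : ℝ → ℝ) (hg1 : CondG1 g) (hreg : RegOscAtZero g)
    (hg0 : Tendsto (fun s => g s / s) (nhdsWithin 0 (Ioi 0)) (nhds 0))
    (hginf : Tendsto (fun s => g s / s) atTop atTop) :
    RadialNeumannPosSol N R₁ R₂ Q g := by
  obtain ⟨K, hK⟩ := statement_11_general N (one_le_two.trans hN) R₁ R₂ hR1 hR12 Q hQc hq1 hq2
  exact hK g hg1 hreg hg0 (hginf.eventually_ge_atTop K)
end
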